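/- arXiv:2509.09662 — 4 statements merged into one kernel-verified Lean document; each statement's English description precedes it below -/
import Mathlib

section
/- The Galois group over Q of the splitting field of the polynomial X^24 - X - 1 ∈ Q[X] is isomorphic to the symmetric group S24. -/
open Polynomial
open scoped NumberField

theorem iSup_inertia (K : Type*) [Field K] [NumberField K] [IsGalois ℚ K] :
    ⨆ m : MaximalSpectrum (𝓞 K), m.asIdeal.inertia Gal(K/ℚ) = ⊤ := by
  set N := ⨆ m : MaximalSpectrum (𝓞 K), m.asIdeal.inertia Gal(K/ℚ) with hN
  let L : IntermediateField ℚ K := IntermediateField.fixedField N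
  suffices h : Module.finrank ℚ L = 1 by
    have h1 : L = ⊥ := IntermediateField.finrank_eq_one_iff.mp h
    have h2 := IntermediateField.fixingSubgroup_fixedField N
    rw [← h2]
    change L.fixingSubgroup = ⊤
    rw [h1, IntermediateField.fixingSubgroup_bot]
  by_contra H
  obtain ⟨P, _, hP⟩ := NumberField.exists_not_isUnramifiedAt_int (𝒪 := 𝓞 L) H
  apply hP
  have i1 : IsGaloisGroup Gal(K/ℚ) ℤ (𝓞 K) := IsGaloisGroup.of_isFractionRing _ _ _ ℚ K
  have i2 : IsGaloisGroup N L K := IsGaloisGroup.subgroup Gal(K/ℚ) ℚ K N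
  have i3 : IsGaloisGroup N (𝓞 L) (𝓞 K) := IsGaloisGroup.of_isFractionRing _ _ _ L K
  obtain ⟨⟨Q, _, _⟩⟩ := (inferInstance : Nonempty (P.primesOver (𝓞 K)))
  have hPb : P ≠ ⊥ := Ideal.IsMaximal.ne_bot_of_isIntegral_int _
  have hQm : Q.IsMaximal := Ideal.IsMaximal.of_liesOver_isMaximal Q P
  have hle : Q.inertia Gal(K/ℚ) ≤ N := le_iSup (fun m : MaximalSpectrum (𝓞 K) => m.asIdeal.inertia Gal(K/ℚ)) ⟨Q, hQm⟩
  have hcard : Nat.card (Q.inertia N) = Nat.card (Q.inertia Gal(K/ℚ)) := by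
    have := AddSubgroup.subgroupOf_inertia (G := Gal(K/ℚ)) Q.toAddSubgroup N
    rw [← Nat.card_congr (Subgroup.subgroupOfEquivOfLe hle).toEquiv]
    rfl
  let p : Ideal ℤ := P.under ℤ
  have : Q.LiesOver p := Ideal.LiesOver.trans Q P p
  have hpm : p.IsMaximal := Ideal.IsMaximal.under ℤ P
  have hpb : p ≠ ⊥ := fun h => hPb (Ideal.eq_bot_of_comap_eq_bot h)
  have : Finite (ℤ ⧸ p) := Ring.HasFiniteQuotients.finiteQuotient hpb
  have : Finite (𝓞 L ⧸ P) := Ring.HasFiniteQuotients.finiteQuotient hPb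
  rw [Ideal.card_inertia_eq_ramificationIdxIn P, Ideal.card_inertia_eq_ramificationIdxIn p,
    Ideal.ramificationIdxIn_eq_ramificationIdx P Q N, 
    Ideal.ramificationIdxIn_eq_ramificationIdx p Q Gal(K/ℚ)] at hcard
  rw [← Ideal.ramificationIdx_eq_one_iff]
  have := Ideal.ramificationIdx_tower (R := ℤ) P Q
  rw [hcard] at this
  exact (right_eq_mul₀ (Ideal.ramificationIdx_pos Q ℤ).ne').mp this

theorem roots_count {F : Type*} [Field F] (h : (X ^ 24 - X - 1 : F[X]).Splits) :
    24 ≤ ((X ^ 24 - X - 1 : F[X]).rootSet F).ncard + 1 := by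
  classical
  set f : F[X] := X ^ 24 - X - 1 with hf
  have hdeg : f.natDegree = 24 := by rw [hf]; compute_degree!
  have hf0 : f ≠ 0 := by rintro h; rw [h] at hdeg; simp at hdeg
  have hd : derivative f = 24 * X ^ 23 - 1 := by
    have h23 : (C 23 : F[X]) = 23 := map_ofNat C 23
    simp [hf, h23]; norm_num
  have hdd : derivative (derivative f) = 24 * 23 * X ^ 22 := by
    rw [hd]
    have h22 : (C 22 : F[X]) = 22 := map_ofNat C 22
    simp [h22]; ring
  have hcard : f.roots.card = 24 := by rw [← hdeg]; exact h.natDegree_eq_card_roots.symm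
  have hk (a : F) (ha : 1 < f.roots.count a) : 23 * a = -24 ∧ (23:F) ≠ 0 ∧ f.roots.count a ≤ 2 := by
    rw [count_roots] at *
    obtain ⟨h1, h2⟩ := (one_lt_rootMultiplicity_iff_isRoot hf0).mp ha
    have h1' : a ^ 24 - a - 1 = 0 := by simpa [hf, IsRoot] using h1
    have h2' : 24 * a ^ 23 - 1 = 0 := by simpa [hd, IsRoot] using h2
    have e : 23 * a = -24 := by linear_combination a * h2' - 24 * h1'
    have h23 : (23:F) ≠ 0 := by
      intro h
      have : (1:F) = 0 := by linear_combination (-a - 1) * h + e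
      exact one_ne_zero this
    refine ⟨e, h23, ?_⟩
    by_contra! hlt
    have h3 := isRoot_iterate_derivative_of_lt_rootMultiplicity hlt
    have h3' : (24 * 23 * a ^ 22 : F) = 0 := by
      simpa [hdd, IsRoot] using h3
    have h5 : (24 * a ^ 22 : F) = 0 := by
      apply mul_left_cancel₀ h23; linear_combination h3'
    have : (1:F) = 0 := by linear_combination a * h5 - h2'
    exact one_ne_zero this
  rw [rootSet_def, Set.ncard_coe_finset, aroots_def]
  simp only [Algebra.algebraMap_self, map_id]
  have key (a : F) (hnd : (f.roots.erase a).Nodup) : 24 ≤ f.roots.toFinset.card + 1 := by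
    have h1 : (f.roots.erase a).toFinset.card ≤ f.roots.toFinset.card :=
      Finset.card_le_card (Multiset.toFinset_subset.mpr (Multiset.erase_subset a _))
    rw [Multiset.toFinset_card_of_nodup hnd] at h1
    have : f.roots.card - 1 ≤ (f.roots.erase a).card := by
      by_cases hm : a ∈ f.roots
      · rw [Multiset.card_erase_of_mem hm]; rfl
      · rw [Multiset.erase_of_notMem hm]; omega
    omega
  by_cases hn : ∃ a, 1 < f.roots.count a
  · obtain ⟨a, ha⟩ := hn
    apply key a
    rw [Multiset.nodup_iff_count_le_one]
    intro b
    by_cases hb : b = a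
    · subst hb
      rw [Multiset.count_erase_self]
      have := (hk b ha).2.2
      omega
    · rw [Multiset.count_erase_of_ne hb]
      by_contra! hlt
      apply hb
      apply mul_left_cancel₀ (hk a ha).2.1
      rw [(hk a ha).1, (hk b hlt).1]
  · push Not at hn
    apply key 0
    rw [Multiset.nodup_iff_count_le_one]
    intro b
    exact (Multiset.count_le_of_le b (Multiset.erase_le _ _)).trans (hn b)

theorem galois_aux (K : Type*) [Field K] [NumberField K]
    [hK : IsSplittingField ℚ K (X ^ 24 - X - 1 : ℚ[X])] :
    Nonempty (Gal(K/ℚ) ≃* Equiv.Perm (Fin 24)) := by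
  set q : ℚ[X] := X ^ 24 - X - 1 with hq
  have hirr : Irreducible q := X_pow_sub_X_sub_one_irreducible_rat (by norm_num)
  have hsep : q.Separable := hirr.separable
  have : IsGalois ℚ K := IsGalois.of_separable_splitting_field hsep
  let f : ℤ[X] := X ^ 24 - X - 1
  have hfq : f.map (algebraMap ℤ ℚ) = q := by simp [f, hq]
  have hqdeg : q.natDegree = 24 := by rw [hq]; compute_degree!
  have hmem (x : 𝓞 K) : x ∈ f.rootSet (𝓞 K) ↔ (x : K) ∈ q.rootSet K := by
    have h1 : f.map (algebraMap ℤ (𝓞 K)) ≠ 0 := by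
      have : (f.map (algebraMap ℤ (𝓞 K))).natDegree = 24 := by simp [f]; compute_degree!
      intro h; rw [h] at this; simp at this
    rw [mem_rootSet', mem_rootSet]
    simp only [h1, hirr.ne_zero, ne_eq, not_false_eq_true, true_and]
    rw [← (NumberField.RingOfIntegers.coe_injective (K := K)).eq_iff]
    simp [f, hq]
  have hlift (x : K) (hx : x ∈ q.rootSet K) : ∃ y ∈ f.rootSet (𝓞 K), (y : K) = x := by
    have hx' : IsIntegral ℤ x := by
      refine ⟨f, ?_, ?_⟩
      · simp only [f]; monicity!
      · have := (mem_rootSet.mp hx).2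
        simpa [f, hq] using this
    exact ⟨⟨x, hx'⟩, (hmem ⟨x, hx'⟩).mpr hx, rfl⟩
  have hsplit : (f.map (algebraMap ℤ (𝓞 K))).Splits := by
    have e : (f.map (algebraMap ℤ (𝓞 K))).map (algebraMap (𝓞 K) K) = q.map (algebraMap ℚ K) := by
      simp [f, hq]
    refine Splits.of_splits_map_of_injective (i := algebraMap (𝓞 K) K)
      NumberField.RingOfIntegers.coe_injective ?_ ?_
    · rw [e]; exact hK.splits
    · intro a ha
      rw [e] at ha
      obtain ⟨y, _, hy⟩ := hlift a (by classical rw [rootSet_def]; simpa [aroots_def] using ha)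
      exact ⟨y, hy⟩
  have hcard : (f.rootSet (𝓞 K)).ncard = 24 := by
    have h1 : (fun x : 𝓞 K => (x : K)) '' (f.rootSet (𝓞 K)) = q.rootSet K := by
      ext x
      constructor
      · rintro ⟨y, hy, rfl⟩; exact (hmem y).mp hy
      · intro hx; obtain ⟨y, hy, e⟩ := hlift x hx; exact ⟨y, hy, e⟩
    rw [← Set.ncard_image_of_injective _ (NumberField.RingOfIntegers.coe_injective (K := K)), h1,
      ← hqdeg, ← card_rootSet_eq_natDegree hsep hK.splits, Set.ncard_eq_toFinset_card',
      Set.toFinset_card]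
  have htrans : MulAction.IsPretransitive Gal(K/ℚ) (f.rootSet (𝓞 K)) := by
    refine ⟨fun x y => ?_⟩
    have hx := minpoly.eq_of_irreducible hirr (mem_rootSet.mp ((hmem _).mp x.2)).2
    have hy := minpoly.eq_of_irreducible hirr (mem_rootSet.mp ((hmem _).mp y.2)).2
    obtain ⟨g, hg⟩ := (Normal.minpoly_eq_iff_mem_orbit K).mp (hy.symm.trans hx)
    exact ⟨g, Subtype.ext (NumberField.RingOfIntegers.coe_injective hg)⟩
  have hsurj := hsplit.surjective_toPermHom_of_iSup_inertia_eq_top (G := Gal(K/ℚ)) (f := f)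
    (S := 𝓞 K) (by
      intro m
      have := m.isMaximal
      let := Ideal.Quotient.field m.asIdeal
      have h1 : f.map (algebraMap ℤ (𝓞 K ⧸ m.asIdeal)) = X ^ 24 - X - 1 := by simp [f]
      have h2 := roots_count (F := 𝓞 K ⧸ m.asIdeal) (by
        have := hsplit.map (Ideal.Quotient.mk m.asIdeal)
        simpa [f] using this)
      rw [hcard]
      convert h2 using 3
      simp [rootSet, aroots_def, f]) (iSup_inertia K)
  have hinj : Function.Injective (MulAction.toPermHom Gal(K/ℚ) (f.rootSet (𝓞 K))) := by
    rw [injective_iff_map_eq_one]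
    intro σ hσ
    have h1 : ∀ x ∈ q.rootSet K, σ x = x := by
      intro x hx
      obtain ⟨y, hy, rfl⟩ := hlift x hx
      have := congrArg (fun t => ((t ⟨y, hy⟩ : f.rootSet (𝓞 K)) : 𝓞 K)) hσ
      exact congrArg (fun t : 𝓞 K => (t : K)) this
    have h2 : (σ : K →ₐ[ℚ] K) = AlgHom.id ℚ K :=
      AlgHom.ext_of_adjoin_eq_top hK.adjoin_rootSet (fun x hx => h1 x hx)
    ext x
    exact DFunLike.congr_fun h2 x
  have e1 := MulEquiv.ofBijective _ ⟨hinj, hsurj⟩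
  have hc : Nat.card (f.rootSet (𝓞 K)) = 24 := hcard
  have : Finite (f.rootSet (𝓞 K)) := Nat.finite_of_card_ne_zero (by omega)
  exact ⟨e1.trans (Equiv.permCongrHom (Finite.equivFinOfCardEq hc))⟩

theorem galois_aux' (K : Type*) [Field K] [NumberField K] [inst : Algebra ℚ K]
    [hK : IsSplittingField ℚ K (X ^ 24 - X - 1 : ℚ[X])] :
    Nonempty (Gal(K/ℚ) ≃* Equiv.Perm (Fin 24)) := by
  obtain rfl : inst = DivisionRing.toRatAlgebra := Subsingleton.elim _ _
  exact galois_aux K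

/-- The Galois group over `ℚ` of (the splitting field of) `X^24 - X - 1` is isomorphic to
the symmetric group `S24`. -/
theorem trinomial_galois :
    Nonempty ((X ^ 24 - X - 1 : ℚ[X]).Gal ≃* Equiv.Perm (Fin 24)) := by
  have : NumberField (X ^ 24 - X - 1 : ℚ[X]).SplittingField := {
    to_charZero := inferInstance
    to_finiteDimensional := inferInstance }
  exact @galois_aux' (X ^ 24 - X - 1 : ℚ[X]).SplittingField _ this _
    (IsSplittingField.splittingField (X ^ 24 - X - 1 : ℚ[X]))
end

section
/- Let g = X^24 + (2^67·3^24/(23^23·31·281·1201·70529·9801219477271))(X + 1) ∈ Q[X]. Then the Galois group over Q of the splitting field of g is isomorphic to the symmetric group S24. -/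
open Polynomial

/-- The polynomial `g = X^24 + (2^67 3^24 / (23^23 · 31 · 281 · 1201 · 70529 ·
9801219477271)) (X + 1)`. -/
noncomputable def gRevenge : ℚ[X] :=
  X ^ 24 +
    C ((2 ^ 67 * 3 ^ 24 : ℚ) /
      (23 ^ 23 * 31 * 281 * 1201 * 70529 * 9801219477271)) * (X + 1)


open scoped Pointwise in
theorem grp_surj {G Ω : Type*} [Group G] [Finite G] [MulAction G Ω] [Fintype Ω] [DecidableEq Ω]
    [FaithfulSMul G Ω] (hc : Fintype.card Ω = 24) (h23 : 23 ∣ Nat.card G)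
    (hfix : ∀ x : Ω, ∃ g : G, g • x ≠ x)
    (hswap : ∃ g : G, (MulAction.toPermHom G Ω g).IsSwap) :
    Function.Surjective (MulAction.toPermHom G Ω) := by
  obtain ⟨s, hs⟩ := hswap
  have : Fact (Nat.Prime 23) := ⟨by norm_num⟩
  obtain ⟨c, hcord⟩ := exists_prime_orderOf_dvd_card' 23 h23
  have hinj : Function.Injective (MulAction.toPermHom G Ω) := MulAction.toPerm_injective
  have hord : orderOf (MulAction.toPermHom G Ω c) = 23 := by
    rw [orderOf_injective _ hinj, hcord]
  set σ := MulAction.toPermHom G Ω c with hσ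
  have hcyc : σ.IsCycle := Equiv.Perm.isCycle_of_prime_order' (by rw [hord]; norm_num)
    (by rw [hord, hc]; norm_num)
  have hsupp : σ.support.card = 23 := by rw [← hcyc.orderOf, hord]
  have hcompl : σ.supportᶜ.card = 1 := by rw [Finset.card_compl, hsupp, hc]
  obtain ⟨a, ha⟩ := Finset.card_eq_one.mp hcompl
  have hmem : ∀ x, σ x = x ↔ x = a := by
    intro x
    rw [← Equiv.Perm.notMem_support, ← Finset.mem_compl, ha, Finset.mem_singleton]
  have hprim : MulAction.IsPreprimitive G Ω := by
    apply MulAction.IsPreprimitive.of_isTrivialBlock_of_notMem_fixedPoints (a := a)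
    · intro h
      obtain ⟨g, hg⟩ := hfix a
      exact hg (h g)
    · intro B haB hB
      by_cases hsub : B.Subsingleton
      · exact Or.inl hsub
      right
      have hstab : ∀ n : ℤ, c ^ n ∈ MulAction.stabilizer G B := by
        have : c ∈ MulAction.stabilizer G B := by
          have hca : c • a = a := (hmem a).2 rfl
          rw [MulAction.mem_stabilizer_iff]
          apply hB.smul_eq_of_mem haB
          rw [hca]; exact haB
        intro n
        exact Subgroup.zpow_mem _ this n
      obtain ⟨b, hb, hba⟩ : ∃ b ∈ B, b ≠ a := by
        by_contra! hcon
        exact hsub (fun x hx y hy => (hcon x hx).trans (hcon y hy).symm)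
      ext y
      simp only [Set.mem_univ, iff_true]
      by_cases hy : y = a
      · rw [hy]; exact haB
      obtain ⟨n, hn⟩ := hcyc.exists_zpow_eq (x := b) (y := y)
        (fun h => hba ((hmem b).1 h)) (fun h => hy ((hmem y).1 h))
      rw [hσ, ← map_zpow] at hn
      have h1 := MulAction.mem_stabilizer_iff.mp (hstab n)
      rw [← hn, ← h1]
      exact Set.smul_mem_smul_set hb
  have hprim' : MulAction.IsPreprimitive (MulAction.toPermHom G Ω).range Ω := by
    let f : Ω →ₑ[(MulAction.toPermHom G Ω).rangeRestrict] Ω :=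
      { toFun := id, map_smul' := fun g x => rfl }
    exact MulAction.IsPreprimitive.of_surjective (f := f) Function.surjective_id
  rw [← MonoidHom.range_eq_top]
  exact Equiv.Perm.subgroup_eq_top_of_isPreprimitive_of_isSwap_mem hprim' _ hs ⟨s, rfl⟩


/-- constant term -/
def kc : ℤ := 32 * 23 ^ 23 * (31 * 281 * 1201 * 70529 * 9801219477271)

noncomputable def hh : ℤ[X] := X ^ 24 + C 24 * X ^ 23 + C kc

theorem hh_natDegree : hh.natDegree = 24 := by
  unfold hh; compute_degree!

theorem hh_monic : hh.Monic := by
  unfold hh; monicity!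

theorem hh_aeval {S : Type*} [CommRing S] (y : S) :
    aeval y hh = y ^ 23 * (y + 24) + (kc : S) := by
  simp only [hh, aeval_add, aeval_mul, aeval_X_pow, aeval_C]
  simp only [algebraMap_int_eq, eq_intCast]
  push_cast; ring

theorem hh_mem {S : Type*} [CommRing S] [IsDomain S] (y : S) :
    y ∈ hh.rootSet S ↔ y ^ 23 * (y + 24) + (kc : S) = 0 := by
  rw [hh_monic.mem_rootSet, hh_aeval]

theorem hh_deriv : derivative hh = C 24 * X ^ 22 * (X + C 23) := by
  simp [hh]; ring

section
variable {K : Type*} [Field K] [NumberField K] [IsGalois ℚ K]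

open NumberField

theorem hh_fix (y : hh.rootSet (𝓞 K)) : ∃ g : Gal(K/ℚ), g • y ≠ y := by
  by_contra! hcon
  obtain ⟨n, hn⟩ := (IsGaloisGroup.isInvariant (G := Gal(K/ℚ)) (A := ℤ) (B := 𝓞 K)).isInvariant y.1
    (fun g => by rw [← rootSet.coe_smul, hcon g])
  have h1 := (hh_mem y.1).1 y.2
  rw [← hn] at h1
  have h2 : n ^ 23 * (n + 24) + kc = 0 := by
    have : algebraMap ℤ (𝓞 K) (n ^ 23 * (n + 24) + kc) = algebraMap ℤ (𝓞 K) 0 := by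
      simpa using h1
    exact FaithfulSMul.algebraMap_injective ℤ (𝓞 K) this
  have h3 : ((n : ZMod 3)) ^ 23 * (n + 24) + (kc : ZMod 3) = 0 := by
    have := congrArg (Int.cast : ℤ → ZMod 3) h2
    push_cast at this
    exact this
  have h4 : (kc : ZMod 3) = ((kc % 3 : ℤ) : ZMod 3) := by
    exact (ZMod.intCast_mod kc 3).symm
  have h5 : kc % 3 = 1 := by norm_num [kc]
  rw [h4, h5] at h3
  revert h3
  generalize (n : ZMod 3) = m
  revert m
  decide


theorem hh_root_mem (hs : (hh.map (algebraMap ℤ (𝓞 K))).Splits)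
    (P : Ideal (𝓞 K)) [P.IsPrime] (s : 𝓞 K) (h : aeval s hh ∈ P) :
    ∃ y ∈ hh.rootSet (𝓞 K), s - y ∈ P := by
  rw [← eval_map_algebraMap, hs.eval_eq_prod_roots_of_monic (hh_monic.map _)] at h
  obtain ⟨y', hy, hyP⟩ := (Ideal.IsPrime.multiset_prod_mem_iff_exists_mem inferInstance _).1 h
  obtain ⟨y, hyr, rfl⟩ := Multiset.mem_map.1 hy
  refine ⟨y, ?_, hyP⟩
  rw [hh_monic.mem_rootSet, ← eval_map_algebraMap]
  exact (mem_roots'.1 hyr).2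
  
theorem dvd23 (hs : (hh.map (algebraMap ℤ (𝓞 K))).Splits) : 23 ∣ Nat.card Gal(K/ℚ) := by
  have h31 : Prime (31 : ℤ) := by norm_num
  have : (Ideal.span {(31 : ℤ)}).IsPrime := (Ideal.span_singleton_prime h31.ne_zero).2 h31
  obtain ⟨⟨P, hP1, hP2⟩⟩ := (inferInstance : Nonempty ((Ideal.span {(31 : ℤ)}).primesOver (𝓞 K)))
  have hmap : (Ideal.span {(31 : ℤ)}).map (algebraMap ℤ (𝓞 K)) = Ideal.span {(31 : 𝓞 K)} := by
    rw [Ideal.map_span]; simp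
  have hne : (Ideal.span {(31 : ℤ)}).map (algebraMap ℤ (𝓞 K)) ≠ ⊥ := by
    rw [hmap]; simp
  have hInt : ∀ n : ℤ, (n : 𝓞 K) ∈ P ↔ 31 ∣ n := by
    intro n
    rw [← Ideal.mem_span_singleton, Ideal.mem_of_liesOver P (Ideal.span {(31 : ℤ)})]
    simp
  have hP0 : P ≠ ⊥ := by
    rintro rfl
    have := (hInt 31).2 dvd_rfl
    simp at this
  have hPp : Prime P := Ideal.prime_of_isPrime hP0 hP1
  rw [← Ideal.ncard_primesOver_mul_ramificationIdxIn_mul_inertiaDegIn (Ideal.span {(31 : ℤ)}) (𝓞 K)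
    Gal(K/ℚ), Ideal.ramificationIdxIn_eq_ramificationIdx (Ideal.span {(31 : ℤ)}) P Gal(K/ℚ),
    Ideal.IsDedekindDomain.ramificationIdx_eq_multiplicity (Ideal.span {(31 : ℤ)}) P hne, hmap]
  apply Dvd.dvd.mul_left
  apply Dvd.dvd.mul_right
  obtain ⟨y, hy, hyP⟩ := hh_root_mem hs P 0 (by
    rw [hh_aeval]
    simp only [ne_eq, OfNat.ofNat_ne_zero, not_false_eq_true, zero_pow, zero_mul, zero_add]
    rw [hInt]; norm_num [kc])
  have hyP : y ∈ P := by simpa using hyP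
  have hy24 : y + 24 ∉ P := by
    intro h
    have : ((24 : ℤ) : 𝓞 K) ∈ P := by
      have := P.sub_mem h hyP
      simpa using this
    rw [hInt] at this
    norm_num at this
  obtain ⟨u, hu⟩ : ∃ u : ℤ, u = kc / 31 := ⟨_, rfl⟩
  have hu1 : kc = 31 * u := by rw [hu]; norm_num [kc]
  have hu2 : ¬ (31 : ℤ) ∣ u := by rw [hu]; norm_num [kc]
  have huP : (u : 𝓞 K) ∉ P := by rwa [hInt]
  rw [hh_mem, hu1] at hy
  have heq : y ^ 23 * (y + 24) = 31 * -(u : 𝓞 K) := by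
    push_cast at hy
    linear_combination hy
  have heq2 : Ideal.span {y} ^ 23 * Ideal.span {y + 24} = Ideal.span {(31 : 𝓞 K)} * Ideal.span {(u : 𝓞 K)} := by
    rw [Ideal.span_singleton_pow, Ideal.span_singleton_mul_span_singleton,
      Ideal.span_singleton_mul_span_singleton, heq, mul_neg, Ideal.span_singleton_neg]
  have heq3 := congrArg (emultiplicity P) heq2
  have hz : ∀ z : 𝓞 K, z ∉ P → emultiplicity P (Ideal.span {z}) = 0 := by
    intro z hz
    rw [emultiplicity_eq_zero, Ideal.dvd_span_singleton]
    exact hz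
  rw [emultiplicity_mul hPp, emultiplicity_mul hPp, hz _ hy24, hz _ huP, emultiplicity_pow hPp,
    add_zero, add_zero] at heq3
  have hfin : FiniteMultiplicity P (Ideal.span {(31 : 𝓞 K)}) :=
    FiniteMultiplicity.of_prime_left hPp (by simp)
  have hy0 : y ≠ 0 := by
    rintro rfl
    simp at heq
    exact huP (by rw [heq]; simp)
  have hfin2 : FiniteMultiplicity P (Ideal.span {y}) :=
    FiniteMultiplicity.of_prime_left hPp (by simpa using hy0)
  rw [hfin.emultiplicity_eq_multiplicity, hfin2.emultiplicity_eq_multiplicity] at heq3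
  exact ⟨multiplicity P (Ideal.span {y}), by exact_mod_cast heq3.symm⟩

theorem hh_ncard_mod {F : Type*} [CommRing F] [IsDomain F] (hF : ∀ n : ℤ, (n : F) = 0 ↔ 7 ∣ n)
    (hs : (hh.map (algebraMap ℤ F)).Splits) : 24 ≤ (hh.rootSet F).ncard + 1 := by
  classical
  have hm : (hh.map (algebraMap ℤ F)).Monic := hh_monic.map _
  have hcard : (hh.map (algebraMap ℤ F)).roots.card = 24 := by
    rw [← hs.natDegree_eq_card_roots, hh_monic.natDegree_map, hh_natDegree]
  have hd : derivative (hh.map (algebraMap ℤ F)) = (C 24 * X ^ 22 * (X + C 23) : F[X]) := by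
    rw [derivative_map, hh_deriv]
    simp only [Polynomial.map_mul, Polynomial.map_add, Polynomial.map_pow, map_X, map_C]
    simp only [map_ofNat]
  have h24 : (24 : F) ≠ 0 := fun h => by
    have := (hF 24).1 (by exact_mod_cast h)
    norm_num at this
  have h23 : (23 : F) ≠ 0 := fun h => by
    have := (hF 23).1 (by exact_mod_cast h)
    norm_num at this
  have hkc : (kc : F) ≠ 0 := fun h => by
    have := (hF kc).1 h
    norm_num [kc] at this
  have h1 : ∀ x : F, 1 < (hh.map (algebraMap ℤ F)).rootMultiplicity x → x = -23 := by
    intro x hx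
    have h0 := isRoot_iterate_derivative_of_lt_rootMultiplicity (n := 0) (zero_lt_one.trans hx)
    have h1 := isRoot_iterate_derivative_of_lt_rootMultiplicity (n := 1) hx
    simp only [Function.iterate_zero, id_eq, Function.iterate_one, hd, IsRoot.def] at h0 h1
    rw [eval_map_algebraMap, hh_aeval] at h0
    simp only [eval_mul, eval_C, eval_pow, eval_X, eval_add] at h1
    rcases mul_eq_zero.1 h1 with h1 | h1
    · rcases mul_eq_zero.1 h1 with h1 | h1
      · exact absurd h1 h24
      · have : x = 0 := by simpa using h1
        subst this
        simp at h0
        exact absurd h0 hkc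
    · linear_combination h1
  have h2 : ∀ x : F, (hh.map (algebraMap ℤ F)).rootMultiplicity x ≤ 2 := by
    intro x
    by_contra! hx
    have hx23 := h1 x (by omega)
    have h2 := isRoot_iterate_derivative_of_lt_rootMultiplicity (n := 2) hx
    simp only [Function.iterate_succ, Function.iterate_zero, Function.comp_apply, id_eq, hd] at h2
    rw [IsRoot.def, hx23] at h2
    simp at h2
    rcases h2 with h2 | h2
    · exact h24 h2
    · exact h23 h2
  have hle : (hh.map (algebraMap ℤ F)).roots ≤
      (hh.map (algebraMap ℤ F)).roots.toFinset.val + {-23} := by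
    rw [Multiset.le_iff_count]
    intro x
    rw [count_roots, Multiset.count_add]
    by_cases hx : x ∈ (hh.map (algebraMap ℤ F)).roots
    · have : 1 ≤ Multiset.count x (hh.map (algebraMap ℤ F)).roots.toFinset.val := by
        rw [Multiset.one_le_count_iff_mem]; simpa using hx
      by_cases hx1 : 1 < (hh.map (algebraMap ℤ F)).rootMultiplicity x
      · rw [h1 x hx1] at this ⊢
        have := h2 (-23)
        rw [Multiset.count_singleton_self]
        omega
      · omega
    · rw [← count_roots, Multiset.count_eq_zero_of_notMem hx]; omega
  have := Multiset.card_le_card hle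
  rw [hcard, Multiset.card_add, Multiset.card_singleton] at this
  rw [rootSet_def, Set.ncard_coe_finset]
  exact this

theorem hswap (hs : (hh.map (algebraMap ℤ (𝓞 K))).Splits) [DecidableEq (hh.rootSet (𝓞 K))]
    [FaithfulSMul Gal(K/ℚ) (hh.rootSet (𝓞 K))] :
    ∃ g : Gal(K/ℚ), (MulAction.toPermHom Gal(K/ℚ) (hh.rootSet (𝓞 K)) g).IsSwap := by
  have h7 : Prime (7 : ℤ) := by norm_num
  have : (Ideal.span {(7 : ℤ)}).IsPrime := (Ideal.span_singleton_prime h7.ne_zero).2 h7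
  obtain ⟨⟨P, hP1, hP2⟩⟩ := (inferInstance : Nonempty ((Ideal.span {(7 : ℤ)}).primesOver (𝓞 K)))
  have hmap : (Ideal.span {(7 : ℤ)}).map (algebraMap ℤ (𝓞 K)) = Ideal.span {(7 : 𝓞 K)} := by
    rw [Ideal.map_span]; simp
  have hne : (Ideal.span {(7 : ℤ)}).map (algebraMap ℤ (𝓞 K)) ≠ ⊥ := by
    rw [hmap]; simp
  have hInt : ∀ n : ℤ, (n : 𝓞 K) ∈ P ↔ 7 ∣ n := by
    intro n
    rw [← Ideal.mem_span_singleton, Ideal.mem_of_liesOver P (Ideal.span {(7 : ℤ)})]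
    simp
  have hP0 : P ≠ ⊥ := by
    rintro rfl
    have := (hInt 7).2 dvd_rfl
    simp at this
  have hPp : Prime P := Ideal.prime_of_isPrime hP0 hP1
  -- the inertia group is nontrivial
  have hinert : P.inertia Gal(K/ℚ) ≠ ⊥ := by
    intro hbot
    have hcard := Ideal.card_inertia_eq_ramificationIdxIn (G := Gal(K/ℚ)) (Ideal.span {(7 : ℤ)}) P
    rw [Ideal.ramificationIdxIn_eq_ramificationIdx (Ideal.span {(7 : ℤ)}) P Gal(K/ℚ),
      Ideal.IsDedekindDomain.ramificationIdx_eq_multiplicity (Ideal.span {(7 : ℤ)}) P hne, hmap,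
      hbot, Subgroup.card_bot] at hcard
    have hev : aeval (-23 : 𝓞 K) hh = ((kc - 23 ^ 23 : ℤ) : 𝓞 K) := by
      rw [hh_aeval]; push_cast; ring
    obtain ⟨y, hy, hyP⟩ := hh_root_mem hs P (-23) (by
      rw [hev, hInt]; norm_num [kc])
    have hroot : (hh.map (algebraMap ℤ (𝓞 K))).IsRoot y := by
      rw [IsRoot.def, eval_map_algebraMap]
      exact (hh_monic.mem_rootSet).1 hy
    obtain ⟨q, hq⟩ := dvd_iff_isRoot.2 hroot
    have hd := congrArg (fun f => eval (-23) (derivative f)) hq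
    have he := congrArg (eval (-23)) hq
    rw [eval_map_algebraMap, hev] at he
    simp only [derivative_map, hh_deriv] at hd
    simp at hd he
    have hsq : (((kc - 23 ^ 23 : ℤ)) : 𝓞 K) ∈ P ^ 2 := by
      have : (((kc - 23 ^ 23 : ℤ)) : 𝓞 K) = (-23 - y) ^ 2 * -(eval (-23) (derivative q)) := by
        push_cast
        linear_combination he - (-23 - y) * hd
      rw [this]
      exact Ideal.mul_mem_right _ _ (Ideal.pow_mem_pow hyP 2)
    obtain ⟨u, hu⟩ : ∃ u : ℤ, u = (kc - 23 ^ 23) / 7 := ⟨_, rfl⟩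
    have hu1 : kc - 23 ^ 23 = 7 * u := by rw [hu]; norm_num [kc]
    have hu2 : ¬ (7 : ℤ) ∣ u := by rw [hu]; norm_num [kc]
    obtain ⟨a, b, hab⟩ := (Prime.coprime_iff_not_dvd h7).2 hu2
    have h7sq : (7 : 𝓞 K) ∈ P ^ 2 := by
      have h49 : ((7 : ℤ) : 𝓞 K) ^ 2 ∈ P ^ 2 := Ideal.pow_mem_pow ((hInt 7).2 dvd_rfl) 2
      have : (7 : 𝓞 K) = a * ((7 : ℤ) : 𝓞 K) ^ 2 + b * ((kc - 23 ^ 23 : ℤ) : 𝓞 K) := by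
        rw [hu1]
        have := congrArg (Int.cast : ℤ → 𝓞 K) hab
        push_cast at this ⊢
        linear_combination (-7) * this
      rw [this]
      exact Ideal.add_mem _ (Ideal.mul_mem_left _ _ h49) (Ideal.mul_mem_left _ _ hsq)
    have hdvd : P ^ 2 ∣ Ideal.span {(7 : 𝓞 K)} := Ideal.dvd_span_singleton.2 h7sq
    have hfin : FiniteMultiplicity P (Ideal.span {(7 : 𝓞 K)}) :=
      FiniteMultiplicity.of_prime_left hPp (by simp)
    have := hfin.le_multiplicity_of_pow_dvd hdvd
    omega
  obtain ⟨⟨g, hg⟩, hg1'⟩ := Subgroup.ne_bot_iff_exists_ne_one.1 hinert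
  have hg1 : g ≠ 1 := fun h => hg1' (Subtype.ext h)
  refine ⟨g, ?_⟩
  have hF : ∀ n : ℤ, (n : 𝓞 K ⧸ P) = 0 ↔ 7 ∣ n := by
    intro n
    rw [← hInt n, ← Ideal.Quotient.eq_zero_iff_mem, map_intCast]
  have hsF : (hh.map (algebraMap ℤ (𝓞 K ⧸ P))).Splits := by
    have := hs.map (algebraMap (𝓞 K) (𝓞 K ⧸ P))
    rwa [Polynomial.map_map, ← IsScalarTower.algebraMap_eq] at this
  have hle : (hh.rootSet (𝓞 K)).ncard ≤ (hh.rootSet (𝓞 K ⧸ P)).ncard + 1 := by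
    refine le_trans ?_ (hh_ncard_mod hF hsF)
    classical
    rw [rootSet_def, Set.ncard_coe_finset]
    refine (Multiset.toFinset_card_le _).trans ((card_roots' _).trans ?_)
    rw [hh_monic.natDegree_map, hh_natDegree]
  refine (hs.toPermHom_apply_eq_one_or_isSwap_of_ncard_le_of_mem_inertia P hle g hg).resolve_left ?_
  intro h
  apply hg1
  have hinj : Function.Injective (MulAction.toPermHom Gal(K/ℚ) (hh.rootSet (𝓞 K))) :=
    MulAction.toPerm_injective
  exact hinj (h.trans (map_one _).symm)

end

section
open NumberField

theorem g_form : ∃ c : ℚ, c ≠ 0 ∧ gRevenge = X ^ 24 + C c * (X + 1) ∧ c * kc = 24 ^ 24 ∧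
    (24 / 23 : ℚ) ^ 24 ≠ c / 23 := by
  refine ⟨_, ?_, rfl, ?_, ?_⟩ <;> norm_num [kc]

theorem g_natDegree : gRevenge.natDegree = 24 := by
  unfold gRevenge; compute_degree!

theorem g_monic : gRevenge.Monic := by
  unfold gRevenge; monicity!

variable {K : Type*} [Field K] [NumberField K] [IsSplittingField ℚ K gRevenge]

variable (K) in
theorem g_ncard : Fintype.card (gRevenge.rootSet K) = 24 := by
  classical
  have hs := IsSplittingField.splits K gRevenge
  rw [← g_natDegree]
  apply card_rootSet_eq_natDegree _ hs
  rw [← separable_map (algebraMap ℚ K),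
    ← nodup_roots_iff_of_splits (g_monic.map _).ne_zero hs, Multiset.nodup_iff_count_le_one]
  intro x
  by_contra! hx
  rw [count_roots] at hx
  have h0 := isRoot_iterate_derivative_of_lt_rootMultiplicity (n := 0) (zero_lt_one.trans hx)
  have h1 := isRoot_iterate_derivative_of_lt_rootMultiplicity (n := 1) hx
  obtain ⟨c, hc, hg, -, hne⟩ := g_form
  simp only [Function.iterate_zero, id_eq, Function.iterate_one, IsRoot.def, derivative_map,
    eval_map_algebraMap] at h0 h1
  rw [hg] at h0 h1
  simp only [derivative_add, derivative_X_pow, derivative_C_mul, derivative_X, derivative_one,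
    aeval_add, aeval_mul, aeval_X_pow, aeval_C, aeval_X, aeval_one, add_zero, map_natCast] at h0 h1
  have hc' : algebraMap ℚ K c ≠ 0 := by simpa using hc
  have h23 : 23 * x + 24 = 0 := by
    apply (mul_eq_zero.1 _).resolve_left hc'
    push_cast at h1
    simp only [mul_one] at h1
    linear_combination 24 * h0 - x * h1
  have hx' : x = algebraMap ℚ K (-(24 / 23)) := by
    simp only [map_neg, map_div₀, map_ofNat]
    rw [← neg_div, eq_div_iff (by norm_num)]
    linear_combination h23
  rw [hx', ← map_pow, ← map_one (algebraMap ℚ K), ← map_add, ← map_mul,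
    ← map_add, map_eq_zero] at h0
  apply hne
  rw [neg_pow, (by decide : Even 24).neg_one_pow] at h0
  linear_combination h0

theorem g_root_inv (x : K) (hx : x ∈ gRevenge.rootSet K) :
    x ≠ 0 ∧ ∃ y : 𝓞 K, y ∈ hh.rootSet (𝓞 K) ∧
      (y : K) = 24 / x := by
  obtain ⟨c, hc, hg, hck, -⟩ := g_form
  have hx1 := g_monic.mem_rootSet.1 hx
  rw [hg] at hx1
  simp only [aeval_add, aeval_mul, aeval_X_pow, aeval_C, aeval_X, aeval_one] at hx1
  have hc' : algebraMap ℚ K c ≠ 0 := by simpa using hc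
  have hx0 : x ≠ 0 := by
    rintro rfl
    simp at hx1
    exact hc hx1
  have hck' : algebraMap ℚ K c * (kc : K) = 24 ^ 24 := by
    have := congrArg (algebraMap ℚ K) hck
    simpa using this
  refine ⟨hx0, ?_⟩
  have key : (24 / x) ^ 23 * (24 / x + 24) + (kc : K) = 0 := by
    have h1 : (24 / x) ^ 23 * (24 / x + 24) = 24 ^ 24 * (x + 1) / x ^ 24 := by
      field_simp
      ring
    rw [h1, ← hck', div_add' _ _ _ (pow_ne_zero _ hx0), div_eq_zero_iff]
    left
    linear_combination (kc : K) * hx1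
  have hInt : IsIntegral ℤ (24 / x) := ⟨hh, hh_monic, by
    have := hh_aeval (24 / x)
    rw [key] at this
    exact this⟩
  obtain ⟨y, hy⟩ : ∃ y : 𝓞 K, (y : K) = 24 / x := ⟨⟨24 / x, hInt⟩, rfl⟩
  refine ⟨y, (hh_mem y).2 ?_, hy⟩
  apply RingOfIntegers.ext
  rw [← hy] at key
  have h24 : algebraMap (𝓞 K) K 24 = 24 := map_ofNat _ 24
  show algebraMap (𝓞 K) K (y ^ 23 * (y + 24) + (kc : 𝓞 K)) = algebraMap (𝓞 K) K 0
  rw [map_add, map_mul, map_pow, map_add, map_intCast, map_zero, h24]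
  exact key

variable (K) in
theorem hh_ncard : (hh.rootSet (𝓞 K)).ncard = 24 := by
  classical
  apply le_antisymm
  · rw [rootSet_def, Set.ncard_coe_finset]
    refine (Multiset.toFinset_card_le _).trans ((card_roots' _).trans ?_)
    rw [hh_monic.natDegree_map, hh_natDegree]
  · have h := g_ncard K
    choose h0 f hf hfe using g_root_inv (K := K)
    rw [← Nat.card_coe_set_eq, ← h, ← Nat.card_eq_fintype_card]
    apply Nat.card_le_card_of_injective
      (fun x : gRevenge.rootSet K =>
        (⟨f x.1 x.2, hf x.1 x.2⟩ : hh.rootSet (𝓞 K)))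
    intro x y hxy
    have h1 : f x.1 x.2 = f y.1 y.2 := congrArg Subtype.val hxy
    have h2 := congrArg (algebraMap (𝓞 K) K) h1
    replace h2 : (24 : K) / x.1 = 24 / y.1 :=
      (hfe x.1 x.2).symm.trans (h2.trans (hfe y.1 y.2))
    have hx0 := h0 x.1 x.2
    have hy0 := h0 y.1 y.2
    rw [div_eq_div_iff hx0 hy0] at h2
    exact Subtype.ext (mul_left_cancel₀ (by norm_num) h2).symm

variable (K) in
theorem hh_splits : (hh.map (algebraMap ℤ (𝓞 K))).Splits := by
  classical
  rw [splits_iff_card_roots, hh_monic.natDegree_map, hh_natDegree]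
  apply le_antisymm
  · refine (card_roots' _).trans ?_
    rw [hh_monic.natDegree_map, hh_natDegree]
  · rw [← hh_ncard K, rootSet_def, Set.ncard_coe_finset]
    exact Multiset.toFinset_card_le _

variable (K) in
theorem hh_faithful : FaithfulSMul Gal(K/ℚ)
    (hh.rootSet (𝓞 K)) := by
  constructor
  intro g₁ g₂ h
  suffices hsuff : (g₁ : K →ₐ[ℚ] K) = (g₂ : K →ₐ[ℚ] K) from
    AlgEquiv.ext fun x => DFunLike.congr_fun hsuff x
  apply AlgHom.ext_of_adjoin_eq_top (IsSplittingField.adjoin_rootSet K gRevenge)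
  intro x hx
  show g₁ x = g₂ x
  obtain ⟨hx0, y, hy, hyx⟩ := g_root_inv x hx
  have h1 := congrArg (fun z => ((z : 𝓞 K) : K))
    (congrArg Subtype.val (h ⟨y, hy⟩))
  have h2 : g₁ (y : K) = g₂ (y : K) := h1
  rw [hyx, map_div₀, map_div₀, map_ofNat, map_ofNat, div_eq_div_iff (by simpa using hx0)
    (by simpa using hx0)] at h2
  exact (mul_left_cancel₀ (by norm_num) h2).symm

theorem gal_aux (K : Type*) [Field K] [NumberField K] [IsSplittingField ℚ K gRevenge] :
    Nonempty (Gal(K/ℚ) ≃* Equiv.Perm (Fin 24)) := by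
  classical
  have : IsGalois ℚ K := { to_normal := Normal.of_isSplittingField gRevenge }
  have := hh_faithful K
  have : Fintype (hh.rootSet (𝓞 K)) := Fintype.ofFinite _
  have hc : Fintype.card (hh.rootSet (𝓞 K)) = 24 := by
    rw [← Nat.card_eq_fintype_card, Nat.card_coe_set_eq, hh_ncard K]
  have hsurj := grp_surj (G := Gal(K/ℚ)) hc (dvd23 (hh_splits K)) hh_fix
    (hswap (hh_splits K))
  have e1 := MulEquiv.ofBijective _ ⟨MulAction.toPerm_injective, hsurj⟩
  exact ⟨e1.trans (Fintype.equivFinOfCardEq hc).permCongrHom⟩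

theorem gal_aux2 (K : Type*) [Field K] [CharZero K] (alg : Algebra ℚ K)
    (h : IsSplittingField ℚ K gRevenge) : Nonempty ((K ≃ₐ[ℚ] K) ≃* Equiv.Perm (Fin 24)) := by
  obtain rfl : alg = DivisionRing.toRatAlgebra := Subsingleton.elim _ _
  have : FiniteDimensional ℚ K := IsSplittingField.finiteDimensional K gRevenge
  have : NumberField K := { }
  exact gal_aux K

end

/-- The Galois group over `ℚ` of (the splitting field of) `g` is isomorphic to the
symmetric group `S24`. -/
theorem g_galois : Nonempty (gRevenge.Gal ≃* Equiv.Perm (Fin 24)) := by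
  exact gal_aux2 gRevenge.SplittingField _ (IsSplittingField.splittingField gRevenge)
end

section
/- For each i ∈ {1, 2, 3}, the Galois group over Q of the splitting field of hᵢ is isomorphic to the symmetric group S24, where h1 = X^24 + (2^64·3^23/(23^23·31·281·1201·70529·9801219477271))(X + 1), h2 = X^24 - (2^75·3^14·31·281·1201·70529·9801219477271/(7^2·23^22·195574568093355782014153^2))(X + 1), and h3 = X^24 - (2^72·3^24·7·1437417619559484462138047/23^22)(X + 1) in Q[X]. -/
open Polynomial

/-- `h1 = X^24 + (2^64 3^23 / (23^23 · 31 · 281 · 1201 · 70529 · 9801219477271)) (X + 1)`. -/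
noncomputable def h1Prof : ℚ[X] :=
  X ^ 24 +
    C ((2 ^ 64 * 3 ^ 23 : ℚ) /
      (23 ^ 23 * 31 * 281 * 1201 * 70529 * 9801219477271)) * (X + 1)

/-- `h2 = X^24 - (2^75 · 3^14 · 31 · 281 · 1201 · 70529 · 9801219477271 /
(7^2 · 23^22 · 195574568093355782014153^2)) (X + 1)`. -/
noncomputable def h2Prof : ℚ[X] :=
  X ^ 24 -
    C ((2 ^ 75 * 3 ^ 14 * 31 * 281 * 1201 * 70529 * 9801219477271 : ℚ) /
      (7 ^ 2 * 23 ^ 22 * 195574568093355782014153 ^ 2)) * (X + 1)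

/-- `h3 = X^24 - (2^72 · 3^24 · 7 · 1437417619559484462138047 / 23^22) (X + 1)`. -/
noncomputable def h3Prof : ℚ[X] :=
  X ^ 24 -
    C ((2 ^ 72 * 3 ^ 24 * 7 * 1437417619559484462138047 : ℚ) / 23 ^ 22) * (X + 1)

/-! Arithmetic of coefficient lists modulo `p` (lowest degree first). -/

section Lists

/-- Evaluation of a coefficient list. -/
def evL {k : Type*} [CommRing k] (y : k) : List ℕ → k
  | [] => 0
  | a :: l => (a : k) + y * evL y l

/-- Sum of coefficient lists modulo `p`. -/
def addL (p : ℕ) : List ℕ → List ℕ → List ℕ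
  | [], l => l
  | a :: l, [] => a :: l
  | a :: l, b :: m => ((a + b) % p) :: addL p l m

/-- Scalar multiple of a coefficient list modulo `p`. -/
def smulL (p c : ℕ) : List ℕ → List ℕ
  | [] => []
  | a :: l => ((c * a) % p) :: smulL p c l

/-- Product of coefficient lists modulo `p`. -/
def mulL (p : ℕ) : List ℕ → List ℕ → List ℕ
  | [], _ => []
  | a :: l, b => addL p (smulL p a b) (0 :: mulL p l b)

variable {k : Type*} [CommRing k] (p : ℕ) [CharP k p] (y : k)

lemma cast_modL (n : ℕ) : ((n % p : ℕ) : k) = n := by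
  conv_rhs => rw [← Nat.mod_add_div n p]
  simp

lemma evL_addL (l m : List ℕ) : evL y (addL p l m) = evL y l + evL y m := by
  induction l generalizing m with
  | nil => simp [addL, evL]
  | cons a l ih =>
    cases m with
    | nil => simp [addL, evL]
    | cons b m => simp only [addL, evL, ih, cast_modL]; push_cast; ring

lemma evL_smulL (c : ℕ) (l : List ℕ) : evL y (smulL p c l) = c * evL y l := by
  induction l with
  | nil => simp [smulL, evL]
  | cons a l ih => simp only [smulL, evL, ih, cast_modL]; push_cast; ring

lemma evL_mulL (l m : List ℕ) : evL y (mulL p l m) = evL y l * evL y m := by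
  induction l with
  | nil => simp [mulL, evL]
  | cons a l ih => simp only [mulL, evL, ih, evL_addL, evL_smulL]; push_cast; ring

lemma evL_append (l m : List ℕ) : evL y (l ++ m) = evL y l + y ^ l.length * evL y m := by
  induction l with
  | nil => simp [evL]
  | cons a l ih => simp only [List.cons_append, evL, ih, List.length_cons]; ring

lemma evL_replicate (n : ℕ) : evL y (List.replicate n 0) = 0 := by
  induction n with
  | zero => simp [evL]
  | succ n ih => simp [List.replicate_succ, evL, ih]

end Lists

/-! Arithmetic of coefficient lists modulo `p`, highest degree first. -/

section HighLists

/-- Evaluation of a coefficient list, highest coefficient first. -/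
def evH {k : Type*} [CommRing k] (y : k) : List ℕ → k
  | [] => 0
  | a :: l => (a : k) * y ^ l.length + evH y l

/-- One Horner step: `X * rest + c * r + a * b`. -/
noncomputable def goH (c a : ℕ) (r b rest : List ℕ) : List ℕ :=
  List.rec (motive := fun _ => List ℕ → List ℕ → List ℕ) (fun _ _ => [])
    (fun r0 _ ih b rest =>
      List.rec (motive := fun _ => List ℕ) []
        (fun b0 bs _ =>
          List.rec (motive := fun _ => List ℕ)
            ((Nat.add (Nat.mul c r0) (Nat.mul a b0)) :: ih bs [])
            (fun x xs _ => (Nat.add x (Nat.add (Nat.mul c r0) (Nat.mul a b0))) :: ih bs xs)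
            rest) b)
    r b rest

/-- Coefficientwise reduction. -/
noncomputable def modH (p : ℕ) (l : List ℕ) : List ℕ :=
  List.rec (motive := fun _ => List ℕ) [] (fun a _ ih => Nat.mod a p :: ih) l

/-- One Horner step. -/
noncomputable def stepH (p : ℕ) (r b acc : List ℕ) (a : ℕ) : List ℕ :=
  List.rec (motive := fun _ => List ℕ) [] (fun c rest _ => goH (Nat.mod c p) a r b rest) acc

/-- Horner loop. -/
noncomputable def loopH (p : ℕ) (r b l acc : List ℕ) : List ℕ :=
  List.rec (motive := fun _ => List ℕ → List ℕ) (fun acc => modH p acc)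
    (fun a _ ih acc => ih (stepH p r b acc a)) l acc

/-- Power of `X` modulo `X ^ r.length - r`. -/
noncomputable def powH (p : ℕ) (r z one : List ℕ) : ℕ → ℕ → List ℕ
  | 0, _ => one
  | f + 1, n =>
    (fun s => cond (Nat.beq (n % 2) 1) (stepH p r z (loopH p r s s z) 0) (loopH p r s s z))
        (powH p r z one f (n / 2))

/-- Check that `X ^ (p ^ d) = X` modulo `X ^ r.length - r`. -/
noncomputable def frobCheck (p d f : ℕ) (r : List ℕ) : Bool :=
  (fun z one => decide (p ^ d < 2 ^ f) && decide (0 < r.length) &&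
    decide (modH p (powH p r z one f (p ^ d)) = modH p (stepH p r z one 0)))
  (List.replicate r.length 0) (List.replicate (r.length - 1) 0 ++ [1])

end HighLists

section HighListsSpec

variable {k : Type*} [CommRing k] (p : ℕ) [CharP k p] (y : k)

lemma cast_modN (n : ℕ) : ((Nat.mod n p : ℕ) : k) = n := by
  change ((n % p : ℕ) : k) = n
  conv_rhs => rw [← Nat.mod_add_div n p]
  simp

lemma goH_cons (c a r0 b0 : ℕ) (r b rest : List ℕ) :
    goH c a (r0 :: r) (b0 :: b) rest =
      (rest.headD 0 + (c * r0 + a * b0)) :: goH c a r b rest.tail := by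
  cases rest with
  | nil => simp [goH]
  | cons x xs => simp [goH]

lemma length_goH (c a : ℕ) (r b rest : List ℕ) (h : b.length = r.length) :
    (goH c a r b rest).length = r.length := by
  induction r generalizing b rest with
  | nil => simp [goH]
  | cons r0 r ih =>
    obtain _ | ⟨b0, b⟩ := b
    · simp at h
    · rw [goH_cons, List.length_cons, ih _ _ (by simpa using h), List.length_cons]

lemma evH_goH (c a : ℕ) (r b rest : List ℕ) (h : b.length = r.length)
    (h' : rest.length + 1 = r.length) :
    evH y (goH c a r b rest) = y * evH y rest + c * evH y r + a * evH y b := by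
  induction r generalizing b rest with
  | nil => simp at h'
  | cons r0 r ih =>
    obtain _ | ⟨b0, b⟩ := b
    · simp at h
    simp only [List.length_cons, Nat.add_right_cancel_iff] at h h'
    rw [goH_cons]
    simp only [evH, length_goH _ _ _ _ _ h]
    obtain _ | ⟨x, xs⟩ := rest
    · obtain rfl : r = [] := by simpa using h'.symm
      obtain rfl : b = [] := by simpa using h
      simp [goH, evH]
    · simp only [List.length_cons] at h'
      rw [List.tail_cons, ih b xs h h', List.headD_cons]
      simp only [evH, h, ← h']
      push_cast; ring

lemma length_modH (l : List ℕ) : (modH p l).length = l.length := by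
  induction l with
  | nil => simp [modH]
  | cons a l ih => simpa [modH] using ih

lemma evH_modH (l : List ℕ) : evH y (modH p l) = evH y l := by
  induction l with
  | nil => simp [modH]
  | cons a l ih =>
    change evH y (Nat.mod a p :: modH p l) = _
    simp only [evH, ih, length_modH, cast_modN]

lemma stepH_spec (r b acc : List ℕ) (a : ℕ) (hr : y ^ r.length = evH y r) (h0 : 0 < r.length)
    (hb : b.length = r.length) (hacc : acc.length = r.length) :
    (stepH p r b acc a).length = r.length ∧
      evH y (stepH p r b acc a) = y * evH y acc + a * evH y b := by
  obtain _ | ⟨c, rest⟩ := acc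
  · simp at hacc; omega
  change (goH (Nat.mod c p) a r b rest).length = _ ∧ evH y (goH (Nat.mod c p) a r b rest) = _
  refine ⟨length_goH _ _ _ _ _ hb, ?_⟩
  simp only [List.length_cons] at hacc
  rw [evH_goH y _ _ _ _ _ hb hacc, cast_modN, ← hr, ← hacc]
  simp only [evH]; ring

lemma loopH_spec (r b l acc : List ℕ) (hr : y ^ r.length = evH y r) (h0 : 0 < r.length)
    (hb : b.length = r.length) (hacc : acc.length = r.length) :
    (loopH p r b l acc).length = r.length ∧
      evH y (loopH p r b l acc) = y ^ l.length * evH y acc + evH y l * evH y b := by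
  induction l generalizing acc with
  | nil =>
    change (modH p acc).length = _ ∧ evH y (modH p acc) = _
    simp [length_modH, evH_modH, hacc, evH]
  | cons a l ih =>
    change (loopH p r b l (stepH p r b acc a)).length = _ ∧
      evH y (loopH p r b l (stepH p r b acc a)) = _
    obtain ⟨h1, h2⟩ := stepH_spec p y r b acc a hr h0 hb hacc
    obtain ⟨h3, h4⟩ := ih _ h1
    refine ⟨h3, ?_⟩
    rw [h4, h2]; simp only [evH, List.length_cons]; ring

lemma evH_append (l m : List ℕ) : evH y (l ++ m) = evH y l * y ^ m.length + evH y m := by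
  induction l with
  | nil => simp [evH]
  | cons a l ih => simp only [List.cons_append, evH, ih, List.length_append]; ring

lemma evH_replicate (n : ℕ) : evH y (List.replicate n 0) = 0 := by
  induction n with
  | zero => simp [evH]
  | succ n ih => simp [List.replicate_succ, evH, ih]

lemma powH_spec (r z one : List ℕ) (hr : y ^ r.length = evH y r) (h0 : 0 < r.length)
    (hz : z.length = r.length) (hone : one.length = r.length) (ez : evH y z = 0)
    (eone : evH y one = 1) (f n : ℕ) (hn : n < 2 ^ f) :
    (powH p r z one f n).length = r.length ∧ evH y (powH p r z one f n) = y ^ n := by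
  induction f generalizing n with
  | zero =>
    obtain rfl : n = 0 := by simpa using hn
    simp [powH, hone, eone]
  | succ f ih =>
    obtain ⟨h1, h2⟩ := ih (n / 2) (by rw [pow_succ] at hn; omega)
    obtain ⟨h3, h4⟩ := loopH_spec p y r _ (powH p r z one f (n / 2)) z hr h0 h1 hz
    rw [ez, mul_zero, zero_add, h2, ← pow_add] at h4
    obtain ⟨h5, h6⟩ := stepH_spec p y r z _ 0 hr h0 hz h3
    unfold powH
    by_cases h : n % 2 = 1
    · have hb : Nat.beq (n % 2) 1 = true := by rw [h]; rfl
      simp only [hb, cond_true]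
      refine ⟨h5, ?_⟩
      rw [h6, h4, ez, mul_zero, add_zero, ← pow_succ']; congr 1; omega
    · have hb : Nat.beq (n % 2) 1 = false := by
        rw [show n % 2 = 0 by omega]; rfl
      simp only [hb, cond_false]
      refine ⟨h3, ?_⟩
      rw [h4]; congr 1; omega

lemma frobCheck_spec {d f : ℕ} {r : List ℕ} (hc : frobCheck p d f r = true)
    (h : y ^ r.length = evH y r) : y ^ (p ^ d) = y := by
  simp only [frobCheck, Bool.and_eq_true, decide_eq_true_eq] at hc
  obtain ⟨⟨h1, h0⟩, h2⟩ := hc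
  have e1 := (powH_spec p y r (List.replicate r.length 0)
    (List.replicate (r.length - 1) 0 ++ [1]) h h0 (by simp) (by simp; omega)
    (evH_replicate y _) (by simp [evH_append, evH_replicate, evH]) f _ h1).2
  have e2 := (stepH_spec p y r (List.replicate r.length 0)
    (List.replicate (r.length - 1) 0 ++ [1]) 0 h h0 (by simp) (by simp; omega)).2
  have := congrArg (evH y) h2
  rw [evH_modH, evH_modH, e1, e2] at this
  simpa [evH_append, evH_replicate, evH] using this

/-- The polynomial `X ^ r.length - r` as a coefficient list, lowest coefficient first. -/
def gOf (p : ℕ) (r : List ℕ) : List ℕ := (r.map (fun a => (p - 1) * a)).reverse ++ [1]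

lemma evL_gOf (hp : 0 < p) (r : List ℕ) : evL y (gOf p r) = y ^ r.length - evH y r := by
  have key : ∀ l : List ℕ, evL y ((l.map (fun a => (p - 1) * a)).reverse) = - evH y l := by
    intro l
    induction l with
    | nil => simp [evL, evH]
    | cons a l ih =>
      have hp1 : ((p - 1 : ℕ) : k) = -1 := by
        rw [Nat.cast_sub hp]; simp
      simp only [List.map_cons, List.reverse_cons, evL_append, ih, evL, evH, List.length_reverse,
        List.length_map]
      push_cast
      rw [hp1]; ring
  rw [gOf, evL_append, key]
  simp [evL]; ring

/-- Product of the polynomials `X ^ r.length - r`. -/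
def prodL (p : ℕ) : List (List ℕ) → List ℕ
  | [] => [1]
  | r :: rs => mulL p (gOf p r) (prodL p rs)

lemma evL_prodL (hp : 0 < p) (rs : List (List ℕ)) :
    evL y (prodL p rs) = (rs.map (fun r => y ^ r.length - evH y r)).prod := by
  induction rs with
  | nil => simp [prodL, evL]
  | cons r rs ih => simp only [prodL, evL_mulL, evL_gOf p y hp, ih, List.map_cons, List.prod_cons]

/-- Check that the trinomial `X ^ 24 + A X + B` is the product of the given polynomials. -/
def facCheck (p : ℕ) (A B : ℤ) (rs : List (List ℕ)) : Bool :=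
  decide (prodL p rs = (B % p).toNat :: (A % p).toNat :: (List.replicate 22 0 ++ [1]))

lemma cast_toNat_emod (hp : 0 < p) (A : ℤ) : (((A % p).toNat : ℕ) : k) = (A : k) := by
  have h1 : (((A % p).toNat : ℕ) : ℤ) = A % p :=
    Int.toNat_of_nonneg (Int.emod_nonneg _ (by exact_mod_cast hp.ne'))
  rw [← Int.cast_natCast (A % p).toNat, h1]
  conv_rhs => rw [← Int.emod_add_mul_ediv A p]
  simp

lemma facCheck_spec [IsDomain k] (hp : 0 < p) {A B : ℤ} {rs : List (List ℕ)}
    (hc : facCheck p A B rs = true) (hy : y ^ 24 + A * y + B = 0) :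
    ∃ r ∈ rs, y ^ r.length = evH y r := by
  simp only [facCheck, decide_eq_true_eq] at hc
  have h := evL_prodL p y hp rs
  rw [hc] at h
  simp only [evL, evL_append, evL_replicate, List.length_replicate, cast_toNat_emod p hp] at h
  have h0 : (rs.map (fun r => y ^ r.length - evH y r)).prod = 0 := by
    refine h.symm.trans (Eq.trans ?_ hy)
    push_cast; ring
  rw [List.prod_eq_zero_iff, List.mem_map] at h0
  obtain ⟨r, hr, h⟩ := h0
  exact ⟨r, hr, sub_eq_zero.mp h⟩

open Polynomial in
lemma degree_evH (r : List ℕ) : (evH (X : k[X]) r).degree < r.length := by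
  induction r with
  | nil => simp [evH]
  | cons a l ih =>
    simp only [evH, List.length_cons]
    refine lt_of_le_of_lt (degree_add_le _ _) (max_lt ?_ (ih.trans (by exact_mod_cast Nat.lt_succ_self _)))
    rw [← C_eq_natCast]
    exact lt_of_le_of_lt (degree_C_mul_X_pow_le _ _) (by exact_mod_cast Nat.lt_succ_self _)

open Polynomial in
lemma eval_evH (r : List ℕ) : (evH (X : k[X]) r).eval y = evH y r := by
  induction r with
  | nil => simp [evH]
  | cons a l ih => simp [evH, ih]

open Polynomial in
/-- At most `∑ deg` elements are roots of one of the polynomials. -/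
lemma card_le_of_roots [IsDomain k] (rs : List (List ℕ)) (S : Finset k)
    (h : ∀ y ∈ S, ∃ r ∈ rs, y ^ r.length = evH y r) : S.card ≤ (rs.map List.length).sum := by
  classical
  let P : k[X] := (rs.map (fun r => X ^ r.length - evH (X : k[X]) r)).prod
  have hm : ∀ r : List ℕ, (X ^ r.length - evH (X : k[X]) r).Monic ∧
      (X ^ r.length - evH (X : k[X]) r).natDegree = r.length := by
    intro r
    have h1 : (evH (X : k[X]) r).degree < (X ^ r.length : k[X]).degree := by
      rw [degree_X_pow]; exact degree_evH r
    refine ⟨(monic_X_pow _).sub_of_left h1, ?_⟩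
    rw [natDegree_eq_of_degree_eq (degree_sub_eq_left_of_degree_lt h1), natDegree_X_pow]
  have hP : P.Monic ∧ P.natDegree = (rs.map List.length).sum := by
    clear h
    induction rs with
    | nil => simp [P]
    | cons r rs ih =>
      simp only [P, List.map_cons, List.prod_cons, List.sum_cons]
      refine ⟨(hm r).1.mul ih.1, ?_⟩
      rw [(hm r).1.natDegree_mul ih.1, (hm r).2, ih.2]
  rw [← hP.2]
  refine Polynomial.card_le_degree_of_subset_roots (Z := S) ?_
  intro y hy
  have hy : y ∈ S := hy
  rw [mem_roots hP.1.ne_zero, IsRoot.def]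
  obtain ⟨r, hr, e⟩ := h y hy
  have : X ^ r.length - evH (X : k[X]) r ∣ P := List.dvd_prod (List.mem_map.mpr ⟨r, hr, rfl⟩)
  refine eval_eq_zero_of_dvd_of_eval_eq_zero this ?_
  simp [eval_evH, e]

open Polynomial in
lemma exists_natCast_of_pow_eq [IsDomain k] (hp : p.Prime) (h : y ^ p = y) :
    ∃ a < p, y = (a : k) := by
  classical
  by_contra! hcon
  have hf : Fact p.Prime := ⟨hp⟩
  let T : Finset k := (Finset.range p).image (fun a : ℕ => (a : k))
  have hT : T.card = p := by
    rw [Finset.card_image_of_injOn, Finset.card_range]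
    intro a ha b hb hab
    simp only [Finset.coe_range, Set.mem_Iio] at ha hb
    have := (CharP.natCast_eq_natCast k p).mp hab
    exact Nat.ModEq.eq_of_lt_of_lt this ha hb
  have hy : y ∉ T := by
    simp only [T, Finset.mem_image, Finset.mem_range, not_exists, not_and]
    intro a ha e; exact hcon a ha e.symm
  have hne : (X ^ p - X : k[X]) ≠ 0 := by
    intro h0
    have := congrArg (fun f : k[X] => f.coeff p) h0
    simp [coeff_X, hp.one_lt.ne] at this
  have hdeg : (X ^ p - X : k[X]).natDegree ≤ p := by
    refine (natDegree_sub_le _ _).trans ?_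
    simp [hp.one_lt.le]
  have := Polynomial.card_le_degree_of_subset_roots (Z := insert y T) (p := (X ^ p - X : k[X])) (by
    intro x hx
    have hx : x ∈ insert y T := hx
    rw [mem_roots hne, IsRoot.def, eval_sub, eval_pow, eval_X, sub_eq_zero]
    rcases Finset.mem_insert.mp hx with rfl | hx
    · exact h
    · simp only [T, Finset.mem_image, Finset.mem_range] at hx
      obtain ⟨a, -, rfl⟩ := hx
      have := map_natCast (frobenius k p) a
      rwa [frobenius_def] at this)
  rw [Finset.card_insert_of_notMem hy, hT] at this
  omega

end HighListsSpec

section GroupPart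

open Equiv

/-- A permutation group of degree 24 with an element of order 23, a fixed-point-free element
and a transposition is the full symmetric group. -/
lemma perm_eq_top {α : Type*} [Fintype α] [DecidableEq α] (hα : Fintype.card α = 24)
    (G : Subgroup (Perm α)) (c : Perm α) (hc : c ∈ G) (hc23 : c ^ 23 = 1) (hc1 : c ≠ 1)
    (τ : Perm α) (hτ : τ ∈ G) (hτ1 : ∀ x, τ x ≠ x) (s : Perm α) (hs : s ∈ G) (hsw : s.IsSwap) :
    G = ⊤ := by
  have ho : orderOf c = 23 := orderOf_eq_prime (hp := ⟨by norm_num⟩) hc23 hc1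
  have hcyc : c.IsCycle := Perm.isCycle_of_prime_order' (by rw [ho]; norm_num) (by rw [ho, hα]; norm_num)
  have hsup : c.support.card = 23 := by rw [← hcyc.orderOf, ho]
  have hcompl : (c.supportᶜ).card = 1 := by rw [Finset.card_compl, hα, hsup]
  obtain ⟨a, ha⟩ := Finset.card_eq_one.mp hcompl
  have hmem : ∀ x, c x ≠ x ↔ x ≠ a := by
    intro x
    have : x ∈ c.supportᶜ ↔ x = a := by rw [ha]; simp
    rw [← not_iff_not]; simpa using this
  have hca : c a = a := by by_contra h; exact (hmem a).mp h rfl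
  -- transitivity on the rest
  have htr : ∀ x y, x ≠ a → y ≠ a → ∃ n : ℤ, (c ^ n) x = y := fun x y hx hy =>
    hcyc.exists_zpow_eq ((hmem x).mpr hx) ((hmem y).mpr hy)
  have hcfix : ∀ n : ℤ, (c ^ n) a = a := fun n => Perm.zpow_apply_eq_self_of_apply_eq_self hca n
  have conj : ∀ g ∈ G, ∀ x y, swap x y ∈ G → swap (g x) (g y) ∈ G := by
    intro g hg x y h
    rw [Equiv.swap_apply_apply]
    exact G.mul_mem (G.mul_mem hg h) (G.inv_mem hg)
  -- a swap involving `a`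
  have h1 : ∃ b, b ≠ a ∧ swap a b ∈ G := by
    obtain ⟨x, y, hxy, rfl⟩ := hsw
    by_cases hx : x = a
    · subst hx; exact ⟨y, hxy.symm, hs⟩
    · have ha' : τ⁻¹ a ≠ a := by
        intro h; exact hτ1 a (by conv_lhs => rw [← h]; simp)
      obtain ⟨n, hn⟩ := htr x (τ⁻¹ a) hx ha'
      have hg : τ * c ^ n ∈ G := G.mul_mem hτ (G.zpow_mem hc n)
      have := conj _ hg x y hs
      have e : (τ * c ^ n) x = a := by rw [Perm.mul_apply, hn]; simp
      rw [e] at this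
      refine ⟨_, ?_, this⟩
      rw [← e]; exact fun h => hxy ((τ * c ^ n).injective h).symm
  obtain ⟨b, hb, hab⟩ := h1
  have h2 : ∀ z, z ≠ a → swap a z ∈ G := by
    intro z hz
    obtain ⟨n, hn⟩ := htr b z hb hz
    have := conj _ (G.zpow_mem hc n) a b hab
    rwa [hn, hcfix] at this
  rw [eq_top_iff, ← Perm.closure_isSwap, Subgroup.closure_le]
  rintro _ ⟨x, y, hxy, rfl⟩
  by_cases hx : x = a
  · subst hx; exact h2 y hxy.symm
  by_cases hy : y = a
  · subst hy; rw [swap_comm]; exact h2 x hx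
  have := conj _ (h2 x hx) a y (h2 y hy)
  rwa [swap_apply_left, swap_apply_of_ne_of_ne hy hxy.symm] at this

end GroupPart

section RootChecks

/-- Evaluation of a coefficient list at a natural number. -/
def evN (x : ℕ) : List ℕ → ℕ
  | [] => 0
  | a :: l => a + x * evN x l

/-- Check that a polynomial has no root modulo `p`. -/
def noRoot (p : ℕ) (l : List ℕ) : Bool :=
  (List.range p).all (fun a => !(Nat.beq (evN a l % p) 0))

lemma evL_natCast {k : Type*} [CommRing k] (a : ℕ) (l : List ℕ) :
    evL (a : k) l = (evN a l : k) := by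
  induction l with
  | nil => simp [evL, evN]
  | cons b l ih => simp [evL, evN, ih]

lemma noRoot_spec {k : Type*} [CommRing k] {p : ℕ} [CharP k p] {l : List ℕ}
    (h : noRoot p l = true) (a : ℕ) (ha : a < p) : evL (a : k) l ≠ 0 := by
  rw [evL_natCast, Ne, CharP.cast_eq_zero_iff k p]
  intro hd
  rw [noRoot, List.all_eq_true] at h
  have := h a (List.mem_range.mpr ha)
  rw [Nat.mod_eq_zero_of_dvd hd] at this
  simp at this

/-- The trinomial `X ^ 24 + A X + B` modulo `p` as a coefficient list. -/
def triL (p : ℕ) (A B : ℤ) : List ℕ :=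
  (B % p).toNat :: (A % p).toNat :: (List.replicate 22 0 ++ [1])

lemma evL_triL {k : Type*} [CommRing k] (p : ℕ) [CharP k p] (hp : 0 < p) (A B : ℤ) (y : k) :
    evL y (triL p A B) = y ^ 24 + A * y + B := by
  simp only [triL, evL, evL_append, evL_replicate, List.length_replicate, cast_toNat_emod p hp]
  push_cast; ring

end RootChecks

section Frob

open Polynomial NumberField

lemma exists_frob (K : Type) [Field K] [i : Algebra ℚ K] [FiniteDimensional ℚ K] [IsGalois ℚ K]
    (p : ℕ) (hp : p.Prime) :
    ∃ (k : Type) (_ : CommRing k) (_ : IsDomain k) (_ : CharP k p) (φ : 𝓞 K →+* k)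
      (σ : K ≃ₐ[ℚ] K), ∀ y z : 𝓞 K, (z : K) = σ (y : K) → φ z = φ y ^ p := by
  have : CharZero K := charZero_of_injective_algebraMap (algebraMap ℚ K).injective
  obtain rfl : i = DivisionRing.toRatAlgebra := Subsingleton.elim _ _
  have : NumberField K := ⟨⟩
  have hf : Fact p.Prime := ⟨hp⟩
  have hp' : Prime (p : ℤ) := Nat.prime_iff_prime_int.mp hp
  let P : Ideal ℤ := Ideal.span {(p : ℤ)}
  have hPp : P.IsPrime := (Ideal.span_singleton_prime hp'.ne_zero).mpr hp'
  have hPb : P ≠ ⊥ := by simp [P, hp.ne_zero]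
  have hPm : P.IsMaximal := hPp.isMaximal hPb
  obtain ⟨Q, hQm, hQP⟩ := Ideal.exists_maximal_ideal_liesOver_of_isIntegral (S := 𝓞 K) P
  have hpQ : ((p : ℕ) : 𝓞 K) ∈ Q := by
    have : (p : ℤ) ∈ Q.under ℤ := by rw [← hQP.over]; exact Ideal.mem_span_singleton_self _
    simpa [Ideal.under, Ideal.mem_comap] using this
  have hQb : Q ≠ ⊥ := by
    rintro rfl
    rw [Ideal.mem_bot, Nat.cast_eq_zero] at hpQ
    exact hp.ne_zero hpQ
  have : Finite (𝓞 K ⧸ Q) := Ideal.finiteQuotientOfFreeOfNeBot Q hQb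
  obtain ⟨σ, hσ⟩ := IsArithFrobAt.exists_of_isInvariant ℤ (K ≃ₐ[ℚ] K) Q
  have hcard : Nat.card (ℤ ⧸ Q.under ℤ) = p := by
    rw [← hQP.over]
    change Nat.card (ℤ ⧸ Ideal.span {(p : ℤ)}) = p
    rw [Nat.card_congr (Int.quotientSpanNatEquivZMod p).toEquiv, Nat.card_zmod]
  have hchar : CharP (𝓞 K ⧸ Q) p := by
    have h0 : ((p : ℕ) : 𝓞 K ⧸ Q) = 0 := by
      have := Ideal.Quotient.eq_zero_iff_mem.mpr hpQ
      simpa using this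
    have : Nontrivial (𝓞 K ⧸ Q) := Ideal.Quotient.nontrivial_iff.mpr hQm.ne_top
    obtain ⟨q, hq⟩ := CharP.exists (𝓞 K ⧸ Q)
    have hqp : q ∣ p := (CharP.cast_eq_zero_iff (𝓞 K ⧸ Q) q p).mp h0
    rcases (Nat.dvd_prime hp).mp hqp with rfl | rfl
    · exact absurd rfl (CharP.char_ne_one (𝓞 K ⧸ Q) 1)
    · exact hq
  refine ⟨𝓞 K ⧸ Q, inferInstance, inferInstance, hchar, Ideal.Quotient.mk Q, σ, ?_⟩
  intro y z hz
  have h1 := hσ y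
  rw [hcard] at h1
  have h2 : z = σ • y := by
    apply RingOfIntegers.ext
    exact hz
  have h3 := Ideal.Quotient.eq.mpr h1
  rw [map_pow] at h3
  rw [h2, ← h3]; rfl

/-- Frobenius permutation on the roots. -/
lemma frob_roots (K : Type) [Field K] [Algebra ℚ K] [FiniteDimensional ℚ K] [IsGalois ℚ K]
    (c : ℤ) (D : ℕ) (hD : D ≠ 0) (h : ℚ[X])
    (hh : h = X ^ 24 + C ((c : ℚ) / D) * (X + 1))
    [Fact ((h.map (algebraMap ℚ K)).Splits)]
    (p : ℕ) (hp : p.Prime)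
    (hdisc : ¬ (p : ℤ) ∣ (c * D ^ 22) ^ 24 * 23 ^ 23 - 24 ^ 24 * (c * D ^ 23) ^ 23) :
    ∃ (k : Type) (_ : CommRing k) (_ : IsDomain k) (_ : CharP k p)
      (red : h.rootSet K → k)
      (π : Equiv.Perm (h.rootSet K)),
      π ∈ (Gal.galActionHom h K).range ∧ Function.Injective red ∧
      (∀ x, red x ^ 24 + ((c * D ^ 22 : ℤ) : k) * red x + ((c * D ^ 23 : ℤ) : k) = 0) ∧
      (∀ x, red (π x) = red x ^ p) := by
  obtain ⟨k, _, _, _, φ, σ, hσ⟩ := exists_frob K p hp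
  have hD' : (D : ℚ) ≠ 0 := by exact_mod_cast hD
  have hroot : ∀ x : h.rootSet K,
      ((D : K) * x) ^ 24 + ((c * D ^ 22 : ℤ) : K) * (D * x)
        + ((c * D ^ 23 : ℤ) : K) = 0 := by
    intro x
    have hx := Polynomial.aeval_eq_zero_of_mem_rootSet x.2
    have hDK : (D : K) ≠ 0 := by
      have := (algebraMap ℚ K).injective.ne hD'
      simpa using this
    have hx : aeval (x : K) (X ^ 24 + C ((c : ℚ) / D) * (X + 1)) = 0 := by rw [← hh]; exact hx
    simp only [map_add, map_mul, map_pow, aeval_X, aeval_C, map_one, map_div₀, map_intCast,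
      map_natCast] at hx
    field_simp at hx
    push_cast
    linear_combination (D : K) ^ 23 * hx
  have hint : ∀ x : h.rootSet K, IsIntegral ℤ ((D : K) * x) := by
    intro x
    refine ⟨X ^ 24 + C (c * D ^ 22) * X + C (c * D ^ 23), ?_, ?_⟩
    · rw [add_assoc]
      refine monic_X_pow_add (lt_of_le_of_lt degree_linear_le (by norm_num))
    · have := hroot x
      rw [eval₂_add, eval₂_add, eval₂_mul, eval₂_pow, eval₂_X, eval₂_C, eval₂_C]
      simpa only [eq_intCast] using this
  let Y : h.rootSet K → 𝓞 K := fun x => ⟨D * x, hint x⟩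
  have hY : ∀ x, Y x ^ 24 + ((c * D ^ 22 : ℤ) : 𝓞 K) * Y x
      + ((c * D ^ 23 : ℤ) : 𝓞 K) = 0 := by
    intro x
    apply RingOfIntegers.ext
    have := hroot x
    simp only [map_add, map_mul, map_pow, map_intCast, map_zero]
    exact this
  have hYinj : Function.Injective Y := by
    intro x x' hxx
    have h1 : (D : K) * x = D * x' := congrArg (fun z : 𝓞 K => (z : K)) hxx
    have hDK : (D : K) ≠ 0 := by
      have := (algebraMap ℚ K).injective.ne hD'
      simpa using this
    exact Subtype.ext (mul_left_cancel₀ hDK h1)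
  have hφ : ∀ x, φ (Y x) ^ 24 + ((c * D ^ 22 : ℤ) : k) * φ (Y x) + ((c * D ^ 23 : ℤ) : k) = 0 := by
    intro x
    have := congrArg φ (hY x)
    simpa only [map_add, map_mul, map_pow, map_intCast, map_zero] using this
  refine ⟨k, inferInstance, inferInstance, inferInstance, fun x => φ (Y x),
    Gal.galActionHom h K (Gal.restrict h K σ), ⟨_, rfl⟩, ?_, hφ, ?_⟩
  · intro x x' hxx
    by_contra hne
    have hne' : Y x - Y x' ≠ 0 := sub_ne_zero.mpr (fun e => hne (hYinj e))
    have e1 := hY x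
    have e2 := hY x'
    generalize ((c * D ^ 22 : ℤ)) = A at *
    generalize ((c * D ^ 23 : ℤ)) = B at *
    have e3 : (Y x - Y x') * (∑ i ∈ Finset.range 24, Y x ^ i * Y x' ^ (24 - 1 - i) + (A : 𝓞 K)) = 0 := by
      have := Commute.mul_geom_sum₂ (Commute.all (Y x) (Y x')) 24
      rw [mul_add, this]
      linear_combination e1 - e2
    have e4 := (mul_eq_zero.mp e3).resolve_left hne'
    have e5 := congrArg φ e4
    have e6 := hφ x
    simp only at hxx
    simp only [map_add, map_sum, map_mul, map_pow, map_intCast, map_zero, ← hxx] at e5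
    simp only [Finset.sum_range_succ, Finset.sum_range_zero] at e5
    generalize φ (Y x) = y at *
    have e7 : 24 * y ^ 23 + (A : k) = 0 := by
      linear_combination e5
    have e8 : 23 * (A : k) * y = - (24 * B) := by linear_combination 24 * e6 - y * e7
    have e9 : ((A ^ 24 * 23 ^ 23 - 24 ^ 24 * B ^ 23 : ℤ) : k) = 0 := by
      have : (23 * (A : k)) ^ 23 * (24 * y ^ 23 + A) = 24 * (23 * (A : k) * y) ^ 23 + 23 ^ 23 * A ^ 24 := by ring
      rw [e7, e8] at this
      push_cast
      linear_combination - this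
    exact hdisc ((CharP.intCast_eq_zero_iff k p _).mp e9)
  · intro x
    apply hσ
    change (D : K) * ((Gal.galActionHom h K (Gal.restrict h K σ) x : h.rootSet K) : K) = σ ((D : K) * x)
    rw [Gal.galActionHom_restrict, map_mul, map_natCast]

end Frob

section Parts

open Equiv

variable {α : Type*} [Fintype α] [DecidableEq α] (hα : Fintype.card α = 24)
  {k : Type*} [CommRing k] [IsDomain k] {p : ℕ} [CharP k p] (hp : p.Prime) {A B : ℤ}
  {red : α → k} {π : Perm α} (hinj : Function.Injective red)
  (hroot : ∀ x, red x ^ 24 + (A : k) * red x + (B : k) = 0)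
  (hfrob : ∀ x, red (π x) = red x ^ p)

include hfrob in
lemma red_pow (n : ℕ) (x : α) : red ((π ^ n) x) = red x ^ (p ^ n) := by
  induction n with
  | zero => simp
  | succ n ih => rw [pow_succ', Perm.mul_apply, hfrob, ih, ← pow_mul, pow_succ]

include hfrob hinj in
lemma pow_fix {d f : ℕ} {r : List ℕ} (hc : frobCheck p d f r = true) (x : α)
    (h : red x ^ r.length = evH (red x) r) : (π ^ d) x = x :=
  hinj (by rw [red_pow hfrob, frobCheck_spec p (red x) hc h])

include hfrob hp in
lemma not_fix {l : List ℕ} (hl : noRoot p l = true) (x : α) (h : evL (red x) l = 0) :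
    π x ≠ x := by
  intro hx
  obtain ⟨a, ha, e⟩ := exists_natCast_of_pow_eq p (red x) hp (by rw [← hfrob, hx])
  rw [e] at h
  exact noRoot_spec hl a ha h

include hinj in
lemma card_bound (S : Finset α) (rs : List (List ℕ))
    (h : ∀ x ∈ S, ∃ r ∈ rs, red x ^ r.length = evH (red x) r) :
    S.card ≤ (rs.map List.length).sum := by
  classical
  rw [← Finset.card_image_of_injective S hinj]
  refine card_le_of_roots rs _ ?_
  intro y hy
  obtain ⟨x, hx, rfl⟩ := Finset.mem_image.mp hy
  exact h x hx

include hα hp hinj hroot hfrob in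
lemma part_cycle {f : ℕ} {r1 r2 : List ℕ} (hfac : facCheck p A B [r1, r2] = true)
    (h1 : frobCheck p 23 (23 * f) r1 = true) (h2 : frobCheck p 23 (23 * f) r2 = true)
    (hl : r1.length < 24) (hn : noRoot p (gOf p r2) = true) : π ^ 23 = 1 ∧ π ≠ 1 := by
  have key : ∀ x, red x ^ r1.length = evH (red x) r1 ∨ red x ^ r2.length = evH (red x) r2 := by
    intro x
    obtain ⟨r, hr, e⟩ := facCheck_spec p (red x) hp.pos hfac (hroot x)
    simp only [List.mem_cons, List.not_mem_nil, or_false] at hr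
    rcases hr with rfl | rfl
    · exact Or.inl e
    · exact Or.inr e
  refine ⟨?_, ?_⟩
  · ext x
    rcases key x with h | h
    · exact pow_fix hinj hfrob h1 x h
    · exact pow_fix hinj hfrob h2 x h
  · rintro rfl
    have := card_bound hinj Finset.univ [r1] (by
      intro x _
      refine ⟨r1, by simp, ?_⟩
      rcases key x with h | h
      · exact h
      · exact absurd rfl (not_fix hp hfrob hn x (by rw [evL_gOf p _ hp.pos, h, sub_self])))
    rw [Finset.card_univ, hα] at this
    simp at this
    omega

include hp hroot hfrob in
lemma part_fpf (hn : noRoot p (triL p A B) = true) (x : α) : π x ≠ x :=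
  not_fix hp hfrob hn x (by rw [evL_triL p hp.pos, hroot])

include hα hp hinj hroot hfrob in
lemma part_swap {f m : ℕ} (hm : Odd m) {q : List ℕ} {rs : List (ℕ × List ℕ)}
    (hfac : facCheck p A B (q :: rs.map Prod.snd) = true)
    (hq : frobCheck p 2 (2 * f) q = true) (hql : q.length = 2) (hn : noRoot p (gOf p q) = true)
    (hrs : ∀ r ∈ rs, r.1 ∣ m ∧ frobCheck p r.1 (r.1 * f) r.2 = true)
    (hl : ((rs.map Prod.snd).map List.length).sum < 24) : (π ^ m).IsSwap := by
  have key : ∀ x, red x ^ q.length = evH (red x) q ∨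
      ∃ r ∈ rs, red x ^ r.2.length = evH (red x) r.2 := by
    intro x
    obtain ⟨r, hr, e⟩ := facCheck_spec p (red x) hp.pos hfac (hroot x)
    rcases List.mem_cons.mp hr with rfl | hr
    · exact Or.inl e
    · obtain ⟨r', hr', rfl⟩ := List.mem_map.mp hr
      exact Or.inr ⟨r', hr', e⟩
  have hfix : ∀ x, (∃ r ∈ rs, red x ^ r.2.length = evH (red x) r.2) → (π ^ m) x = x := by
    rintro x ⟨r, hr, e⟩
    obtain ⟨⟨t, rfl⟩, h2⟩ := hrs r hr
    rw [pow_mul]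
    exact Perm.pow_apply_eq_self_of_apply_eq_self (pow_fix hinj hfrob h2 x e) t
  have hle : (π ^ m).support.card ≤ 2 := by
    have := card_bound hinj (π ^ m).support [q] (by
      intro x hx
      refine ⟨q, by simp, ?_⟩
      rcases key x with h | h
      · exact h
      · exact absurd (hfix x h) (Perm.mem_support.mp hx))
    simpa [hql] using this
  have hne : π ^ m ≠ 1 := by
    intro h1
    have hex : ∃ x, red x ^ q.length = evH (red x) q := by
      by_contra! hcon
      have := card_bound hinj Finset.univ (rs.map Prod.snd) (by
        intro x _
        obtain ⟨r, hr, e⟩ := (key x).resolve_left (hcon x)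
        exact ⟨r.2, List.mem_map.mpr ⟨r, hr, rfl⟩, e⟩)
      rw [Finset.card_univ, hα] at this
      omega
    obtain ⟨x, hx⟩ := hex
    have hx2 := pow_fix hinj hfrob hq x hx
    obtain ⟨t, rfl⟩ := hm
    have h3 : (π ^ (2 * t + 1)) x = x := by rw [h1]; rfl
    rw [pow_succ', Perm.mul_apply, pow_mul,
      Perm.pow_apply_eq_self_of_apply_eq_self hx2 t] at h3
    exact not_fix hp hfrob hn x (by rw [evL_gOf p _ hp.pos, hx, sub_self]) h3
  rw [← Perm.card_support_eq_two]
  have h0 : (π ^ m).support.card ≠ 0 := by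
    rw [Ne, Finset.card_eq_zero, Perm.support_eq_empty_iff]; exact hne
  have h1 := Perm.card_support_ne_one (π ^ m)
  omega

end Parts

section Main

open Polynomial

/-- The discriminant of the trinomial, up to sign. -/
def discT (c : ℤ) (D : ℕ) : ℤ := (c * D ^ 22) ^ 24 * 23 ^ 23 - 24 ^ 24 * (c * D ^ 23) ^ 23

lemma natDegree_tri (t : ℚ) : (X ^ 24 + C t * (X + 1) : ℚ[X]).natDegree = 24 := by
  compute_degree!

lemma disc_aux {K : Type*} [Field K] [CharZero K] (c : ℤ) (D : ℕ) (x : K)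
    (h1 : x ^ 24 * D + c * (x + 1) = 0) (h2 : D * 24 * x ^ 23 + c = 0) : discT c D = 0 := by
  have e6 : ((D : K) * x) ^ 24 + ((c * D ^ 22 : ℤ) : K) * (D * x) + ((c * D ^ 23 : ℤ) : K) = 0 := by
    push_cast; linear_combination (D : K) ^ 23 * h1
  have e7 : 24 * ((D : K) * x) ^ 23 + ((c * D ^ 22 : ℤ) : K) = 0 := by
    push_cast; linear_combination (D : K) ^ 22 * h2
  rw [discT]
  generalize ((c * D ^ 22 : ℤ)) = A at *
  generalize ((c * D ^ 23 : ℤ)) = B at *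
  generalize (D : K) * x = y at *
  have e8 : 23 * (A : K) * y = - (24 * B) := by linear_combination 24 * e6 - y * e7
  have e9 : ((A ^ 24 * 23 ^ 23 - 24 ^ 24 * B ^ 23 : ℤ) : K) = 0 := by
    have : (23 * (A : K)) ^ 23 * (24 * y ^ 23 + A) =
        24 * (23 * (A : K) * y) ^ 23 + 23 ^ 23 * A ^ 24 := by ring
    rw [e7, e8] at this
    push_cast
    linear_combination - this
  exact_mod_cast e9

lemma separable_tri (c : ℤ) (D : ℕ) (hD : D ≠ 0) (h0 : discT c D ≠ 0) :
    (X ^ 24 + C ((c : ℚ) / D) * (X + 1) : ℚ[X]).Separable := by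
  rw [separable_def, isCoprime_iff_aeval_ne_zero_of_isAlgClosed ℚ (AlgebraicClosure ℚ)]
  intro x
  by_contra! hcon
  obtain ⟨h1, h2⟩ := hcon
  have hDK : (D : AlgebraicClosure ℚ) ≠ 0 := by exact_mod_cast hD
  simp only [derivative_mul, derivative_X_pow, derivative_X, derivative_C,
    derivative_one, map_add, map_mul, map_pow, aeval_X, aeval_C, map_one, map_div₀, map_intCast,
    map_natCast, map_zero] at h1 h2
  field_simp at h1 h2
  exact h0 (disc_aux c D x (by linear_combination h1)
    (by norm_num at h2; linear_combination h2))

lemma isGalois_splitting (F : Type*) [Field F] [CharZero F] (f : F[X]) :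
    IsGalois F f.SplittingField := ⟨⟩

theorem gal_of_certs (c : ℤ) (D : ℕ) (hD : D ≠ 0) (h : ℚ[X])
    (hh : h = X ^ 24 + C ((c : ℚ) / D) * (X + 1)) (f1 f2 : ℕ)
    (p1 : ℕ) (hp1 : p1.Prime) (hd1 : ¬ (p1 : ℤ) ∣ discT c D) (r1 r2 : List ℕ)
    (hfac1 : facCheck p1 (c * D ^ 22) (c * D ^ 23) [r1, r2] = true)
    (hf1 : frobCheck p1 23 (23 * f1) r1 = true) (hf2 : frobCheck p1 23 (23 * f1) r2 = true)
    (hl1 : r1.length < 24) (hn1 : noRoot p1 (gOf p1 r2) = true)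
    (p0 : ℕ) (hp0 : p0.Prime) (hd0 : ¬ (p0 : ℤ) ∣ discT c D)
    (hn0 : noRoot p0 (triL p0 (c * D ^ 22) (c * D ^ 23)) = true)
    (p2 : ℕ) (hp2 : p2.Prime) (hd2 : ¬ (p2 : ℤ) ∣ discT c D)
    (m : ℕ) (hm : Odd m) (q : List ℕ) (rs : List (ℕ × List ℕ))
    (hfac2 : facCheck p2 (c * D ^ 22) (c * D ^ 23) (q :: rs.map Prod.snd) = true)
    (hq : frobCheck p2 2 (2 * f2) q = true) (hql : q.length = 2) (hn2 : noRoot p2 (gOf p2 q) = true)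
    (hrs : ∀ r ∈ rs, r.1 ∣ m ∧ frobCheck p2 r.1 (r.1 * f2) r.2 = true)
    (hl2 : ((rs.map Prod.snd).map List.length).sum < 24) :
    Nonempty (h.Gal ≃* Equiv.Perm (Fin 24)) := by
  classical
  have hgal : IsGalois ℚ h.SplittingField := isGalois_splitting ℚ h
  have hspl : (h.map (algebraMap ℚ h.SplittingField)).Splits := SplittingField.splits h
  have hfact : Fact ((h.map (algebraMap ℚ h.SplittingField)).Splits) := ⟨hspl⟩
  have h0 : discT c D ≠ 0 := fun e => hd1 (e ▸ dvd_zero _)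
  have hsep : h.Separable := hh ▸ separable_tri c D hD h0
  have hα : Fintype.card (h.rootSet h.SplittingField) = 24 := by
    rw [card_rootSet_eq_natDegree hsep hspl, hh, natDegree_tri]
  obtain ⟨_, _, _, _, _, π1, hπ1, i1, e1, g1⟩ := frob_roots h.SplittingField c D hD h hh p1 hp1 hd1
  obtain ⟨_, _, _, _, _, π0, hπ0, i0, e0, g0⟩ := frob_roots h.SplittingField c D hD h hh p0 hp0 hd0
  obtain ⟨_, _, _, _, _, π2, hπ2, i2, e2, g2⟩ := frob_roots h.SplittingField c D hD h hh p2 hp2 hd2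
  obtain ⟨a, b⟩ := part_cycle hα hp1 i1 e1 g1 hfac1 hf1 hf2 hl1 hn1
  have htop := perm_eq_top hα (Gal.galActionHom h h.SplittingField).range π1 hπ1 a b π0 hπ0
    (part_fpf hp0 e0 g0 hn0) (π2 ^ m) (Subgroup.pow_mem _ hπ2 m)
    (part_swap hα hp2 i2 e2 g2 hm hfac2 hq hql hn2 hrs hl2)
  have hbij : Function.Bijective (Gal.galActionHom h h.SplittingField) :=
    ⟨Gal.galActionHom_injective h h.SplittingField, MonoidHom.range_eq_top.mp htop⟩
  exact ⟨(MulEquiv.ofBijective _ hbij).trans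
    (Equiv.permCongrHom (Fintype.equivFinOfCardEq hα))⟩

end Main

section Instances

lemma gal_h1 : Nonempty (h1Prof.Gal ≃* Equiv.Perm (Fin 24)) := by
  refine gal_of_certs (2 ^ 64 * 3 ^ 23) (23 ^ 23 * 31 * 281 * 1201 * 70529 * 9801219477271)
    (by norm_num) h1Prof
    (by rw [h1Prof]; congr 3; norm_num) 7 4
    67 (by norm_num) (by decide +kernel)
    [29]
    [38, 30, 66, 38, 30, 66, 38, 30, 66, 38, 30, 66, 38, 30, 66, 38, 30, 66, 38, 30, 66, 38, 46]
    (by decide +kernel) (by decide +kernel) (by decide +kernel) (by decide +kernel)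
    (by decide +kernel)
    5 (by norm_num) (by decide +kernel) (by decide +kernel)
    13 (by norm_num) (by decide +kernel) 21 (by decide)
    [8, 4]
    [(1, [7]),
      (21, [11, 9, 7, 5, 5, 9, 8, 6, 7, 11, 10, 6, 3, 12, 12, 5, 12, 0, 3, 8, 3])]
    (by decide +kernel) (by decide +kernel) (by decide +kernel) (by decide +kernel)
    (by decide +kernel) (by decide +kernel)

lemma gal_h2 : Nonempty (h2Prof.Gal ≃* Equiv.Perm (Fin 24)) := by
  refine gal_of_certs (-(2 ^ 75 * 3 ^ 14 * 31 * 281 * 1201 * 70529 * 9801219477271)) (7 ^ 2 * 23 ^ 22 * 195574568093355782014153 ^ 2)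
    (by norm_num) h2Prof
    (by rw [h2Prof]; rw [sub_eq_add_neg, ← neg_mul, ← C_neg]; congr 3; norm_num) 8 6
    149 (by norm_num) (by decide +kernel)
    [48]
    [101, 80, 115, 7, 38, 36, 89, 100, 32, 46, 122, 45, 74, 125, 40, 132, 78, 19, 18, 119, 50, 16, 105]
    (by decide +kernel) (by decide +kernel) (by decide +kernel) (by decide +kernel)
    (by decide +kernel)
    19 (by norm_num) (by decide +kernel) (by decide +kernel)
    61 (by norm_num) (by decide +kernel) 57 (by decide)
    [11, 15]
    [(3, [16, 16, 2]),
      (19, [34, 26, 29, 35, 34, 39, 34, 0, 15, 40, 51, 59, 60, 0, 14, 30, 17, 42, 27])]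
    (by decide +kernel) (by decide +kernel) (by decide +kernel) (by decide +kernel)
    (by decide +kernel) (by decide +kernel)

lemma gal_h3 : Nonempty (h3Prof.Gal ≃* Equiv.Perm (Fin 24)) := by
  refine gal_of_certs (-(2 ^ 72 * 3 ^ 24 * 7 * 1437417619559484462138047)) (23 ^ 22)
    (by norm_num) h3Prof
    (by rw [h3Prof]; rw [sub_eq_add_neg, ← neg_mul, ← C_neg]; congr 3; norm_num) 8 5
    139 (by norm_num) (by decide +kernel)
    [90]
    [49, 101, 55, 85, 5, 33, 51, 3, 131, 114, 113, 23, 124, 40, 125, 130, 24, 75, 78, 70, 45, 19, 20]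
    (by decide +kernel) (by decide +kernel) (by decide +kernel) (by decide +kernel)
    (by decide +kernel)
    5 (by norm_num) (by decide +kernel) (by decide +kernel)
    17 (by norm_num) (by decide +kernel) 91 (by decide)
    [14, 7]
    [(1, [1, 5]),
      (7, [4, 6, 2, 3, 11, 11, 11]),
      (13, [15, 1, 16, 15, 14, 11, 13, 4, 9, 1, 9, 16, 10])]
    (by decide +kernel) (by decide +kernel) (by decide +kernel) (by decide +kernel)
    (by decide +kernel) (by decide +kernel)

end Instances


/-- For each `i ∈ {1, 2, 3}`, the Galois group over `ℚ` of (the splitting field of) `hᵢ`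
is isomorphic to the symmetric group `S24`. -/
theorem hi_galois :
    Nonempty (h1Prof.Gal ≃* Equiv.Perm (Fin 24)) ∧
    Nonempty (h2Prof.Gal ≃* Equiv.Perm (Fin 24)) ∧
    Nonempty (h3Prof.Gal ≃* Equiv.Perm (Fin 24)) := by
  exact ⟨gal_h1, gal_h2, gal_h3⟩
end

section
/- Let f = X^24 - 24X^22 + 8X^21 + 252X^20 - 168X^19 - 1484X^18 - 627X^17 + 26628X^16 - 97918X^15 + 199671X^14 - 266679X^13 + 234997X^12 - 114681X^11 - 10107X^10 + 63686X^9 - 45384X^8 + 6819X^7 + 12880X^6 - 12096X^5 + 5502X^4 - 1504X^3 + 252X^2 - 24X + 1 and g = X^24 + (3852443469645611961262219752967766016/384257037754753807138505851908147025)(X^2 + 1), both in Q[X], and let L be the splitting field of f·g over Q. Then L contains a unique subfield of degree 2 over Q, namely Q(√(7 · 1437417619559484462138047)). -/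
open Polynomial

/-- The degree-`24` polynomial `f` with Galois group `(C3 ≀ S8)^°`. -/
noncomputable def fRubik : ℚ[X] :=
  X ^ 24 - 24 * X ^ 22 + 8 * X ^ 21 + 252 * X ^ 20 - 168 * X ^ 19 - 1484 * X ^ 18
    - 627 * X ^ 17 + 26628 * X ^ 16 - 97918 * X ^ 15 + 199671 * X ^ 14
    - 266679 * X ^ 13 + 234997 * X ^ 12 - 114681 * X ^ 11 - 10107 * X ^ 10
    + 63686 * X ^ 9 - 45384 * X ^ 8 + 6819 * X ^ 7 + 12880 * X ^ 6 - 12096 * X ^ 5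
    + 5502 * X ^ 4 - 1504 * X ^ 3 + 252 * X ^ 2 - 24 * X + 1

/-- The polynomial `g = X^24 + (3852443469645611961262219752967766016 /
384257037754753807138505851908147025) (X^2 + 1)`. -/
noncomputable def gRubik : ℚ[X] :=
  X ^ 24 +
    C ((3852443469645611961262219752967766016 : ℚ) /
      384257037754753807138505851908147025) * (X ^ 2 + 1)

theorem exists_frob_s19 (L : Type) [Field L] [NumberField L] [IsGalois ℚ L] (p : ℕ) [Fact p.Prime] :
    ∃ (σ : L ≃ₐ[ℚ] L) (κ : Type) (_ : Field κ) (_ : CharP κ p)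
      (red : NumberField.RingOfIntegers L →+* κ), ∀ b, red (σ • b) = red b ^ p := by
  classical
  have hp : p.Prime := Fact.out
  let P : Ideal ℤ := Ideal.span {(p : ℤ)}
  have hPp : P.IsPrime := (Ideal.span_singleton_prime (by exact_mod_cast hp.ne_zero)).2
    (Nat.prime_iff_prime_int.1 hp)
  have hP0 : P ≠ ⊥ := by
    simpa [P, Ideal.span_singleton_eq_bot] using hp.ne_zero
  have hPm : P.IsMaximal := hPp.isMaximal hP0
  obtain ⟨Q, hQ, hover⟩ := Ideal.exists_maximal_ideal_liesOver_of_isIntegral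
    (S := NumberField.RingOfIntegers L) P
  have hQ0 : Q ≠ ⊥ := Ideal.ne_bot_of_liesOver_of_ne_bot hP0 Q
  have : Finite (NumberField.RingOfIntegers L ⧸ Q) := Ideal.finiteQuotientOfFreeOfNeBot Q hQ0
  have : IsGaloisGroup (L ≃ₐ[ℚ] L) ℤ (NumberField.RingOfIntegers L) :=
    IsGaloisGroup.of_isFractionRing (L ≃ₐ[ℚ] L) ℤ (NumberField.RingOfIntegers L) ℚ L
  obtain ⟨σ, hσ⟩ := IsArithFrobAt.exists_of_isInvariant ℤ (L ≃ₐ[ℚ] L) Q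
  have hcard : Nat.card (ℤ ⧸ Q.under ℤ) = p := by
    rw [← hover.over]
    rw [Nat.card_congr (Int.quotientSpanEquivZMod p).toEquiv]
    simp
  refine ⟨σ, NumberField.RingOfIntegers L ⧸ Q, Ideal.Quotient.field Q, ?_, Ideal.Quotient.mk Q, ?_⟩
  · have h0 : ((p : ℕ) : NumberField.RingOfIntegers L ⧸ Q) = 0 := by
      have : algebraMap ℤ (NumberField.RingOfIntegers L) p ∈ Q := by
        rw [← Ideal.mem_comap, ← Ideal.under_def, ← hover.over]
        exact Ideal.mem_span_singleton_self _
      rw [← Ideal.Quotient.eq_zero_iff_mem] at this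
      simpa using this
    exact (CharP.charP_iff_prime_eq_zero hp).2 h0
  · intro b
    have := AlgHom.IsArithFrobAt.mk_apply hσ b
    rw [hcard] at this
    exact this

section PermPart
open Equiv


theorem perm_top {n : ℕ} (H : Subgroup (Perm (Fin n))) (c e s : Perm (Fin n)) (hc : c ∈ H)
    (he : e ∈ H) (hs : s ∈ H) (x0 : Fin n) (hcx : ∀ x, c x = x ↔ x = x0) (hcyc : c.IsCycle)
    (hef : ∀ x, e x ≠ x) (hsw : s.IsSwap) : H = ⊤ := by
  have htr : ∀ y, ∃ g ∈ H, g y = x0 := by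
    intro y
    by_cases hy : y = x0
    · exact ⟨1, H.one_mem, by simp [hy]⟩
    have h1 : e⁻¹ x0 ≠ x0 := fun h => hef x0 (by
      conv_lhs => rw [← h]
      simp)
    obtain ⟨i, hi⟩ := hcyc.exists_pow_eq (x := y) (y := e⁻¹ x0) (by simpa [hcx] using hy)
      (by simpa [hcx] using h1)
    exact ⟨e * c ^ i, H.mul_mem he (H.pow_mem hc i), by simp [hi]⟩
  obtain ⟨a, b, hab, rfl⟩ := hsw
  have hconj : ∀ g ∈ H, ∀ x y, swap x y ∈ H → swap (g x) (g y) ∈ H := by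
    intro g hg x y hxy
    rw [Equiv.swap_apply_apply]
    exact H.mul_mem (H.mul_mem hg hxy) (H.inv_mem hg)
  obtain ⟨g, hg, hga⟩ := htr a
  have h2 : ∀ y, swap x0 y ∈ H := by
    intro y
    by_cases hy : y = x0
    · subst hy
      rw [swap_self]
      exact H.one_mem
    have h3 := hconj g hg a b hs
    rw [hga] at h3
    have h4 : g b ≠ x0 := by
      rw [← hga]
      exact fun h => hab (g.injective h).symm
    obtain ⟨i, hi⟩ := hcyc.exists_pow_eq (x := g b) (y := y) (by simpa [hcx] using h4)
      (by simpa [hcx] using hy)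
    have h5 := hconj (c ^ i) (H.pow_mem hc i) _ _ h3
    rw [hi] at h5
    have h6 : (c ^ i) x0 = x0 := Perm.pow_apply_eq_self_of_apply_eq_self ((hcx x0).2 rfl) i
    rwa [h6] at h5
  rw [eq_top_iff, ← Perm.closure_isSwap, Subgroup.closure_le]
  rintro _ ⟨x, y, hxy, rfl⟩
  by_cases hx : x = x0
  · rw [hx]; exact h2 y
  by_cases hy : y = x0
  · rw [hy, swap_comm]; exact h2 x
  have := hconj _ (h2 x) x0 y (h2 y)
  rwa [swap_apply_left, swap_apply_of_ne_of_ne hy (Ne.symm hxy)] at this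

theorem alt_le {n : ℕ} (H : Subgroup (Perm (Fin n))) [hN : H.Normal] (c : Perm (Fin n)) (hc : c ∈ H)
    (x0 y : Fin n) (hx : c x0 = x0) (hy : c y ≠ y) : alternatingGroup (Fin n) ≤ H := by
  have hy0 : y ≠ x0 := by rintro rfl; exact hy hx
  have hcy0 : c y ≠ x0 := by
    intro h
    apply hy0
    apply c.injective
    rw [h, hx]
  have hmem : swap x0 (c y) * swap x0 y ∈ H := by
    have h1 : swap x0 (c y) = c * swap x0 y * c⁻¹ := by
      conv_lhs => rw [← hx]
      exact Equiv.swap_apply_apply _ _ _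
    rw [h1]
    have h2 := H.mul_mem hc (hN.conj_mem _ (H.inv_mem hc) (swap x0 y))
    rw [swap_inv] at h2
    simpa [mul_assoc] using h2
  have h3 : (swap x0 (c y) * swap x0 y).IsThreeCycle :=
    Perm.isThreeCycle_swap_mul_swap_same hcy0.symm hy0.symm hy
  rw [← Perm.closure_three_cycles_eq_alternating, Subgroup.closure_le]
  intro g hg
  have : IsConj (swap x0 (c y) * swap x0 y) g := Perm.isConj_iff_cycleType_eq.2 (by
    rw [h3.cycleType, Perm.IsThreeCycle.cycleType hg])
  obtain ⟨u, hu⟩ := isConj_iff.1 this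
  rw [SetLike.mem_coe, ← hu]
  exact hN.conj_mem _ hmem u

/-- Local behaviour of a Frobenius element: a block `S` of prime size `d`. -/
def FrobType {n : ℕ} (π : Perm (Fin n)) (d m : ℕ) : Prop :=
  ∃ S : Finset (Fin n), S.card = d ∧ (∀ i ∈ S, (π ^ d) i = i ∧ π i ≠ i) ∧ ∀ i ∉ S, (π ^ m) i = i

theorem pow_fix_s19 {α : Type*} {π : Perm α} {i : α} {a b : ℕ} (h : (π ^ a) i = i) (hab : a ∣ b) :
    (π ^ b) i = i := by
  obtain ⟨c, rfl⟩ := hab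
  rw [pow_mul]
  exact Perm.pow_apply_eq_self_of_apply_eq_self h c

theorem pow_move {α : Type*} {π : Perm α} {i : α} {a b : ℕ} (h : (π ^ a) i = i) (h1 : π i ≠ i)
    (hab : Nat.Coprime a b) : (π ^ b) i ≠ i := by
  intro h2
  apply h1
  have e1 : Function.IsPeriodicPt π a i := by
    rw [Function.IsPeriodicPt, Function.IsFixedPt, ← Perm.coe_pow]; exact h
  have e2 : Function.IsPeriodicPt π b i := by
    rw [Function.IsPeriodicPt, Function.IsFixedPt, ← Perm.coe_pow]; exact h2
  have := e1.gcd e2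
  rw [hab] at this
  simpa [Function.IsPeriodicPt, Function.IsFixedPt] using this

theorem FrobType.pow_eq_one {n : ℕ} {π : Perm (Fin n)} {d m b : ℕ} (h : FrobType π d m)
    (h1 : d ∣ b) (h2 : m ∣ b) : π ^ b = 1 := by
  obtain ⟨S, hS, hin, hout⟩ := h
  ext1 i
  by_cases hi : i ∈ S
  · exact pow_fix_s19 (hin i hi).1 h1
  · exact pow_fix_s19 (hout i hi) h2

theorem FrobType.supp {n : ℕ} {π : Perm (Fin n)} {d m b : ℕ} (h : FrobType π d m)
    (h1 : d.Coprime b) (h2 : m ∣ b) : (π ^ b).support.card = d := by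
  obtain ⟨S, hS, hin, hout⟩ := h
  rw [← hS]
  congr 1
  ext i
  rw [Perm.mem_support]
  constructor
  · intro h
    by_contra hi
    exact h (pow_fix_s19 (hout i hi) h2)
  · intro hi
    exact pow_move (hin i hi).1 (hin i hi).2 h1

theorem FrobType.cyc {d : ℕ} {π : Perm (Fin (d + 1))} {b : ℕ} (hd : d.Prime)
    (h : FrobType π d 1) (h1 : d.Coprime b) :
    (π ^ b).IsCycle ∧ ∃ x0, ∀ x, (π ^ b) x = x ↔ x = x0 := by
  have hs := h.supp h1 (one_dvd _)
  have ho : orderOf (π ^ b) = d := by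
    have := Fact.mk hd
    apply orderOf_eq_prime
    · rw [← pow_mul]
      exact h.pow_eq_one (Dvd.intro_left b rfl) (one_dvd _)
    · intro h0
      rw [h0] at hs
      simp at hs
      exact hd.ne_zero hs.symm
  refine ⟨Perm.isCycle_of_prime_order (by rwa [ho]) ?_, ?_⟩
  · rw [hs, ho]
    have := hd.pos
    omega
  · have h2 : ((π ^ b).supportᶜ).card = 1 := by
      rw [Finset.card_compl, hs]; simp
    obtain ⟨x0, hx0⟩ := Finset.card_eq_one.1 h2
    refine ⟨x0, fun x => ?_⟩
    rw [← Finset.mem_singleton (a := x0), ← hx0]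
    simp

theorem group_core {G : Type*} [Group G] (ρ : G →* Perm (Fin 8)) (τ : G →* Perm (Fin 12))
    (N : Subgroup G) [hN : N.Normal] (hsq : ∀ g : G, g ^ 2 ∈ N)
    (e a b : G) (he : ∀ i, ρ e i ≠ i) (he' : ∀ i, τ e i ≠ i)
    (ha : FrobType (ρ a) 7 1) (ha' : FrobType (τ a) 11 1)
    (hb : FrobType (ρ b) 2 3) (hb' : FrobType (τ b) 2 9) :
    Function.Surjective ρ ∧ Function.Surjective τ ∧
    ∀ s, Perm.sign (ρ s) = 1 → Perm.sign (τ s) = 1 → ∃ u ∈ N, ρ (s * u) = 1 ∧ τ (s * u) = 1 := by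
  have hpow : ∀ k : ℕ, a ^ (2 * k) ∈ N := fun k => by
    rw [mul_comm, pow_mul]; exact hsq _
  obtain ⟨hc, x0, hx0⟩ := ha.cyc (b := 22) (by norm_num) (by norm_num)
  obtain ⟨hc', y0, hy0⟩ := ha'.cyc (b := 14) (by norm_num) (by norm_num)
  have hsurj : Function.Surjective ρ := by
    rw [← MonoidHom.range_eq_top]
    refine perm_top _ (ρ a ^ 22) (ρ e) (ρ b ^ 9) ⟨a ^ 22, map_pow _ _ _⟩ ⟨e, rfl⟩
      ⟨b ^ 9, map_pow _ _ _⟩ x0 hx0 hc he ?_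
    rw [← Perm.card_support_eq_two]
    exact hb.supp (by norm_num) (by norm_num)
  have hsurj' : Function.Surjective τ := by
    rw [← MonoidHom.range_eq_top]
    refine perm_top _ (τ a ^ 14) (τ e) (τ b ^ 9) ⟨a ^ 14, map_pow _ _ _⟩ ⟨e, rfl⟩
      ⟨b ^ 9, map_pow _ _ _⟩ y0 hy0 hc' he' ?_
    rw [← Perm.card_support_eq_two]
    exact hb'.supp (by norm_num) (by norm_num)
  refine ⟨hsurj, hsurj', ?_⟩
  have hA : alternatingGroup (Fin 8) ≤ (N ⊓ τ.ker).map ρ := by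
    have : ((N ⊓ τ.ker).map ρ).Normal := Subgroup.Normal.map inferInstance _ hsurj
    obtain ⟨y, hy⟩ : ∃ y, (ρ a ^ 22) y ≠ y := by
      obtain ⟨y, hy, -⟩ := hc
      exact ⟨y, hy⟩
    refine alt_le _ (ρ a ^ 22) ⟨a ^ 22, ⟨hpow 11, ?_⟩, map_pow _ _ _⟩ x0 y ((hx0 x0).2 rfl) hy
    change _ ∈ MonoidHom.ker _
    rw [MonoidHom.mem_ker, map_pow]
    exact ha'.pow_eq_one (by norm_num) (by norm_num)
  have hA' : alternatingGroup (Fin 12) ≤ (N ⊓ ρ.ker).map τ := by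
    have : ((N ⊓ ρ.ker).map τ).Normal := Subgroup.Normal.map inferInstance _ hsurj'
    obtain ⟨y, hy⟩ : ∃ y, (τ a ^ 14) y ≠ y := by
      obtain ⟨y, hy, -⟩ := hc'
      exact ⟨y, hy⟩
    refine alt_le _ (τ a ^ 14) ⟨a ^ 14, ⟨hpow 7, ?_⟩, map_pow _ _ _⟩ y0 y ((hy0 y0).2 rfl) hy
    change _ ∈ MonoidHom.ker _
    rw [MonoidHom.mem_ker, map_pow]
    exact ha.pow_eq_one (by norm_num) (by norm_num)
  intro s h1 h2
  obtain ⟨u, ⟨hu1, hu2⟩, hu3⟩ := hA (Perm.mem_alternatingGroup.2 h1)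
  obtain ⟨v, ⟨hv1, hv2⟩, hv3⟩ := hA' (Perm.mem_alternatingGroup.2 h2)
  change _ ∈ MonoidHom.ker _ at hu2 hv2
  rw [MonoidHom.mem_ker] at hu2 hv2
  refine ⟨u⁻¹ * v⁻¹, N.mul_mem (N.inv_mem hu1) (N.inv_mem hv1), ?_, ?_⟩
  · simp [hu3, hv2]
  · simp [hv3, hu2]

/-- Evaluation of a coefficient list (lowest coefficient first). -/
def lev {κ : Type*} [CommRing κ] (x : κ) : List ℕ → κ
  | [] => 0
  | a :: l => (a : κ) + x * lev x l

/-- Sum of coefficient lists modulo `p`. -/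
def ladd (p : ℕ) : List ℕ → List ℕ → List ℕ
  | [], l => l
  | a :: l, [] => a :: l
  | a :: l, b :: m => (a + b) % p :: ladd p l m

/-- Scalar multiple modulo `p`. -/
def lsmul (p c : ℕ) : List ℕ → List ℕ
  | [] => []
  | a :: l => (c * a) % p :: lsmul p c l

/-- Product modulo `p`. -/
def lmul (p : ℕ) : List ℕ → List ℕ → List ℕ
  | [], _ => []
  | a :: l, m => ladd p (lsmul p a m) (0 :: lmul p l m)

/-- Reduction of a list of length `d + 1` using `x ^ d = lev x r`. -/
def lred (p d : ℕ) (r w : List ℕ) : List ℕ :=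
  match w.drop d with
  | [c] => ladd p (w.take d) (lsmul p c r)
  | _ => w

/-- Product modulo `p` and modulo `X ^ d - r`. -/
def lmulmod (p d : ℕ) (r : List ℕ) : List ℕ → List ℕ → List ℕ
  | [], _ => []
  | a :: l, m => ladd p (lsmul p a m) (lred p d r (0 :: lmulmod p d r l m))

/-- Powers by binary expansion (most significant bit first). -/
def lpow (p d : ℕ) (r : List ℕ) : List Bool → List ℕ → List ℕ
  | [], acc => acc
  | b :: l, acc =>
    let s := lmulmod p d r acc acc
    lpow p d r l (if b then lred p d r (0 :: s) else s)

/-- The exponent belonging to `lpow`. -/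
def lexpo : List Bool → ℕ → ℕ
  | [], e => e
  | b :: l, e => lexpo l (if b then e * 2 + 1 else e * 2)

section
variable {κ : Type*} [Field κ] {p : ℕ} [CharP κ p] (x : κ)

theorem cast_mod' (a : ℕ) : ((a % p : ℕ) : κ) = a := by
  conv_rhs => rw [← Nat.mod_add_div a p]
  simp

theorem lev_ladd (l m : List ℕ) : lev x (ladd p l m) = lev x l + lev x m := by
  induction l generalizing m with
  | nil => simp [ladd, lev]
  | cons a l ih =>
    cases m with
    | nil => simp [ladd, lev]
    | cons b m =>
      simp only [ladd, lev, ih, cast_mod']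
      push_cast
      ring

theorem lev_lsmul (c : ℕ) (l : List ℕ) : lev x (lsmul p c l) = c * lev x l := by
  induction l with
  | nil => simp [lsmul, lev]
  | cons a l ih =>
    simp only [lsmul, lev, ih, cast_mod']
    push_cast
    ring

theorem lev_lmul (l m : List ℕ) : lev x (lmul p l m) = lev x l * lev x m := by
  induction l with
  | nil => simp [lmul, lev]
  | cons a l ih =>
    simp only [lmul, lev, ih, lev_ladd, lev_lsmul]
    push_cast
    ring

theorem lev_take_drop (d : ℕ) (w : List ℕ) (h : d ≤ w.length) :
    lev x w = lev x (w.take d) + x ^ d * lev x (w.drop d) := by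
  induction d generalizing w with
  | zero => simp [lev]
  | succ d ih =>
    cases w with
    | nil => simp at h
    | cons a w =>
      simp only [List.take_succ_cons, List.drop_succ_cons, lev]
      rw [ih w (by simpa using h)]
      ring

variable {x}

theorem lev_lred {d : ℕ} {r : List ℕ} (hx : x ^ d = lev x r) (w : List ℕ) :
    lev x (lred p d r w) = lev x w := by
  unfold lred
  split
  · rename_i c hc
    have hd : d ≤ w.length := by
      by_contra h
      rw [List.drop_of_length_le (by omega)] at hc
      simp at hc
    rw [lev_take_drop x d w hd, hc, lev_ladd, lev_lsmul, hx]
    simp [lev, mul_comm]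
  · rfl

theorem lev_lmulmod {d : ℕ} {r : List ℕ} (hx : x ^ d = lev x r) (l m : List ℕ) :
    lev x (lmulmod p d r l m) = lev x l * lev x m := by
  induction l with
  | nil => simp [lmulmod, lev]
  | cons a l ih =>
    simp only [lmulmod, lev, ih, lev_ladd, lev_lsmul, lev_lred hx]
    push_cast
    ring

theorem lev_lpow {d : ℕ} {r : List ℕ} (hx : x ^ d = lev x r) (bs : List Bool) (acc : List ℕ)
    (e : ℕ) (h : lev x acc = x ^ e) : lev x (lpow p d r bs acc) = x ^ lexpo bs e := by
  induction bs generalizing acc e with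
  | nil => simpa [lpow, lexpo] using h
  | cons b l ih =>
    simp only [lpow, lexpo]
    apply ih
    cases b
    · simp only [Bool.false_eq_true, if_false, lev_lmulmod hx, h]
      ring
    · simp only [if_true, lev_lred hx, lev, lev_lmulmod hx, h]
      push_cast
      ring

/-- Certificate for `x ^ E = lev x t` whenever `x ^ d = lev x r`. -/
theorem pow_cert (d : ℕ) (r : List ℕ) (bs : List Bool) (E : ℕ) (t : List ℕ)
    (h1 : lexpo bs 0 = E) (h2 : lpow p d r bs [1] = t) (hx : x ^ d = lev x r) :
    x ^ E = lev x t := by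
  have := lev_lpow (p := p) hx bs [1] 0 (by simp [lev])
  rw [h1, h2] at this
  exact this.symm

/-- Elements fixed by Frobenius come from the prime field. -/
theorem exists_nat_of_pow [Fact p.Prime] (h : x ^ p = x) : ∃ n < p, x = (n : κ) := by
  have hp : p.Prime := Fact.out
  have h1 := (Subfield.mem_bot_iff_pow_eq_self κ p).2 h
  rw [mem_bot_iff_intCast p κ] at h1
  obtain ⟨z, rfl⟩ := h1
  have hpz : (0 : ℤ) < p := by exact_mod_cast hp.pos
  have h2 : ((z % p).toNat : ℤ) = z % p := Int.toNat_of_nonneg (Int.emod_nonneg _ hpz.ne')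
  refine ⟨(z % p).toNat, ?_, ?_⟩
  · have := Int.emod_lt_of_pos z hpz
    omega
  · have h3 : (((z % p).toNat : ℤ) : κ) = ((z % p : ℤ) : κ) := by rw [h2]
    rw [Int.cast_natCast] at h3
    rw [h3]
    conv_lhs => rw [← Int.emod_add_mul_ediv z p]
    simp

open Polynomial in
theorem card_roots_le {ι : Type*} (S : Finset ι) (t : ι → κ) (ht : Function.Injective t) (d : ℕ)
    (r : List ℕ) (hr : r.length ≤ d) (h : ∀ i ∈ S, t i ^ d = lev (t i) r) : S.card ≤ d := by
  classical
  have key : ∀ r : List ℕ, ∃ P : κ[X], P.degree < r.length ∧ ∀ x, P.eval x = lev x r := by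
    intro r
    induction r with
    | nil => exact ⟨0, by simp, by simp [lev]⟩
    | cons a r ih =>
      obtain ⟨P, hP, he⟩ := ih
      refine ⟨C (a : κ) + X * P, ?_, fun x => by simp [lev, he]⟩
      refine (degree_add_le _ _).trans_lt (max_lt ?_ ?_)
      · refine degree_C_le.trans_lt ?_
        simp
        positivity
      · rw [degree_mul, degree_X, add_comm]
        by_cases h0 : P = 0
        · simp [h0]
        rw [degree_eq_natDegree h0] at hP ⊢
        have : P.natDegree < r.length := by exact_mod_cast hP
        simp only [List.length_cons]
        exact_mod_cast Nat.succ_lt_succ this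
  obtain ⟨P, hP, he⟩ := key r
  have hPd : P.degree < (d : WithBot ℕ) := hP.trans_le (by exact_mod_cast hr)
  have hdeg : (X ^ d - P).degree = (d : WithBot ℕ) := by
    rw [degree_sub_eq_left_of_degree_lt] <;> simp [hPd]
  have hne : X ^ d - P ≠ 0 := by
    intro h0
    rw [h0, degree_zero] at hdeg
    exact WithBot.bot_ne_coe hdeg
  have h1 : S.image t ⊆ (X ^ d - P).roots.toFinset := by
    intro y hy
    obtain ⟨i, hi, rfl⟩ := Finset.mem_image.1 hy
    simp only [Multiset.mem_toFinset, mem_roots hne, IsRoot.def, eval_sub, eval_pow, eval_X, he,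
      h i hi, sub_self]
  calc S.card = (S.image t).card := (Finset.card_image_of_injective S ht).symm
    _ ≤ _ := Finset.card_le_card h1
    _ ≤ _ := Multiset.toFinset_card_le _
    _ ≤ (X ^ d - P).natDegree := card_roots' _
    _ = d := natDegree_eq_of_degree_eq_some hdeg
end
/-- Evaluation at a natural number modulo `p`. -/
def levN (p n : ℕ) : List ℕ → ℕ
  | [] => 0
  | a :: l => (a + n * levN p n l) % p

/-- The list of `X ^ d - r`. -/
def lfac (p : ℕ) (r : List ℕ) : List ℕ := lsmul p (p - 1) r ++ [1]

/-- The list of `X ^ (k + 2) + b X + e`. -/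
def ltri (k b e : ℕ) : List ℕ := e :: b :: (List.replicate k 0 ++ [1])

section
variable {κ : Type*} [Field κ] {p : ℕ} [CharP κ p]

theorem lev_levN (n : ℕ) (l : List ℕ) : ((levN p n l : ℕ) : κ) = lev (n : κ) l := by
  induction l with
  | nil => simp [levN, lev]
  | cons a l ih =>
    simp only [levN, lev, cast_mod']
    push_cast
    rw [ih]

theorem lev_append (x : κ) (l m : List ℕ) : lev x (l ++ m) = lev x l + x ^ l.length * lev x m := by
  induction l with
  | nil => simp [lev]
  | cons a l ih =>
    simp only [List.cons_append, lev, ih, List.length_cons]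
    ring

theorem length_lsmul (c : ℕ) (l : List ℕ) : (lsmul p c l).length = l.length := by
  induction l with
  | nil => rfl
  | cons a l ih => simp [lsmul, ih]

theorem lev_lfac [Fact p.Prime] (x : κ) (r : List ℕ) : lev x (lfac p r) = x ^ r.length - lev x r := by
  have hp : 1 ≤ p := (Fact.out : p.Prime).one_lt.le
  rw [lfac, lev_append, length_lsmul, lev_lsmul]
  push_cast [hp]
  simp [lev]
  ring

theorem lev_ltri (x : κ) (k b e : ℕ) : lev x (ltri k b e) = x ^ (k + 2) + b * x + e := by
  have : lev x (List.replicate k 0 ++ [1]) = x ^ k := by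
    rw [lev_append]
    have : ∀ k, lev x (List.replicate k 0) = 0 := by
      intro k
      induction k with
      | zero => rfl
      | succ k ih => simp [List.replicate_succ, lev, ih]
    simp [this, lev]
  simp only [ltri, lev, this]
  ring

theorem noFix_of_list [Fact p.Prime] (x : κ) (l : List ℕ) (hx : lev x l = 0)
    (hl : ∀ n < p, levN p n l % p ≠ 0) : x ^ p ≠ x := by
  intro h
  obtain ⟨n, hn, rfl⟩ := exists_nat_of_pow h
  rw [← lev_levN (p := p), CharP.cast_eq_zero_iff κ p] at hx
  exact hl n hn (Nat.mod_eq_zero_of_dvd hx)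
end

theorem noFix_of_cert {κ : Type*} [Field κ] (p : ℕ) [CharP κ p] [Fact p.Prime] (x : κ)
    (k bN eN : ℕ) (b e : ℤ) (hb : b ≡ bN [ZMOD p]) (he : e ≡ eN [ZMOD p])
    (ht : x ^ (k + 2) + (b : κ) * x + e = 0)
    (hl : ∀ n < p, levN p n (ltri k bN eN) % p ≠ 0) : x ^ p ≠ x := by
  have hb' : (b : κ) = ((bN : ℤ) : κ) := (CharP.intCast_eq_intCast κ p).2 hb
  have he' : (e : κ) = ((eN : ℤ) : κ) := (CharP.intCast_eq_intCast κ p).2 he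
  refine noFix_of_list x _ ?_ hl
  rw [lev_ltri, ← ht, hb', he']
  simp

theorem frobType_of_cert {n : ℕ} (hn : 2 ≤ n) {κ : Type*} [Field κ] (p : ℕ) [CharP κ p] [Fact p.Prime]
    (t : Fin n → κ) (hinj : Function.Injective t) (π : Equiv.Perm (Fin n))
    (hπ : ∀ i, t (π i) = t i ^ p) (b e : ℤ) (bN eN : ℕ) (hb : b ≡ bN [ZMOD p])
    (he : e ≡ eN [ZMOD p]) (ht : ∀ i, t i ^ n + (b : κ) * t i + e = 0)
    (d m d' : ℕ) (hd' : d + d' = n) (hd : d.Prime) (rq rw : List ℕ) (hrq : rq.length = d)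
    (hrw : rw.length = d')
    (hmul : lmul p (lfac p rq) (lfac p rw) = ltri (n - 2) bN eN)
    (hq : ∀ x : κ, x ^ d = lev x rq → x ^ (p ^ d) = x)
    (hq' : ∀ n < p, levN p n (lfac p rq) % p ≠ 0)
    (hw : ∀ x : κ, x ^ d' = lev x rw → x ^ (p ^ m) = x) :
    FrobType π d m ∧ ∀ i, (π ^ m) i ≠ i → t i ^ d = lev (t i) rq := by
  classical
  have hb' : (b : κ) = ((bN : ℤ) : κ) := (CharP.intCast_eq_intCast κ p).2 hb
  have he' : (e : κ) = ((eN : ℤ) : κ) := (CharP.intCast_eq_intCast κ p).2 he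
  have hor : ∀ i, t i ^ d = lev (t i) rq ∨ t i ^ d' = lev (t i) rw := by
    intro i
    have h1 : lev (t i) (lmul p (lfac p rq) (lfac p rw)) = 0 := by
      rw [hmul, lev_ltri, Nat.sub_add_cancel hn, ← ht i, hb', he']
      simp
    rw [lev_lmul, lev_lfac, lev_lfac, hrq, hrw, mul_eq_zero, sub_eq_zero, sub_eq_zero] at h1
    exact h1
  have hpow : ∀ (k : ℕ) i, t ((π ^ k) i) = t i ^ (p ^ k) := by
    intro k
    induction k with
    | zero => simp
    | succ k ih =>
      intro i
      rw [pow_succ', Equiv.Perm.mul_apply, hπ, ih, ← pow_mul, pow_succ]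
  have hm : ∀ i, t i ^ d' = lev (t i) rw → (π ^ m) i = i := fun i hi =>
    hinj (by rw [hpow, hw _ hi])
  let S : Finset (Fin n) := Finset.univ.filter fun i => t i ^ d = lev (t i) rq
  have hS : S.card ≤ d := card_roots_le S t hinj d rq hrq.le (by simp [S])
  have hSc : Sᶜ.card ≤ d' := card_roots_le Sᶜ t hinj d' rw hrw.le (by
    intro i hi
    have : ¬ (t i ^ d = lev (t i) rq) := by simpa [S] using hi
    exact (hor i).resolve_left this)
  have hsum : S.card + Sᶜ.card = n := by
    rw [Finset.card_add_card_compl]; simp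
  refine ⟨⟨S, by omega, ?_, ?_⟩, ?_⟩
  · intro i hi
    have hi' : t i ^ d = lev (t i) rq := by simpa [S] using hi
    refine ⟨hinj (by rw [hpow, hq _ hi']), fun h => ?_⟩
    refine noFix_of_list (p := p) (t i) (lfac p rq) ?_ hq' ?_
    · rw [lev_lfac, hrq, hi', sub_self]
    · rw [← hπ, h]
  · intro i hi
    have : ¬ (t i ^ d = lev (t i) rq) := by simpa [S] using hi
    exact hm i ((hor i).resolve_left this)
  · intro i hi
    exact (hor i).resolve_right fun h => hi (hm i h)

/-- Coefficients of the two integral trinomials. -/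
def tri_bh : ℤ := -2139
/-- Constant coefficient. -/
def tri_eh : ℤ := 6489
/-- Linear coefficient. -/
def tri_bk : ℤ := 3852443469645611961262219752967766016 * 384257037754753807138505851908147025 ^ 10
/-- Constant coefficient. -/
def tri_ek : ℤ := 3852443469645611961262219752967766016 * 384257037754753807138505851908147025 ^ 11

theorem cert_q_h_233 {κ : Type*} [Field κ] [CharP κ 233] (x : κ) (hx : x ^ 7 = lev x [158, 182, 157, 170, 98, 210, 217]) :
    x ^ (233 ^ 7) = x := by
  have := pow_cert (p := 233) 7 [158, 182, 157, 170, 98, 210, 217]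
    [true, false, false, false, false, true, false, false, false, true, true, true, false, false, true, true, false, false, true, false, true, true, false, true, false, false, false, false, true, true, true, false, true, false, true, true, true, false, true, true, true, true, false, true, false, false, true, true, true, false, false, true, true, false, false, true] (233 ^ 7)
    [0, 1, 0, 0, 0, 0, 0] (by decide +kernel) (by decide +kernel) hx
  rw [this]
  simp [lev]

theorem cert_w_h_233 {κ : Type*} [Field κ] [CharP κ 233] (x : κ) (hx : x ^ 1 = lev x [16]) :
    x ^ (233 ^ 1) = x := by
  have := pow_cert (p := 233) 1 [16]
    [true, true, true, false, true, false, false, true] (233 ^ 1)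
    [16] (by decide +kernel) (by decide +kernel) hx
  rw [this]
  simpa using hx.symm

theorem tri_h_233 {κ : Type*} [Field κ] [CharP κ 233] (t : Fin 8 → κ)
    (hinj : Function.Injective t) (π : Equiv.Perm (Fin 8)) (hπ : ∀ i, t (π i) = t i ^ 233)
    (ht : ∀ i, t i ^ 8 + (tri_bh : ℤ) * t i + (tri_eh : ℤ) = 0) :
    FrobType π 7 1 ∧ ∀ i, (π ^ 1) i ≠ i → t i ^ 7 = lev (t i) [158, 182, 157, 170, 98, 210, 217] := by
  have : Fact (Nat.Prime 233) := ⟨by norm_num⟩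
  exact frobType_of_cert (by norm_num) 233 t hinj π hπ _ _ 191 198 (by norm_num [tri_bh, Int.ModEq])
    (by norm_num [tri_eh, Int.ModEq]) ht 7 1 1 rfl (by norm_num)
    [158, 182, 157, 170, 98, 210, 217] [16]
    rfl rfl (by decide +kernel) cert_q_h_233
    (by decide +kernel) cert_w_h_233

theorem cert_q_k_233 {κ : Type*} [Field κ] [CharP κ 233] (x : κ) (hx : x ^ 11 = lev x [50, 182, 92, 131, 184, 29, 135, 58, 37, 116, 74]) :
    x ^ (233 ^ 11) = x := by
  have := pow_cert (p := 233) 11 [50, 182, 92, 131, 184, 29, 135, 58, 37, 116, 74]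
    [true, false, true, true, false, true, false, true, true, true, false, false, false, true, true, true, true, false, false, true, true, true, false, false, true, true, true, false, true, true, false, true, true, false, true, true, true, false, true, false, true, false, true, true, true, false, false, false, false, false, false, false, false, true, false, true, false, true, true, true, true, false, false, true, true, true, false, false, true, false, true, true, true, false, false, false, true, true, true, true, false, true, true, true, false, false, true] (233 ^ 11)
    [0, 1, 0, 0, 0, 0, 0, 0, 0, 0, 0] (by decide +kernel) (by decide +kernel) hx
  rw [this]
  simp [lev]

theorem cert_w_k_233 {κ : Type*} [Field κ] [CharP κ 233] (x : κ) (hx : x ^ 1 = lev x [159]) :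
    x ^ (233 ^ 1) = x := by
  have := pow_cert (p := 233) 1 [159]
    [true, true, true, false, true, false, false, true] (233 ^ 1)
    [159] (by decide +kernel) (by decide +kernel) hx
  rw [this]
  simpa using hx.symm

theorem tri_k_233 {κ : Type*} [Field κ] [CharP κ 233] (t : Fin 12 → κ)
    (hinj : Function.Injective t) (π : Equiv.Perm (Fin 12)) (hπ : ∀ i, t (π i) = t i ^ 233)
    (ht : ∀ i, t i ^ 12 + (tri_bk : ℤ) * t i + (tri_ek : ℤ) = 0) :
    FrobType π 11 1 ∧ ∀ i, (π ^ 1) i ≠ i → t i ^ 11 = lev (t i) [50, 182, 92, 131, 184, 29, 135, 58, 37, 116, 74] := by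
  have : Fact (Nat.Prime 233) := ⟨by norm_num⟩
  exact frobType_of_cert (by norm_num) 233 t hinj π hπ _ _ 229 28 (by norm_num [tri_bk, Int.ModEq])
    (by norm_num [tri_ek, Int.ModEq]) ht 11 1 1 rfl (by norm_num)
    [50, 182, 92, 131, 184, 29, 135, 58, 37, 116, 74] [159]
    rfl rfl (by decide +kernel) cert_q_k_233
    (by decide +kernel) cert_w_k_233

theorem cert_q_h_439 {κ : Type*} [Field κ] [CharP κ 439] (x : κ) (hx : x ^ 2 = lev x [233, 206]) :
    x ^ (439 ^ 2) = x := by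
  have := pow_cert (p := 439) 2 [233, 206]
    [true, false, true, true, true, true, false, false, false, false, true, true, false, true, false, false, false, true] (439 ^ 2)
    [0, 1] (by decide +kernel) (by decide +kernel) hx
  rw [this]
  simp [lev]

theorem cert_w_h_439 {κ : Type*} [Field κ] [CharP κ 439] (x : κ) (hx : x ^ 6 = lev x [188, 371, 76, 136, 353, 233]) :
    x ^ (439 ^ 3) = x := by
  have := pow_cert (p := 439) 6 [188, 371, 76, 136, 353, 233]
    [true, false, true, false, false, false, false, true, false, true, false, true, true, true, true, false, true, true, false, false, true, true, false, false, true, true, true] (439 ^ 3)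
    [0, 1, 0, 0, 0, 0] (by decide +kernel) (by decide +kernel) hx
  rw [this]
  simp [lev]

theorem tri_h_439 {κ : Type*} [Field κ] [CharP κ 439] (t : Fin 8 → κ)
    (hinj : Function.Injective t) (π : Equiv.Perm (Fin 8)) (hπ : ∀ i, t (π i) = t i ^ 439)
    (ht : ∀ i, t i ^ 8 + (tri_bh : ℤ) * t i + (tri_eh : ℤ) = 0) :
    FrobType π 2 3 ∧ ∀ i, (π ^ 3) i ≠ i → t i ^ 2 = lev (t i) [233, 206] := by
  have : Fact (Nat.Prime 439) := ⟨by norm_num⟩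
  exact frobType_of_cert (by norm_num) 439 t hinj π hπ _ _ 56 343 (by norm_num [tri_bh, Int.ModEq])
    (by norm_num [tri_eh, Int.ModEq]) ht 2 3 6 rfl (by norm_num)
    [233, 206] [188, 371, 76, 136, 353, 233]
    rfl rfl (by decide +kernel) cert_q_h_439
    (by decide +kernel) cert_w_h_439

theorem cert_q_k_439 {κ : Type*} [Field κ] [CharP κ 439] (x : κ) (hx : x ^ 2 = lev x [223, 44]) :
    x ^ (439 ^ 2) = x := by
  have := pow_cert (p := 439) 2 [223, 44]
    [true, false, true, true, true, true, false, false, false, false, true, true, false, true, false, false, false, true] (439 ^ 2)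
    [0, 1] (by decide +kernel) (by decide +kernel) hx
  rw [this]
  simp [lev]

theorem cert_w_k_439 {κ : Type*} [Field κ] [CharP κ 439] (x : κ) (hx : x ^ 10 = lev x [1, 319, 380, 143, 255, 159, 269, 113, 36, 395]) :
    x ^ (439 ^ 9) = x := by
  have := pow_cert (p := 439) 10 [1, 319, 380, 143, 255, 159, 269, 113, 36, 395]
    [true, false, false, false, false, false, false, false, false, false, true, true, true, true, false, true, false, false, true, true, true, true, true, true, true, true, true, true, true, false, false, false, true, false, false, true, true, false, true, true, true, false, true, false, false, false, true, false, true, true, true, true, false, true, true, false, false, true, true, true, true, false, true, false, false, true, true, false, true, true, true, false, false, true, true, true, false, true, true, true] (439 ^ 9)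
    [0, 1, 0, 0, 0, 0, 0, 0, 0, 0] (by decide +kernel) (by decide +kernel) hx
  rw [this]
  simp [lev]

theorem cert_flip {κ : Type*} [Field κ] [CharP κ 439] (x : κ) (hx : x ^ 2 = lev x [223, 44]) :
    x ^ ((439 ^ 2 - 1) / 2) = -1 := by
  have := pow_cert (p := 439) 2 [223, 44]
    [true, false, true, true, true, true, false, false, false, false, true, true, false, true, false, false, false] ((439 ^ 2 - 1) / 2)
    [438, 0] (by decide +kernel) (by decide +kernel) hx
  rw [this]
  have h439 : ((439 : ℕ) : κ) = 0 := CharP.cast_eq_zero κ 439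
  simp only [lev]
  push_cast at h439 ⊢
  linear_combination h439

theorem tri_k_439 {κ : Type*} [Field κ] [CharP κ 439] (t : Fin 12 → κ)
    (hinj : Function.Injective t) (π : Equiv.Perm (Fin 12)) (hπ : ∀ i, t (π i) = t i ^ 439)
    (ht : ∀ i, t i ^ 12 + (tri_bk : ℤ) * t i + (tri_ek : ℤ) = 0) :
    FrobType π 2 9 ∧ ∀ i, (π ^ 9) i ≠ i → t i ^ 2 = lev (t i) [223, 44] := by
  have : Fact (Nat.Prime 439) := ⟨by norm_num⟩
  exact frobType_of_cert (by norm_num) 439 t hinj π hπ _ _ 63 223 (by norm_num [tri_bk, Int.ModEq])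
    (by norm_num [tri_ek, Int.ModEq]) ht 2 9 10 rfl (by norm_num)
    [223, 44] [1, 319, 380, 143, 255, 159, 269, 113, 36, 395]
    rfl rfl (by decide +kernel) cert_q_k_439
    (by decide +kernel) cert_w_k_439

theorem tri_h_97 {κ : Type*} [Field κ] [CharP κ 97] (x : κ)
    (ht : x ^ 8 + (tri_bh : ℤ) * x + (tri_eh : ℤ) = 0) : x ^ 97 ≠ x := by
  have : Fact (Nat.Prime 97) := ⟨by norm_num⟩
  exact noFix_of_cert 97 x 6 92 87 _ _ (by norm_num [tri_bh, Int.ModEq])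
    (by norm_num [tri_eh, Int.ModEq]) ht (by decide +kernel)

theorem tri_k_97 {κ : Type*} [Field κ] [CharP κ 97] (x : κ)
    (ht : x ^ 12 + (tri_bk : ℤ) * x + (tri_ek : ℤ) = 0) : x ^ 97 ≠ x := by
  have : Fact (Nat.Prime 97) := ⟨by norm_num⟩
  exact noFix_of_cert 97 x 10 9 48 _ _ (by norm_num [tri_bk, Int.ModEq])
    (by norm_num [tri_ek, Int.ModEq]) ht (by decide +kernel)

end PermPart

theorem exists_roots_fin {L : Type*} [Field L] (p : L[X]) (n : ℕ) (hn : p.natDegree = n)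
    (hm : p.Monic) (hs : p.Splits) : ∃ t : Fin n → L, p = ∏ i, (X - C (t i)) := by
  have h1 := hs.eq_prod_roots_of_monic hm
  have hc : p.roots.toList.length = n := by
    rw [Multiset.length_toList, ← hn]; exact hs.natDegree_eq_card_roots.symm
  subst hc
  refine ⟨fun i => p.roots.toList.get i, ?_⟩
  conv_lhs => rw [h1, ← Multiset.coe_toList p.roots]
  rw [Multiset.map_coe, Multiset.prod_coe]
  rw [← List.prod_ofFn]
  congr 1
  conv_lhs => rw [← List.ofFn_get p.roots.toList]
  rw [List.map_ofFn]
  rfl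

theorem exists_perm_hom {G A : Type*} [Group G] [MulAction G A] {n : ℕ} (t : Fin n → A)
    (ht : Function.Injective t) (hcl : ∀ (s : G) i, ∃ j, t j = s • t i) :
    ∃ ρ : G →* Equiv.Perm (Fin n), ∀ s i, t (ρ s i) = s • t i := by
  choose r hr using hcl
  have hmul : ∀ s s' i, r (s * s') i = r s (r s' i) := by
    intro s s' i
    apply ht
    rw [hr, hr, hr, mul_smul]
  have hone : ∀ i, r 1 i = i := by
    intro i; apply ht; rw [hr, one_smul]
  let act : MulAction G (Fin n) :=
    { smul := r, one_smul := hone, mul_smul := hmul }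
  exact ⟨MulAction.toPermHom G (Fin n), fun s i => hr s i⟩

theorem tri_disc {K : Type*} [Field K] (m : ℕ) (hev : Even m)
    (hev' : Even (((m + 2) * (m + 1)) / 2)) (t : Fin (m + 2) → K) (b e : K) (he : e ≠ 0)
    (hb : (m + 1 : K) * b ≠ 0)
    (h : X ^ (m + 2) + C b * X + C e = ∏ i, (X - C (t i))) :
    (Matrix.vandermonde t).det ^ 2 = (m + 2 : K) ^ (m + 2) * e ^ (m + 1) - (m + 1 : K) ^ (m + 1) * b ^ (m + 2) := by
  have hev2 : Even (m + 2) := hev.add (by decide)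
  have heval : ∀ x : K, x ^ (m + 2) + b * x + e = ∏ i, (x - t i) := by
    intro x
    have := congrArg (eval x) h
    simpa [eval_prod] using this
  have hroot : ∀ i, t i ^ (m + 2) + b * t i + e = 0 := by
    intro i
    rw [heval]
    exact Finset.prod_eq_zero (Finset.mem_univ i) (sub_self _)
  have hprod : ∏ i, t i = e := by
    have := heval 0
    simp only [zero_sub] at this
    rw [Finset.prod_neg] at this
    simpa [hev2.neg_one_pow] using this.symm
  have hder : ∀ i, (m + 2 : K) * t i ^ (m + 1) + b = ∏ j ∈ {i}ᶜ, (t i - t j) := by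
    intro i
    have := congrArg (fun p => eval (t i) (derivative p)) h
    simp only [derivative_prod_finset, eval_finsetSum] at this
    rw [Finset.sum_eq_single i] at this
    · simp [eval_prod] at this
      rw [Finset.compl_singleton, ← this]
      ring
    · intro j _ hj
      simp only [derivative_sub, derivative_X, derivative_C, sub_zero, mul_one, eval_prod]
      apply Finset.prod_eq_zero (i := i)
      · simp [hj.symm]
      · simp
    · simp
  have hV : ∏ i, ((m + 2 : K) * t i ^ (m + 1) + b) = (Matrix.vandermonde t).det ^ 2 := by
    simp_rw [hder]
    rw [← Finset.prod_prod_Ioi_mul_eq_prod_prod_off_diag (fun a b => t b - t a)]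
    rw [Matrix.det_vandermonde, ← Finset.prod_pow]
    have : ∀ i, ∏ j ∈ Finset.Ioi i, ((t i - t j) * (t j - t i)) =
        (-1) ^ (Finset.Ioi i).card * (∏ j ∈ Finset.Ioi i, (t j - t i)) ^ 2 := by
      intro i
      rw [← Finset.prod_pow, ← Finset.prod_const, ← Finset.prod_mul_distrib]
      apply Finset.prod_congr rfl
      intro j _
      ring
    simp_rw [this]
    rw [Finset.prod_mul_distrib, Finset.prod_pow_eq_pow_sum]
    have hs : ∑ i : Fin (m + 2), (Finset.Ioi i).card = (m + 2) * (m + 1) / 2 := by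
      simp only [Fin.card_Ioi]
      rw [Fin.sum_univ_eq_sum_range (fun i => m + 2 - 1 - i) (m + 2)]
      rw [Finset.sum_range_reflect (fun i => i) (m + 2), Finset.sum_range_id]
      simp
    rw [hs, hev'.neg_one_pow, one_mul]
  rw [← hV]
  apply mul_left_cancel₀ he
  conv_lhs => rw [← hprod]
  rw [← Finset.prod_mul_distrib]
  have h1 : ∀ i, t i * ((m + 2 : K) * t i ^ (m + 1) + b) =
      ((m + 1 : K) * b) * ((-((m + 2) * e) / ((m + 1) * b)) - t i) := by
    intro i
    rw [mul_sub, mul_div_cancel₀ _ hb]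
    linear_combination (m + 2 : K) * hroot i
  simp_rw [h1]
  rw [Finset.prod_mul_distrib, ← heval, Finset.prod_const, Finset.card_univ, Fintype.card_fin]
  rw [mul_add, mul_add, ← mul_pow, mul_div_cancel₀ _ hb, hev2.neg_pow]
  have h2 : ((m + 1 : K) * b) ^ (m + 2) * (b * (-((m + 2) * e) / ((m + 1) * b))) =
      ((m + 1 : K) * b) ^ (m + 1) * b * (-((m + 2) * e)) := by
    rw [pow_succ ((m + 1 : K) * b) (m + 1), mul_assoc, mul_left_comm _ b, mul_div_cancel₀ _ hb]
    ring
  rw [h2]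
  rw [mul_pow, mul_pow, mul_pow]
  ring

theorem det_vand_perm {K : Type*} [CommRing K] {n : ℕ} (t : Fin n → K) (π : Equiv.Perm (Fin n)) :
    (Matrix.vandermonde (fun i => t (π i))).det = (Equiv.Perm.sign π : ℤ) * (Matrix.vandermonde t).det := by
  rw [← Matrix.det_permute]
  rfl

theorem vand_ne_imp_inj {K : Type*} [CommRing K] {n : ℕ} (t : Fin n → K) 
    (h : (Matrix.vandermonde t).det ≠ 0) : Function.Injective t := by
  intro i j hij
  by_contra hne
  exact h (Matrix.det_zero_of_row_eq hne (by ext k; simp [Matrix.vandermonde, hij]))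

theorem flip_core {G : Type*} [Group G] {n : ℕ} (N H : Subgroup G) (P : G → Finset (Fin n))
    (hmul : ∀ s ∈ H, ∀ w ∈ H, P (s * w) = symmDiff (P s) (P w))
    (hpair : ∀ i j, i ≠ j → ∃ v ∈ N, v ∈ H ∧ P v = {i, j}) :
    ∀ (k : ℕ), ∀ s ∈ H, (P s).card = k → Even k → ∃ w ∈ N, w ∈ H ∧ P (s * w) = ∅ := by
  intro k
  induction k using Nat.strong_induction_on with
  | _ k ih =>
    intro s hs hk he
    rcases Nat.eq_zero_or_pos k with h0 | h0
    · refine ⟨1, N.one_mem, H.one_mem, ?_⟩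
      rw [mul_one]
      exact Finset.card_eq_zero.1 (hk.trans h0)
    · have h2 : 1 < (P s).card := by
        obtain ⟨r, hr⟩ := he
        omega
      obtain ⟨i, hi, j, hj, hij⟩ := Finset.one_lt_card.1 h2
      obtain ⟨v, hvN, hvH, hv⟩ := hpair i j hij
      have hsub : P v ⊆ P s := by
        rw [hv]; intro x hx; simp at hx; rcases hx with rfl | rfl <;> assumption
      have hd : P (s * v) = P s \ P v := by
        rw [hmul s hs v hvH, symmDiff_def, Finset.sup_eq_union, Finset.sdiff_eq_empty_iff_subset.2 hsub,
          Finset.union_empty]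
      have hc : (P (s * v)).card = k - 2 := by
        rw [hd, Finset.card_sdiff_of_subset hsub, hk, hv, Finset.card_pair hij]
      obtain ⟨w, hwN, hwH, hw⟩ := ih (k - 2) (by omega) (s * v) (H.mul_mem hs hvH) hc
        (by obtain ⟨r, hr⟩ := he; exact ⟨r - 1, by omega⟩)
      exact ⟨v * w, N.mul_mem hvN hwN, H.mul_mem hvH hwH, by rw [← mul_assoc]; exact hw⟩

theorem exists_perm_pair {n : ℕ} {i0 j0 i j : Fin n} (h0 : i0 ≠ j0) (h : i ≠ j) :
    ∃ π : Equiv.Perm (Fin n), π i0 = i ∧ π j0 = j := by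
  refine ⟨Equiv.swap (Equiv.swap i0 i j0) j * Equiv.swap i0 i, ?_, ?_⟩
  · rw [Equiv.Perm.mul_apply, Equiv.swap_apply_left]
    apply Equiv.swap_apply_of_ne_of_ne _ h
    intro hh
    have : Equiv.swap i0 i i0 = Equiv.swap i0 i j0 := by rw [Equiv.swap_apply_left]; exact hh
    exact h0 ((Equiv.swap i0 i).injective this)
  · rw [Equiv.Perm.mul_apply, Equiv.swap_apply_left]

theorem mobius_cube {L : Type*} [Field L] (u : L ≃+* L) (x : L) (h0 : x ≠ 0) (h1 : x ≠ 1)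
    (hu : u ((x ^ 3 - 3 * x + 1) / (x ^ 2 - x)) = (x ^ 3 - 3 * x + 1) / (x ^ 2 - x)) :
    u (u (u x)) = x := by
  have h1' : x - 1 ≠ 0 := sub_ne_zero.2 h1
  have h2' : 1 - x ≠ 0 := sub_ne_zero.2 h1.symm
  have hd : x ^ 2 - x ≠ 0 := by
    have : x ^ 2 - x = x * (x - 1) := by ring
    rw [this]; exact mul_ne_zero h0 h1'
  have hd' : (u x) ^ 2 - u x ≠ 0 := by
    have := (map_ne_zero u).2 hd
    simpa using this
  simp only [map_div₀, map_add, map_sub, map_mul, map_pow, map_one, map_ofNat] at hu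
  rw [div_eq_div_iff hd' hd] at hu
  have key : (u x - x) * (((1 - x) * u x - 1) * (x * u x - (x - 1))) = 0 := by
    linear_combination (-1 : L) * hu
  rcases mul_eq_zero.1 key with k | k
  · have k := sub_eq_zero.1 k
    simp [k]
  rcases mul_eq_zero.1 k with k | k
  · have e1 : u x = 1 / (1 - x) := by field_simp; linear_combination k
    have e2 : u (u x) = (x - 1) / x := by
      conv_lhs => rw [e1]
      simp only [map_div₀, map_sub, map_one]
      rw [e1]
      have : 1 - x - 1 ≠ 0 := by simpa using h0
      have h3 : 1 - 1 / (1 - x) = - x / (1 - x) := by field_simp; ring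
      rw [h3]
      field_simp
      ring
    rw [e2]
    simp only [map_div₀, map_sub, map_one]
    rw [e1]
    field_simp
    ring
  · have e1 : u x = (x - 1) / x := by field_simp; linear_combination k
    have e2 : u (u x) = 1 / (1 - x) := by
      conv_lhs => rw [e1]
      simp only [map_div₀, map_sub, map_one]
      rw [e1]
      field_simp
      ring
    rw [e2]
    simp only [map_div₀, map_sub, map_one]
    rw [e1]
    field_simp
    ring

theorem coe_smul_int {L : Type} [Field L] [NumberField L] (s : L ≃ₐ[ℚ] L)
    (x : NumberField.RingOfIntegers L) : ((s • x : NumberField.RingOfIntegers L) : L) = s (x : L) := rfl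

theorem tri_setup (L : Type) [Field L] [NumberField L] (m : ℕ) (hev : Even m)
    (hev' : Even (((m + 2) * (m + 1)) / 2)) (b e : ℤ) (hb : b ≠ 0) (he : e ≠ 0) (Δ : ℤ)
    (hΔ : Δ = (m + 2) ^ (m + 2) * e ^ (m + 1) - (m + 1) ^ (m + 1) * b ^ (m + 2)) (hΔ0 : Δ ≠ 0)
    (hs : (X ^ (m + 2) + C (b : L) * X + C (e : L)).Splits) :
    ∃ (T : Fin (m + 2) → NumberField.RingOfIntegers L)
      (ρ : (L ≃ₐ[ℚ] L) →* Equiv.Perm (Fin (m + 2))) (V : NumberField.RingOfIntegers L),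
      (∀ s i, T (ρ s i) = s • T i) ∧ (∀ i, T i ^ (m + 2) + (b : ℤ) * T i + (e : ℤ) = 0) ∧
      (∀ x : L, x ^ (m + 2) + b * x + e = 0 → ∃ i, x = (T i : L)) ∧
      (∏ i, T i = (e : ℤ)) ∧ V ^ 2 = (Δ : ℤ) ∧
      (∀ s : L ≃ₐ[ℚ] L, s • V = (Equiv.Perm.sign (ρ s) : ℤ) * V) ∧ Function.Injective T ∧
      ∀ (κ : Type) [Field κ] (red : NumberField.RingOfIntegers L →+* κ), ((Δ : ℤ) : κ) ≠ 0 →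
        Function.Injective (fun i => red (T i)) := by
  have hdeg : (X ^ (m + 2) + C (b : L) * X + C (e : L)).natDegree = m + 2 := by
    compute_degree!
    simp
  have hmon : (X ^ (m + 2) + C (b : L) * X + C (e : L)).Monic := by
    monicity!
    simp
  obtain ⟨t, ht⟩ := exists_roots_fin _ (m + 2) hdeg hmon hs
  have heval : ∀ x : L, x ^ (m + 2) + b * x + e = ∏ i, (x - t i) := by
    intro x
    have := congrArg (eval x) ht
    simpa [eval_prod] using this
  have hroot : ∀ i, t i ^ (m + 2) + b * t i + e = 0 := by
    intro i
    rw [heval]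
    exact Finset.prod_eq_zero (Finset.mem_univ i) (sub_self _)
  have hint : ∀ i, IsIntegral ℤ (t i) := by
    intro i
    refine ⟨X ^ (m + 2) + C b * X + C e, by monicity!; simp, ?_⟩
    simp only [eval₂_add, eval₂_mul, eval₂_pow, eval₂_X, eval₂_C]
    simpa using hroot i
  have hdisc := tri_disc m hev hev' t (b : L) (e : L) (by exact_mod_cast he)
    (mul_ne_zero (by exact_mod_cast (Nat.succ_ne_zero m)) (by exact_mod_cast hb)) ht
  let T : Fin (m + 2) → NumberField.RingOfIntegers L := fun i => ⟨t i, hint i⟩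
  have hTt : ∀ i, (T i : L) = t i := fun i => rfl
  have hTt' : ∀ i, algebraMap (NumberField.RingOfIntegers L) L (T i) = t i := fun i => rfl
  have hdT : (Matrix.vandermonde T).det ^ 2 = (Δ : ℤ) := by
    apply NumberField.RingOfIntegers.coe_injective
    rw [map_pow, ← RingHom.coe_coe, RingHom.map_det, map_intCast, hΔ]
    push_cast
    rw [← hdisc]
    congr 2
  have hV0 : (Matrix.vandermonde T).det ≠ 0 := by
    intro h
    rw [h] at hdT
    apply hΔ0
    have : ((Δ : ℤ) : NumberField.RingOfIntegers L) = 0 := by rw [← hdT]; ring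
    exact_mod_cast this
  have hTinj := vand_ne_imp_inj T hV0
  have hTroot : ∀ i, T i ^ (m + 2) + (b : ℤ) * T i + (e : ℤ) = 0 := by
    intro i
    apply NumberField.RingOfIntegers.coe_injective
    simpa [hTt'] using hroot i
  have hall : ∀ x : L, x ^ (m + 2) + b * x + e = 0 → ∃ i, x = (T i : L) := by
    intro x hx
    rw [heval, Finset.prod_eq_zero_iff] at hx
    obtain ⟨i, -, hi⟩ := hx
    exact ⟨i, sub_eq_zero.1 hi⟩
  obtain ⟨ρ, hρ⟩ := exists_perm_hom (G := L ≃ₐ[ℚ] L) T hTinj (by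
    intro s i
    obtain ⟨j, hj⟩ := hall (s (T i : L)) (by
      have := congrArg s (hroot i)
      simpa [hTt] using this)
    exact ⟨j, NumberField.RingOfIntegers.coe_injective hj.symm⟩)
  refine ⟨T, ρ, (Matrix.vandermonde T).det, hρ, hTroot, hall, ?_, hdT, ?_, hTinj, ?_⟩
  · apply NumberField.RingOfIntegers.coe_injective
    rw [map_prod]
    have := heval 0
    simp only [zero_sub] at this
    rw [Finset.prod_neg] at this
    have h2 : Even (m + 2) := hev.add (by decide)
    simpa [h2.neg_one_pow, hTt'] using this.symm
  · intro s
    rw [← det_vand_perm]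
    have h1 : s • (Matrix.vandermonde T).det =
        (MulSemiringAction.toRingHom (L ≃ₐ[ℚ] L) (NumberField.RingOfIntegers L) s)
          (Matrix.vandermonde T).det := rfl
    rw [h1, RingHom.map_det]
    congr 1
    ext i j
    simp [Matrix.vandermonde, hρ]
  · intro κ _ red hred
    apply vand_ne_imp_inj
    intro h
    apply hred
    have h2 : (red (Matrix.vandermonde T).det) ^ 2 = (Δ : ℤ) := by
      rw [← map_pow, hdT, map_intCast]
    rw [← h2, RingHom.map_det]
    have h3 : red.mapMatrix (Matrix.vandermonde T) = Matrix.vandermonde (fun i => red (T i)) := by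
      ext i j
      simp [Matrix.vandermonde]
    rw [h3, h]
    ring

theorem aeval_fRubik {E : Type*} [Field E] [Algebra ℚ E] (x : E) :
    aeval x fRubik = (x ^ 3 - 3 * x + 1) ^ 8 + (tri_bh : ℤ) * (x ^ 3 - 3 * x + 1) * (x ^ 2 - x) ^ 7
      + (tri_eh : ℤ) * (x ^ 2 - x) ^ 8 := by
  simp only [fRubik, tri_bh, tri_eh, map_add, map_sub, map_mul, map_pow, map_ofNat, aeval_X, map_one]
  push_cast
  ring

theorem aeval_gRubik {E : Type*} [Field E] [CharZero E] [Algebra ℚ E] (x : E) :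
    384257037754753807138505851908147025 ^ 12 * aeval x gRubik = ((619884697145165705 * x) ^ 2) ^ 12
      + (tri_bk : ℤ) * (619884697145165705 * x) ^ 2 + (tri_ek : ℤ) := by
  simp only [gRubik, tri_bk, tri_ek, map_add, map_mul, map_pow, map_ofNat, aeval_X, map_one,
    aeval_C, map_div₀, Int.cast_mul, Int.cast_pow, Int.cast_ofNat]
  have h : (384257037754753807138505851908147025 : E) = 619884697145165705 ^ 2 := by norm_num
  have h0 : (619884697145165705 : E) ≠ 0 := by norm_num
  rw [h]
  generalize (619884697145165705 : E) = d at *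
  field_simp
  ring

theorem fRubik_ne_zero : fRubik ≠ 0 := by
  intro h
  have := aeval_fRubik (0 : ℚ)
  rw [h] at this
  norm_num at this

theorem gRubik_ne_zero : gRubik ≠ 0 := by
  intro h
  have := aeval_gRubik (0 : ℚ)
  rw [h] at this
  norm_num [tri_bk, tri_ek] at this

theorem mem_range_root (L E : Type*) [Field L] [Field E] [Algebra ℚ L] [Algebra ℚ E] [Algebra L E]
    (p : ℚ[X]) (hp : p ≠ 0) (hs : (p.map (algebraMap ℚ L)).Splits) (y : E) (hy : aeval y p = 0) :
    ∃ x : L, algebraMap L E x = y := by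
  have h1 : ((p.map (algebraMap ℚ L)).map (algebraMap L E)).IsRoot y := by
    rw [Polynomial.map_map, Subsingleton.elim ((algebraMap L E).comp (algebraMap ℚ L)) (algebraMap ℚ E)]
    rw [IsRoot, eval_map_algebraMap]
    exact hy
  exact Polynomial.Splits.mem_range_of_isRoot hs (by simpa using hp) h1

theorem theta_ne {E : Type*} [Field E] [Algebra ℚ E] (x : E) (hx : aeval x fRubik = 0) :
    x ≠ 0 ∧ x ≠ 1 := by
  rw [aeval_fRubik] at hx
  constructor
  · rintro rfl; norm_num at hx
  · rintro rfl; norm_num at hx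

theorem sq_sub_ne {E : Type*} [Field E] {x : E} (h : x ≠ 0 ∧ x ≠ 1) : x ^ 2 - x ≠ 0 := by
  have : x ^ 2 - x = x * (x - 1) := by ring
  rw [this]; exact mul_ne_zero h.1 (sub_ne_zero.2 h.2)

theorem split_h (L : Type*) [Field L] [Algebra ℚ L] (hs : (fRubik.map (algebraMap ℚ L)).Splits) :
    (X ^ 8 + C ((tri_bh : ℤ) : L) * X + C ((tri_eh : ℤ) : L)).Splits := by
  refine Polynomial.Splits.of_splits_map (algebraMap L (AlgebraicClosure L)) (IsAlgClosed.splits _) ?_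
  intro t ht
  replace ht := isRoot_of_mem_roots ht
  simp [IsRoot] at ht
  obtain ⟨x, hx⟩ := IsAlgClosed.exists_root (X ^ 3 - C t * X ^ 2 + C (t - 3) * X + 1) (by
    have : (X ^ 3 - C t * X ^ 2 + C (t - 3) * X + 1).degree = 3 := by compute_degree!
    rw [this]; decide)
  simp [IsRoot] at hx
  have hxt : x ^ 3 - 3 * x + 1 = t * (x ^ 2 - x) := by linear_combination hx
  have hf : aeval x fRubik = 0 := by
    rw [aeval_fRubik, hxt]
    linear_combination (x ^ 2 - x) ^ 8 * ht
  obtain ⟨y, rfl⟩ := mem_range_root L _ fRubik fRubik_ne_zero hs x hf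
  refine ⟨(y ^ 3 - 3 * y + 1) / (y ^ 2 - y), ?_⟩
  have := sq_sub_ne (theta_ne _ hf)
  simp only [map_div₀, map_add, map_sub, map_mul, map_pow, map_one, map_ofNat]
  rw [hxt, mul_div_cancel_right₀ _ this]

theorem h_root {L : Type*} [Field L] [Algebra ℚ L] (x : L) (hx : aeval x fRubik = 0) :
    ((x ^ 3 - 3 * x + 1) / (x ^ 2 - x)) ^ 8 + (tri_bh : ℤ) * ((x ^ 3 - 3 * x + 1) / (x ^ 2 - x)) +
      (tri_eh : ℤ) = 0 := by
  have h := sq_sub_ne (theta_ne _ hx)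
  rw [aeval_fRubik] at hx
  generalize x ^ 2 - x = d at *
  field_simp
  linear_combination hx

theorem sqrt_k (L : Type*) [Field L] [Algebra ℚ L] (hs : (gRubik.map (algebraMap ℚ L)).Splits)
    (z : AlgebraicClosure L) (hz : z ^ 12 + (tri_bk : ℤ) * z + (tri_ek : ℤ) = 0) :
    ∃ x : L, algebraMap L _ x ^ 2 = z := by
  have : CharZero L := algebraRat.charZero L
  have : CharZero (AlgebraicClosure L) := algebraRat.charZero _
  obtain ⟨x, hx⟩ := IsAlgClosed.exists_pow_nat_eq z (n := 2) (by norm_num)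
  have h0 : (619884697145165705 : AlgebraicClosure L) ≠ 0 := by norm_num
  have hg : aeval (x / 619884697145165705) gRubik = 0 := by
    have := aeval_gRubik (x / 619884697145165705)
    rw [mul_div_cancel₀ _ h0, hx, hz] at this
    exact (mul_eq_zero.1 this).resolve_left (by norm_num)
  obtain ⟨y, hy⟩ := mem_range_root L _ gRubik gRubik_ne_zero hs _ hg
  refine ⟨619884697145165705 * y, ?_⟩
  rw [map_mul, hy, map_ofNat, mul_div_cancel₀ _ h0, hx]

theorem split_k (L : Type*) [Field L] [Algebra ℚ L] (hs : (gRubik.map (algebraMap ℚ L)).Splits) :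
    (X ^ 12 + C ((tri_bk : ℤ) : L) * X + C ((tri_ek : ℤ) : L)).Splits := by
  refine Polynomial.Splits.of_splits_map (algebraMap L (AlgebraicClosure L)) (IsAlgClosed.splits _) ?_
  intro t ht
  replace ht := isRoot_of_mem_roots ht
  simp [IsRoot] at ht
  obtain ⟨x, hx⟩ := sqrt_k L hs t ht
  exact ⟨x ^ 2, by rw [map_pow, hx]⟩

theorem sqrt_k_mem (L : Type*) [Field L] [Algebra ℚ L] (hs : (gRubik.map (algebraMap ℚ L)).Splits)
    (z : L) (hz : z ^ 12 + (tri_bk : ℤ) * z + (tri_ek : ℤ) = 0) : ∃ x : L, x ^ 2 = z := by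
  obtain ⟨x, hx⟩ := sqrt_k L hs (algebraMap L _ z) (by
    have := congrArg (algebraMap L (AlgebraicClosure L)) hz
    simpa using this)
  exact ⟨x, (algebraMap L (AlgebraicClosure L)).injective (by rw [map_pow, hx])⟩

/-- The discriminant of `X ^ 8 - 2139 X + 6489`. -/
def disc_h : ℤ := 7 * 1437417619559484462138047 * 27783 ^ 2

/-- A square root of the quotient of discriminants. -/
def disc_r : ℤ := 1962764241992810496 ^ 11 * 384257037754753807138505851908147025 ^ 60 * 480895709184

/-- The discriminant of the second trinomial. -/
def disc_k : ℤ := 7 * 1437417619559484462138047 * disc_r ^ 2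

theorem setup_h (L : Type) [Field L] [NumberField L]
    (hs : (X ^ 8 + C ((tri_bh : ℤ) : L) * X + C ((tri_eh : ℤ) : L)).Splits) :
    ∃ (T : Fin 8 → NumberField.RingOfIntegers L)
      (ρ : (L ≃ₐ[ℚ] L) →* Equiv.Perm (Fin 8)) (V : NumberField.RingOfIntegers L),
      (∀ s i, T (ρ s i) = s • T i) ∧ (∀ i, T i ^ 8 + (tri_bh : ℤ) * T i + (tri_eh : ℤ) = 0) ∧
      (∀ x : L, x ^ 8 + (tri_bh : ℤ) * x + (tri_eh : ℤ) = 0 → ∃ i, x = (T i : L)) ∧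
      (∏ i, T i = (tri_eh : ℤ)) ∧ V ^ 2 = (disc_h : ℤ) ∧
      (∀ s : L ≃ₐ[ℚ] L, s • V = (Equiv.Perm.sign (ρ s) : ℤ) * V) ∧ Function.Injective T ∧
      ∀ (κ : Type) [Field κ] (red : NumberField.RingOfIntegers L →+* κ), ((disc_h : ℤ) : κ) ≠ 0 →
        Function.Injective (fun i => red (T i)) :=
  tri_setup L 6 (by decide) (by decide) tri_bh tri_eh (by decide +kernel) (by decide +kernel)
    disc_h (by decide +kernel) (by decide +kernel) hs

theorem setup_k (L : Type) [Field L] [NumberField L]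
    (hs : (X ^ 12 + C ((tri_bk : ℤ) : L) * X + C ((tri_ek : ℤ) : L)).Splits) :
    ∃ (T : Fin 12 → NumberField.RingOfIntegers L)
      (ρ : (L ≃ₐ[ℚ] L) →* Equiv.Perm (Fin 12)) (V : NumberField.RingOfIntegers L),
      (∀ s i, T (ρ s i) = s • T i) ∧ (∀ i, T i ^ 12 + (tri_bk : ℤ) * T i + (tri_ek : ℤ) = 0) ∧
      (∀ x : L, x ^ 12 + (tri_bk : ℤ) * x + (tri_ek : ℤ) = 0 → ∃ i, x = (T i : L)) ∧
      (∏ i, T i = (tri_ek : ℤ)) ∧ V ^ 2 = (disc_k : ℤ) ∧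
      (∀ s : L ≃ₐ[ℚ] L, s • V = (Equiv.Perm.sign (ρ s) : ℤ) * V) ∧ Function.Injective T ∧
      ∀ (κ : Type) [Field κ] (red : NumberField.RingOfIntegers L →+* κ), ((disc_k : ℤ) : κ) ≠ 0 →
        Function.Injective (fun i => red (T i)) :=
  tri_setup L 10 (by decide) (by decide) tri_bk tri_ek (by decide +kernel) (by decide +kernel)
    disc_k (by decide +kernel) (by decide +kernel) hs

theorem disc_h_ne {κ : Type*} [Field κ] (p : ℕ) [CharP κ p] (h : disc_h % p ≠ 0) :
    ((disc_h : ℤ) : κ) ≠ 0 := by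
  rw [Ne, CharP.intCast_eq_zero_iff κ p]
  exact fun hh => h (Int.emod_eq_zero_of_dvd hh)

theorem disc_k_ne {κ : Type*} [Field κ] (p : ℕ) [CharP κ p] (h : disc_k % p ≠ 0) :
    ((disc_k : ℤ) : κ) ≠ 0 := by
  rw [Ne, CharP.intCast_eq_zero_iff κ p]
  exact fun hh => h (Int.emod_eq_zero_of_dvd hh)

theorem tri_ek_sq : tri_ek = (1962764241992810496 * 619884697145165705 ^ 11) ^ 2 := by
  decide +kernel

theorem sign_one_of_fix {L : Type*} [Field L] [CharZero L] (ε : ℤˣ) (v : L) (hv : v ≠ 0)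
    (h : ((ε : ℤ) : L) * v = v) : ε = 1 := by
  have h1 : ((ε : ℤ) : L) = 1 := by
    apply mul_right_cancel₀ hv; rw [h, one_mul]
  have h2 : (ε : ℤ) = 1 := by exact_mod_cast h1
  exact Units.ext h2

/-- The flip data: for `s` acting trivially on the squares `y i ^ 2`. -/
theorem flips {L : Type*} [Field L] [CharZero L] [Algebra ℚ L] (y : Fin 12 → L)
    (hy0 : ∀ i, y i ≠ 0) (τ : (L ≃ₐ[ℚ] L) →* Equiv.Perm (Fin 12))
    (hτ : ∀ s i, s (y i) ^ 2 = y (τ s i) ^ 2) (hsurj : Function.Surjective τ)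
    (r : ℚ) (hr : (∏ i, y i) ^ 2 = (algebraMap ℚ L r) ^ 2)
    (N H : Subgroup (L ≃ₐ[ℚ] L)) [N.Normal] [H.Normal] (hH : H ≤ τ.ker)
    (v : L ≃ₐ[ℚ] L) (hvN : v ∈ N) (hvH : v ∈ H) (i0 j0 : Fin 12) (hij : i0 ≠ j0)
    (hv : ∀ i, (i = i0 ∨ i = j0 → v (y i) = - y i) ∧ (¬ (i = i0 ∨ i = j0) → v (y i) = y i)) :
    ∀ s ∈ H, ∃ w ∈ N, w ∈ H ∧ ∀ i, (s * w) (y i) = y i := by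
  classical
  have hne : ∀ i, y i ≠ - y i := fun i h => hy0 i (self_eq_neg.1 h)
  let P : (L ≃ₐ[ℚ] L) → Finset (Fin 12) := fun s => Finset.univ.filter (fun i => s (y i) = - y i)
  have hPmem : ∀ s i, i ∈ P s ↔ s (y i) = - y i := by intro s i; simp [P]
  have hpm : ∀ s ∈ H, ∀ i, s (y i) = y i ∨ s (y i) = - y i := by
    intro s hs i
    have h1 := hτ s i
    rw [MonoidHom.mem_ker.1 (hH hs)] at h1
    exact sq_eq_sq_iff_eq_or_eq_neg.1 h1
  have hmul : ∀ s ∈ H, ∀ w ∈ H, P (s * w) = symmDiff (P s) (P w) := by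
    intro s hs w hw
    ext i
    rw [Finset.mem_symmDiff, hPmem, hPmem, hPmem, AlgEquiv.mul_apply]
    have := hne i
    rcases hpm s hs i with h1 | h1 <;> rcases hpm w hw i with h2 | h2 <;>
      simp [h1, h2, this]
  have hPv : ∀ i, i ∈ P v ↔ (i = i0 ∨ i = j0) := by
    intro i
    rw [hPmem]
    constructor
    · intro h
      by_contra hc
      rw [(hv i).2 hc] at h
      exact hne i h
    · exact (hv i).1
  have hpair : ∀ i j, i ≠ j → ∃ v ∈ N, v ∈ H ∧ P v = {i, j} := by
    intro i j hne'
    obtain ⟨π, hπi, hπj⟩ := exists_perm_pair hij hne'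
    obtain ⟨g, hg⟩ := hsurj π
    refine ⟨g * v * g⁻¹, Subgroup.Normal.conj_mem inferInstance v hvN g,
      Subgroup.Normal.conj_mem inferInstance v hvH g, ?_⟩
    ext k
    have h1 : k ∈ P (g * v * g⁻¹) ↔ τ g⁻¹ k ∈ P v := by
      rw [hPmem, hPmem, AlgEquiv.mul_apply, AlgEquiv.mul_apply]
      have h2 : g (v (g⁻¹ (y k))) = - y k ↔ v (g⁻¹ (y k)) = - (g⁻¹ (y k)) := by
        constructor
        · intro h
          apply g.injective
          rw [h, map_neg, ← AlgEquiv.mul_apply, mul_inv_cancel, AlgEquiv.one_apply]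
        · intro h
          rw [h, map_neg, ← AlgEquiv.mul_apply, mul_inv_cancel, AlgEquiv.one_apply]
      rw [h2]
      rcases sq_eq_sq_iff_eq_or_eq_neg.1 (hτ g⁻¹ k) with h | h <;> rw [h]
      rw [map_neg, neg_inj]
    rw [h1, hPv, Finset.mem_insert, Finset.mem_singleton, map_inv, hg, Equiv.Perm.inv_eq_iff_eq,
      Equiv.Perm.inv_eq_iff_eq, hπi, hπj]
  intro s hs
  have hev : Even (P s).card := by
    have h1 : s (∏ i, y i) = ∏ i, y i := by
      rcases sq_eq_sq_iff_eq_or_eq_neg.1 hr with h | h <;> rw [h] <;> simp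
    have h2 : s (∏ i, y i) = (-1) ^ (P s).card * ∏ i, y i := by
      rw [map_prod]
      have : ∀ i, s (y i) = (if i ∈ P s then -1 else 1) * y i := by
        intro i
        by_cases hi : i ∈ P s
        · rw [if_pos hi, (hPmem s i).1 hi]; ring
        · rw [if_neg hi, one_mul]
          exact (hpm s hs i).resolve_right (fun h => hi ((hPmem s i).2 h))
      simp_rw [this]
      rw [Finset.prod_mul_distrib, Finset.prod_ite_mem]
      simp
    have h3 : ∏ i, y i ≠ 0 := Finset.prod_ne_zero_iff.2 (fun i _ => hy0 i)
    by_contra hodd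
    rw [Nat.not_even_iff_odd] at hodd
    rw [h1, hodd.neg_one_pow] at h2
    apply h3
    apply self_eq_neg.1
    rw [neg_one_mul] at h2
    exact h2
  obtain ⟨w, hw, hwH, hP⟩ := flip_core N H P hmul hpair _ s hs rfl hev
  refine ⟨w, hw, hwH, fun i => (hpm _ (H.mul_mem hs hwH) i).resolve_right ?_⟩
  intro h
  have := (hPmem (s * w) i).2 h
  rw [hP] at this
  simp at this

theorem cube_trivial {L : Type} [Field L] [NumberField L] (T : Fin 8 → L) (y : Fin 12 → L)
    (hT : ∀ x : L, x ^ 8 + (tri_bh : ℤ) * x + (tri_eh : ℤ) = 0 → ∃ i, x = T i)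
    (hS : ∀ x : L, x ^ 12 + (tri_bk : ℤ) * x + (tri_ek : ℤ) = 0 → ∃ i, x = y i ^ 2)
    (htriv : ∀ u : L ≃ₐ[ℚ] L, (∀ x, aeval x fRubik = 0 → u x = x) →
      (∀ x, aeval x gRubik = 0 → u x = x) → u = 1)
    (u : L ≃ₐ[ℚ] L) (huT : ∀ i, u (T i) = T i) (huy : ∀ i, u (y i) = y i) : u ^ 3 = 1 := by
  have h3 : ∀ x, (u ^ 3) x = u (u (u x)) := fun x => rfl
  apply htriv
  · intro x hx
    rw [h3]
    obtain ⟨i, hi⟩ := hT _ (h_root x hx)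
    obtain ⟨h0, h1⟩ := theta_ne x hx
    refine mobius_cube u.toRingEquiv x h0 h1 ?_
    rw [hi]
    exact huT i
  · intro x hx
    have h := aeval_gRubik x
    rw [hx, mul_zero] at h
    obtain ⟨i, hi⟩ := hS _ h.symm
    have hfix : u x = x := by
      have h0 : (619884697145165705 : L) ≠ 0 := by norm_num
      have hu : u (619884697145165705 * x) = 619884697145165705 * x := by
        rcases sq_eq_sq_iff_eq_or_eq_neg.1 hi with h | h <;> rw [h] <;> simp [huy]
      rw [map_mul, map_ofNat] at hu
      exact mul_left_cancel₀ h0 hu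
    rw [h3, hfix, hfix, hfix]

theorem smul_pow_red {L : Type} [Field L] [NumberField L] {κ : Type} [Field κ] {p : ℕ}
    (red : NumberField.RingOfIntegers L →+* κ) (b : L ≃ₐ[ℚ] L)
    (hb : ∀ x, red (b • x) = red x ^ p) (x : NumberField.RingOfIntegers L) :
    red ((b ^ 2) • x) = red x ^ (p ^ 2) := by
  rw [pow_two, mul_smul, hb, hb, ← pow_mul, pow_two]

theorem main_core (L : Type) [Field L] [NumberField L] [IsGalois ℚ L]
    (hf : (fRubik.map (algebraMap ℚ L)).Splits) (hg : (gRubik.map (algebraMap ℚ L)).Splits)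
    (htriv : ∀ u : L ≃ₐ[ℚ] L, (∀ x, aeval x fRubik = 0 → u x = x) →
      (∀ x, aeval x gRubik = 0 → u x = x) → u = 1) :
    ∃ x : L, x ^ 2 = algebraMap ℚ L (7 * 1437417619559484462138047) ∧
      (∃ s : L ≃ₐ[ℚ] L, s x ≠ x) ∧
      ∀ (N : Subgroup (L ≃ₐ[ℚ] L)) [N.Normal], (∀ g : L ≃ₐ[ℚ] L, g ^ 2 ∈ N) →
        ∀ s : L ≃ₐ[ℚ] L, s x = x → s ∈ N := by
  obtain ⟨T, ρ, V, hρ, hT, hTall, -, hV, hsV, -, hTred⟩ := setup_h L (split_h L hf)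
  obtain ⟨S, τ, W, hτ, hS, hSall, hSprod, hW, hsW, -, hSred⟩ := setup_k L (split_k L hg)
  have hpr97 : Fact (Nat.Prime 97) := ⟨by norm_num⟩
  have hpr233 : Fact (Nat.Prime 233) := ⟨by norm_num⟩
  have hpr439 : Fact (Nat.Prime 439) := ⟨by norm_num⟩
  obtain ⟨e, κ1, _, _, red1, hred1⟩ := exists_frob_s19 L 97
  obtain ⟨a, κ2, _, _, red2, hred2⟩ := exists_frob_s19 L 233
  obtain ⟨b, κ3, _, _, red3, hred3⟩ := exists_frob_s19 L 439
  have hTr : ∀ {κ : Type} [Field κ] (red : NumberField.RingOfIntegers L →+* κ) (i : Fin 8),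
      red (T i) ^ 8 + (tri_bh : ℤ) * red (T i) + (tri_eh : ℤ) = 0 := by
    intro κ _ red i
    have := congrArg red (hT i)
    simpa using this
  have hSr : ∀ {κ : Type} [Field κ] (red : NumberField.RingOfIntegers L →+* κ) (i : Fin 12),
      red (S i) ^ 12 + (tri_bk : ℤ) * red (S i) + (tri_ek : ℤ) = 0 := by
    intro κ _ red i
    have := congrArg red (hS i)
    simpa using this
  have he : ∀ i, ρ e i ≠ i := by
    intro i h
    apply tri_h_97 (red1 (T i)) (hTr red1 i)
    rw [← hred1, ← hρ, h]
  have he' : ∀ i, τ e i ≠ i := by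
    intro i h
    apply tri_k_97 (red1 (S i)) (hSr red1 i)
    rw [← hred1, ← hτ, h]
  have ha := (tri_h_233 (fun i => red2 (T i)) (hTred κ2 red2 (disc_h_ne 233 (by decide +kernel)))
    (ρ a) (fun i => by rw [hρ, hred2]) (hTr red2)).1
  have ha' := (tri_k_233 (fun i => red2 (S i)) (hSred κ2 red2 (disc_k_ne 233 (by decide +kernel)))
    (τ a) (fun i => by rw [hτ, hred2]) (hSr red2)).1
  have hb := (tri_h_439 (fun i => red3 (T i)) (hTred κ3 red3 (disc_h_ne 439 (by decide +kernel)))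
    (ρ b) (fun i => by rw [hρ, hred3]) (hTr red3)).1
  obtain ⟨hb', hbl⟩ := tri_k_439 (fun i => red3 (S i))
    (hSred κ3 red3 (disc_k_ne 439 (by decide +kernel)))
    (τ b) (fun i => by rw [hτ, hred3]) (hSr red3)
  -- square roots of the roots of the second trinomial
  have hSL : ∀ i, (S i : L) ^ 12 + (tri_bk : ℤ) * (S i : L) + (tri_ek : ℤ) = 0 := by
    intro i
    have := congrArg (algebraMap (NumberField.RingOfIntegers L) L) (hS i)
    simpa using this
  choose y hy using fun i => sqrt_k_mem L hg (S i : L) (hSL i)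
  have hyint : ∀ i, IsIntegral ℤ (y i) := by
    intro i
    apply IsIntegral.of_pow (n := 2) (by norm_num)
    rw [hy]
    exact NumberField.RingOfIntegers.isIntegral_coe (S i)
  let Y : Fin 12 → NumberField.RingOfIntegers L := fun i => ⟨y i, hyint i⟩
  have hY : ∀ i, Y i ^ 2 = S i := by
    intro i
    apply NumberField.RingOfIntegers.coe_injective
    exact hy i
  have hek : (tri_ek : ℤ) ≠ 0 := by decide +kernel
  have hy0 : ∀ i, y i ≠ 0 := by
    intro i h
    have h1 := hSL i
    rw [← hy i, h] at h1
    simp at h1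
    exact hek h1
  have hτy : ∀ (s : L ≃ₐ[ℚ] L) i, s (y i) ^ 2 = y (τ s i) ^ 2 := by
    intro s i
    rw [← map_pow, hy, hy, hτ]
    rfl
  have hTL : ∀ (s : L ≃ₐ[ℚ] L) i, s (T i : L) = (T (ρ s i) : L) := by
    intro s i
    rw [hρ]
    rfl
  have hprod : (∏ i, y i) ^ 2 =
      (algebraMap ℚ L (1962764241992810496 * 619884697145165705 ^ 11)) ^ 2 := by
    rw [← Finset.prod_pow]
    simp_rw [hy]
    have := congrArg (algebraMap (NumberField.RingOfIntegers L) L) hSprod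
    rw [map_prod, map_intCast, tri_ek_sq] at this
    rw [this]
    simp only [map_mul, map_pow, map_ofNat, Int.cast_mul, Int.cast_pow, Int.cast_ofNat]
  -- the pair flip
  have hv1 : ∀ i, (τ b ^ 9) i ≠ i → (b ^ 18) (y i) = - y i := by
    intro i hi
    have h1 := cert_flip (red3 (S i)) (hbl i hi)
    have h2 : red3 ((b ^ 2) • Y i) = - red3 (Y i) := by
      rw [smul_pow_red red3 b hred3]
      have : 439 ^ 2 = 2 * ((439 ^ 2 - 1) / 2) + 1 := by norm_num
      rw [this, pow_succ, pow_mul, ← map_pow, hY, h1, neg_one_mul]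
    have h3 : (τ (b ^ 2)) i = i := by
      rw [map_pow]
      obtain ⟨Z, -, hZ, hZ'⟩ := hb'
      by_cases hm : i ∈ Z
      · exact (hZ i hm).1
      · exact absurd (hZ' i hm) hi
    have h4 : (b ^ 2) (y i) = - y i := by
      have h5 := hτy (b ^ 2) i
      rw [h3] at h5
      refine (sq_eq_sq_iff_eq_or_eq_neg.1 h5).resolve_left ?_
      intro h6
      have h7 : (b ^ 2) • Y i = Y i := NumberField.RingOfIntegers.coe_injective h6
      rw [h7] at h2
      have h8 : (2 : κ3) * red3 (Y i) = 0 := by linear_combination h2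
      have h9 : (2 : κ3) ≠ 0 := by
        have : ((2 : ℕ) : κ3) ≠ 0 := by
          rw [Ne, CharP.cast_eq_zero_iff κ3 439]
          norm_num
        exact_mod_cast this
      have h10 := (mul_eq_zero.1 h8).resolve_left h9
      rw [← hY, map_pow, h10] at h1
      norm_num at h1
    have h5 : b ^ 18 = (b ^ 2) ^ 9 := by rw [← pow_mul]
    have h6 : ∀ k : ℕ, ((b ^ 2) ^ k) (y i) = (-1) ^ k * y i := by
      intro k
      induction k with
      | zero => simp
      | succ k ih =>
        rw [pow_succ, AlgEquiv.mul_apply, h4, map_neg, ih]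
        ring
    rw [h5, h6]
    norm_num
  have hv2 : ∀ i, (τ b ^ 9) i = i → (b ^ 18) (y i) = y i := by
    intro i hi
    have h5 : b ^ 18 = b ^ 9 * b ^ 9 := by rw [← pow_add]
    have h6 := hτy (b ^ 9) i
    rw [map_pow, hi] at h6
    rw [h5, AlgEquiv.mul_apply]
    rcases sq_eq_sq_iff_eq_or_eq_neg.1 h6 with h | h <;> rw [h]
    · exact h
    · rw [map_neg, h, neg_neg]
  obtain ⟨i0, j0, hij, hsupp⟩ := Finset.card_eq_two.1 (hb'.supp (b := 9) (by norm_num) dvd_rfl)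
  have hsupp' : ∀ i, (τ b ^ 9) i ≠ i ↔ (i = i0 ∨ i = j0) := by
    intro i
    rw [← Equiv.Perm.mem_support, hsupp]
    simp
  -- the square root of the discriminant
  have hdh : (disc_h : ℤ) ≠ 0 := by decide +kernel
  have hdr : (disc_r : ℤ) ≠ 0 := by decide +kernel
  have hVL : (V : L) ^ 2 = 7 * 1437417619559484462138047 * 27783 ^ 2 := by
    have := congrArg (algebraMap (NumberField.RingOfIntegers L) L) hV
    rw [map_pow, map_intCast, disc_h] at this
    rw [this]
    push_cast
    norm_num
  have hWL : (W : L) ^ 2 = 7 * 1437417619559484462138047 * ((disc_r : ℤ) : L) ^ 2 := by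
    have := congrArg (algebraMap (NumberField.RingOfIntegers L) L) hW
    rw [map_pow, map_intCast, disc_k] at this
    rw [this]
    push_cast
    norm_num
  have hV0 : (V : L) ≠ 0 := by
    intro h; rw [h] at hVL; norm_num at hVL
  have hr0 : ((disc_r : ℤ) : L) ≠ 0 := by exact_mod_cast hdr
  have hW0 : (W : L) ≠ 0 := by
    intro h
    rw [h] at hWL
    have : (7 * 1437417619559484462138047 : L) * ((disc_r : ℤ) : L) ^ 2 ≠ 0 :=
      mul_ne_zero (by norm_num) (pow_ne_zero _ hr0)
    exact this (by rw [← hWL]; ring)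
  have hsVL : ∀ s : L ≃ₐ[ℚ] L, s (V : L) = ((Equiv.Perm.sign (ρ s) : ℤ) : L) * (V : L) := by
    intro s
    have := congrArg (algebraMap (NumberField.RingOfIntegers L) L) (hsV s)
    rw [map_mul, map_intCast] at this
    exact this
  have hsWL : ∀ s : L ≃ₐ[ℚ] L, s (W : L) = ((Equiv.Perm.sign (τ s) : ℤ) : L) * (W : L) := by
    intro s
    have := congrArg (algebraMap (NumberField.RingOfIntegers L) L) (hsW s)
    rw [map_mul, map_intCast] at this
    exact this
  have hVW : (W : L) = (disc_r : ℤ) * ((V : L) / 27783) ∨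
      (W : L) = - ((disc_r : ℤ) * ((V : L) / 27783)) := by
    apply sq_eq_sq_iff_eq_or_eq_neg.1
    rw [hWL, mul_pow, div_pow, hVL, mul_div_cancel_right₀ _ (by norm_num)]
    ring
  refine ⟨(V : L) / 27783, ?_, ?_, ?_⟩
  · rw [div_pow, hVL, mul_div_cancel_right₀ _ (by norm_num)]
    simp only [map_mul, map_ofNat]
  · obtain ⟨s, hs⟩ := (group_core ρ τ ⊤ (fun _ => Subgroup.mem_top _) e a b he he' ha ha' hb hb').1
      (Equiv.swap 0 1)
    refine ⟨s, fun h => ?_⟩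
    have h1 : s (V : L) = (V : L) := by
      rw [map_div₀, map_ofNat] at h
      exact (div_left_inj' (by norm_num)).1 h
    rw [hsVL] at h1
    have h2 := sign_one_of_fix _ _ hV0 h1
    rw [hs, Equiv.Perm.sign_swap (by decide)] at h2
    exact absurd h2 (by decide)
  · intro N _ hsq s hs
    obtain ⟨-, hsurj, hcore⟩ := group_core ρ τ N hsq e a b he he' ha ha' hb hb'
    have h1 : s (V : L) = (V : L) := by
      rw [map_div₀, map_ofNat] at hs
      exact (div_left_inj' (by norm_num)).1 hs
    have h2 : s (W : L) = (W : L) := by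
      rcases hVW with h | h <;> rw [h]
      · rw [map_mul, hs, map_intCast]
      · rw [map_neg, map_mul, hs, map_intCast]
    rw [hsVL] at h1
    rw [hsWL] at h2
    obtain ⟨u, huN, hu1, hu2⟩ := hcore s (sign_one_of_fix _ _ hV0 h1) (sign_one_of_fix _ _ hW0 h2)
    have hb18N : b ^ 18 ∈ N := by
      have : b ^ 18 = (b ^ 9) ^ 2 := by rw [← pow_mul]
      rw [this]; exact hsq _
    have hb18H : b ^ 18 ∈ ρ.ker ⊓ τ.ker := by
      refine ⟨?_, ?_⟩
      · change ρ (b ^ 18) = 1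
        rw [map_pow]; exact hb.pow_eq_one (by norm_num) (by norm_num)
      · change τ (b ^ 18) = 1
        rw [map_pow]; exact hb'.pow_eq_one (by norm_num) (by norm_num)
    obtain ⟨w, hwN, hwH, hw⟩ := flips y hy0 τ hτy hsurj _ hprod N (ρ.ker ⊓ τ.ker) inf_le_right
      (b ^ 18) hb18N hb18H i0 j0 hij
      (fun i => ⟨fun h => hv1 i ((hsupp' i).2 h), fun h => hv2 i (by
        by_contra hc; exact h ((hsupp' i).1 hc))⟩) (s * u) ⟨hu1, hu2⟩
    have hz : (s * u * w) ^ 3 = 1 := by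
      refine cube_trivial (fun i => (T i : L)) y hTall ?_ htriv _ ?_ hw
      · intro x hx
        obtain ⟨i, hi⟩ := hSall x hx
        exact ⟨i, hi.trans (hy i).symm⟩
      · intro i
        have h3 : ρ (s * u * w) = 1 := by
          rw [map_mul, hu1, one_mul]; exact hwH.1
        show (s * u * w) (T i : L) = (T i : L)
        rw [hTL, h3]
        rfl
    have hzN : s * u * w ∈ N := by
      have : s * u * w = ((s * u * w) ^ 2) ^ 2 := by
        calc s * u * w = (s * u * w) * 1 := by rw [mul_one]
          _ = (s * u * w) * (s * u * w) ^ 3 := by rw [hz]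
          _ = _ := by rw [← pow_succ', ← pow_mul]
      rw [this]; exact hsq _
    have := (N.mul_mem_cancel_right hwN).1 hzN
    exact (N.mul_mem_cancel_right huN).1 this

theorem quad_unique (L : Type) [Field L] [NumberField L] [IsGalois ℚ L] (x : L) (D : ℚ)
    (hx : x ^ 2 = algebraMap ℚ L D) (hmove : ∃ s : L ≃ₐ[ℚ] L, s x ≠ x)
    (hN : ∀ (N : Subgroup (L ≃ₐ[ℚ] L)) [N.Normal], (∀ g : L ≃ₐ[ℚ] L, g ^ 2 ∈ N) →
        ∀ s : L ≃ₐ[ℚ] L, s x = x → s ∈ N) (K : IntermediateField ℚ L) :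
    Module.finrank ℚ ↥K = 2 ↔ K = IntermediateField.adjoin ℚ {x} := by
  have hint : IsIntegral ℚ x := Algebra.IsIntegral.isIntegral x
  have hfin : Module.finrank ℚ ↥(IntermediateField.adjoin ℚ {x}) = 2 := by
    rw [IntermediateField.adjoin.finrank hint]
    apply le_antisymm
    · have hp : aeval x (X ^ 2 - C D : ℚ[X]) = 0 := by simp [hx]
      have h0 : (X ^ 2 - C D : ℚ[X]) ≠ 0 := X_pow_sub_C_ne_zero (by norm_num) D
      have := natDegree_le_of_dvd (minpoly.dvd ℚ x hp) h0
      rwa [natDegree_X_pow_sub_C] at this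
    · rw [minpoly.two_le_natDegree_iff hint]
      rintro ⟨q, rfl⟩
      obtain ⟨s, hs⟩ := hmove
      exact hs (s.commutes q)
  constructor
  · intro hK
    have hidx : K.fixingSubgroup.index = 2 := by
      have h1 := IntermediateField.finrank_eq_fixingSubgroup_index (F := ℚ) L K
      rw [← h1, hK]
    have hnorm : K.fixingSubgroup.Normal := Subgroup.normal_of_index_eq_two hidx
    have hle : (IntermediateField.adjoin ℚ {x}).fixingSubgroup ≤ K.fixingSubgroup := by
      intro s hs
      apply hN K.fixingSubgroup (fun g => Subgroup.sq_mem_of_index_two hidx g)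
      exact hs ⟨x, IntermediateField.mem_adjoin_simple_self ℚ x⟩
    have hle2 : K ≤ IntermediateField.adjoin ℚ {x} := by
      have := IntermediateField.fixedField_antitone hle
      rwa [IsGalois.fixedField_fixingSubgroup, IsGalois.fixedField_fixingSubgroup] at this
    exact IntermediateField.eq_of_le_of_finrank_eq hle2 (hK.trans hfin.symm)
  · rintro rfl
    exact hfin

/-- The splitting field `L` of `f · g` over `ℚ` contains a unique subfield of degree `2`
over `ℚ`, namely `ℚ(√(7 · 1437417619559484462138047))`. -/
theorem unique_quadratic_subfield :
    ∃ x : (fRubik * gRubik).SplittingField,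
      x ^ 2 = algebraMap ℚ _ (7 * 1437417619559484462138047) ∧
      ∀ K : IntermediateField ℚ (fRubik * gRubik).SplittingField,
        Module.finrank ℚ ↥K = 2 ↔ K = IntermediateField.adjoin ℚ {x} := by
  have hne : fRubik * gRubik ≠ 0 := mul_ne_zero fRubik_ne_zero gRubik_ne_zero
  have hspl : IsSplittingField ℚ (fRubik * gRubik).SplittingField (fRubik * gRubik) :=
    IsSplittingField.splittingField (fRubik * gRubik)
  have : CharZero (fRubik * gRubik).SplittingField := algebraRat.charZero _
  have : NumberField (fRubik * gRubik).SplittingField :=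
    { to_charZero := inferInstance
      to_finiteDimensional := IsSplittingField.finiteDimensional _ (fRubik * gRubik) }
  have : IsGalois ℚ (fRubik * gRubik).SplittingField :=
    { to_isSeparable := inferInstance
      to_normal := Normal.of_isSplittingField (fRubik * gRubik) }
  have hs := hspl.splits
  have hmap : (fRubik * gRubik).map (algebraMap ℚ (fRubik * gRubik).SplittingField) ≠ 0 := by
    simpa using mul_ne_zero_iff.1 hne
  have hf : (fRubik.map (algebraMap ℚ (fRubik * gRubik).SplittingField)).Splits :=
    hs.of_dvd hmap (Polynomial.map_dvd _ (dvd_mul_right _ _))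
  have hg : (gRubik.map (algebraMap ℚ (fRubik * gRubik).SplittingField)).Splits :=
    hs.of_dvd hmap (Polynomial.map_dvd _ (dvd_mul_left _ _))
  obtain ⟨x, hx, hmove, hN⟩ := main_core (fRubik * gRubik).SplittingField hf hg (by
    intro u hu1 hu2
    have htop := hspl.adjoin_rootSet
    have hEq : Set.EqOn (u : _ →ₐ[ℚ] _) (AlgHom.id ℚ (fRubik * gRubik).SplittingField)
        ((fRubik * gRubik).rootSet (fRubik * gRubik).SplittingField) := by
      intro y hy
      have hy2 := (mem_rootSet.1 hy).2
      rw [map_mul, mul_eq_zero] at hy2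
      rcases hy2 with h | h
      · exact hu1 y h
      · exact hu2 y h
    have h2 := AlgHom.ext_of_adjoin_eq_top htop hEq
    ext y
    exact DFunLike.congr_fun h2 y)
  exact ⟨x, hx, fun K => quad_unique _ x _ hx hmove hN K⟩
end
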